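/- arXiv:1310.5504 — 10 statements merged into one kernel-verified Lean document; each statement's English description precedes it below -/
import Mathlib

section
/- Let P be the pentagonal prism graph: the simple graph on vertex set {0,1,...,9} whose edges are the outer pentagon {0,1},{1,2},{2,3},{3,4},{4,0}, the inner pentagon {5,6},{6,7},{7,8},{8,9},{9,5}, and the five spokes {0,5},{1,6},{2,7},{3,8},{4,9}. Then no Hamiltonian cycle of P contains both of the spoke edges {0,5} and {2,7}. -/
/-!
In a Hamiltonian cycle every vertex meets exactly two cycle edges
(`IsHamiltonianCycle.two_of_three`), and every proper nonempty vertex set has a cycle edge leaving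
it (`IsHamiltonianCycle.exists_crossing`). Suppose the cycle uses the spokes `{0,5}` and `{2,7}`.

If the spoke `{1,6}` is unused, then the vertices `1` and `6` force the hexagon `0-1-2-7-6-5`, which
is closed off from the rest. If `{1,6}` is used, then exactly one of `{0,1}`, `{1,2}` and exactly one
of `{5,6}`, `{6,7}` is used. When these lie on the same side they close up the square `0-1-6-5` or
`1-2-7-6`. When they lie on opposite sides, the degree conditions propagate around the remaining
vertices and leave `3` or `4` with at most one cycle edge.
-/

/-- The pentagonal prism graph on vertices `{0, ..., 9}`: outer pentagon `0-1-2-3-4`,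
inner pentagon `5-6-7-8-9`, and spokes `{i, i+5}`. -/
def pentagonalPrism : SimpleGraph (Fin 10) :=
  SimpleGraph.fromEdgeSet
    {s(0,1), s(1,2), s(2,3), s(3,4), s(4,0),
     s(5,6), s(6,7), s(7,8), s(8,9), s(9,5),
     s(0,5), s(1,6), s(2,7), s(3,8), s(4,9)}

namespace SimpleGraph.Walk

variable {V : Type*} [DecidableEq V] {G : SimpleGraph V} {v : V} {p : G.Walk v v}

/-- At a vertex of degree at most three, a Hamiltonian cycle uses all but exactly one of the three
possible edges. -/
lemma IsHamiltonianCycle.two_of_three (hp : p.IsHamiltonianCycle) (x a b c : V)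
    (hab : a ≠ b) (hac : a ≠ c) (hbc : b ≠ c)
    (hadj : ∀ w, G.Adj x w → w = a ∨ w = b ∨ w = c) :
    (s(x, a) ∈ p.edges ∧ s(x, b) ∈ p.edges ∧ s(x, c) ∉ p.edges) ∨
    (s(x, a) ∈ p.edges ∧ s(x, b) ∉ p.edges ∧ s(x, c) ∈ p.edges) ∨
    (s(x, a) ∉ p.edges ∧ s(x, b) ∈ p.edges ∧ s(x, c) ∈ p.edges) := by
  obtain ⟨y, z, hyz, hN⟩ := Set.ncard_eq_two.mp
    (hp.isCycle.ncard_neighborSet_toSubgraph_eq_two (hp.mem_support x))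
  have key : ∀ w, s(x, w) ∈ p.edges ↔ w = y ∨ w = z := fun w ↦ by
    rw [← adj_toSubgraph_iff_mem_edges, ← Subgraph.mem_neighborSet, hN]
    simp
  have hy := hadj y (p.adj_of_mem_edges ((key y).2 (.inl rfl)))
  have hz := hadj z (p.adj_of_mem_edges ((key z).2 (.inr rfl)))
  simp only [key]
  grind

/-- A Hamiltonian cycle crosses every cut: it contains an edge leaving any proper nonempty set of
vertices. -/
lemma IsHamiltonianCycle.exists_crossing (hp : p.IsHamiltonianCycle) (S : Set V) {x y : V}
    (hx : x ∈ S) (hy : y ∉ S) : ∃ a b, a ∈ S ∧ b ∉ S ∧ s(a, b) ∈ p.edges := by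
  -- Rotating the cycle to start at `x`, its initial segment up to `y` must leave `S`.
  let q := (p.rotate x (hp.mem_support x))
  have hyq : y ∈ q.support := by
    simpa [q] using hp.mem_support y
  obtain ⟨d, hd, hdS, hdS'⟩ := (q.takeUntil y hyq).exists_boundary_dart S hx hy
  refine ⟨d.fst, d.snd, hdS, hdS', ?_⟩
  have h1 : d.edge ∈ q.edges :=
    q.edges_takeUntil_subset_edges hyq (List.mem_map_of_mem hd)
  exact (p.rotate_edges x (hp.mem_support x)).mem_iff.mp h1

end SimpleGraph.Walk

instance : DecidableRel pentagonalPrism.Adj := fun a b ↦ by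
  unfold pentagonalPrism
  simp only [SimpleGraph.fromEdgeSet_adj, Set.mem_insert_iff, Set.mem_singleton_iff]
  infer_instance

/-- No Hamiltonian cycle of the pentagonal prism contains both spoke edges
`{0,5}` and `{2,7}`. -/
theorem stmt_0 (v : Fin 10) (p : pentagonalPrism.Walk v v)
    (hp : p.IsHamiltonianCycle) :
    ¬ (s((0 : Fin 10), (5 : Fin 10)) ∈ p.edges ∧
       s((2 : Fin 10), (7 : Fin 10)) ∈ p.edges) := by
  rintro ⟨h05, h27⟩
  -- `d0`, ..., `d9` are the degree conditions at the ten vertices.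
  have d0 := hp.two_of_three 0 1 4 5 (by decide) (by decide) (by decide)
    (by decide +kernel)
  have d1 := hp.two_of_three 1 2 0 6 (by decide) (by decide) (by decide)
    (by decide +kernel)
  have d2 := hp.two_of_three 2 3 1 7 (by decide) (by decide) (by decide)
    (by decide +kernel)
  have d3 := hp.two_of_three 3 4 2 8 (by decide) (by decide) (by decide)
    (by decide +kernel)
  have d4 := hp.two_of_three 4 0 3 9 (by decide) (by decide) (by decide)
    (by decide +kernel)
  have d5 := hp.two_of_three 5 6 9 0 (by decide) (by decide) (by decide)
    (by decide +kernel)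
  have d6 := hp.two_of_three 6 7 5 1 (by decide) (by decide) (by decide)
    (by decide +kernel)
  have d7 := hp.two_of_three 7 8 6 2 (by decide) (by decide) (by decide)
    (by decide +kernel)
  have d8 := hp.two_of_three 8 9 7 3 (by decide) (by decide) (by decide)
    (by decide +kernel)
  have d9 := hp.two_of_three 9 5 8 4 (by decide) (by decide) (by decide)
    (by decide +kernel)
  -- The cuts around the hexagon and the two squares that the cycle must not close up.
  have hexagon :
      s((0 : Fin 10), 4) ∈ p.edges ∨ s((2 : Fin 10), 3) ∈ p.edges ∨
      s((5 : Fin 10), 9) ∈ p.edges ∨ s((7 : Fin 10), 8) ∈ p.edges := by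
    obtain ⟨a, b, ha, hb, hab⟩ := hp.exists_crossing (x := 1) (y := 3)
      {w | w ∈ ({0, 1, 2, 5, 6, 7} : Finset (Fin 10))} (by decide) (by decide)
    have cut : ∀ a b : Fin 10, a ∈ ({0, 1, 2, 5, 6, 7} : Finset (Fin 10)) →
        b ∉ ({0, 1, 2, 5, 6, 7} : Finset (Fin 10)) → pentagonalPrism.Adj a b →
        s(a, b) = s(0, 4) ∨ s(a, b) = s(2, 3) ∨ s(a, b) = s(5, 9) ∨ s(a, b) = s(7, 8) :=
      by decide +kernel
    rcases cut a b ha hb (p.adj_of_mem_edges hab) with h | h | h | h <;> rw [h] at hab <;>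
      simp only [hab, true_or, or_true]
  have square₀₁ :
      s((0 : Fin 10), 4) ∈ p.edges ∨ s((1 : Fin 10), 2) ∈ p.edges ∨
      s((5 : Fin 10), 9) ∈ p.edges ∨ s((6 : Fin 10), 7) ∈ p.edges := by
    obtain ⟨a, b, ha, hb, hab⟩ := hp.exists_crossing (x := 1) (y := 3)
      {w | w ∈ ({0, 1, 5, 6} : Finset (Fin 10))} (by decide) (by decide)
    have cut : ∀ a b : Fin 10, a ∈ ({0, 1, 5, 6} : Finset (Fin 10)) →
        b ∉ ({0, 1, 5, 6} : Finset (Fin 10)) → pentagonalPrism.Adj a b →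
        s(a, b) = s(0, 4) ∨ s(a, b) = s(1, 2) ∨ s(a, b) = s(5, 9) ∨ s(a, b) = s(6, 7) :=
      by decide +kernel
    rcases cut a b ha hb (p.adj_of_mem_edges hab) with h | h | h | h <;> rw [h] at hab <;>
      simp only [hab, true_or, or_true]
  have square₁₂ :
      s((0 : Fin 10), 1) ∈ p.edges ∨ s((2 : Fin 10), 3) ∈ p.edges ∨
      s((5 : Fin 10), 6) ∈ p.edges ∨ s((7 : Fin 10), 8) ∈ p.edges := by
    obtain ⟨a, b, ha, hb, hab⟩ := hp.exists_crossing (x := 1) (y := 3)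
      {w | w ∈ ({1, 2, 6, 7} : Finset (Fin 10))} (by decide) (by decide)
    have cut : ∀ a b : Fin 10, a ∈ ({1, 2, 6, 7} : Finset (Fin 10)) →
        b ∉ ({1, 2, 6, 7} : Finset (Fin 10)) → pentagonalPrism.Adj a b →
        s(a, b) = s(0, 1) ∨ s(a, b) = s(2, 3) ∨ s(a, b) = s(5, 6) ∨ s(a, b) = s(7, 8) :=
      by decide +kernel
    rcases cut a b ha hb (p.adj_of_mem_edges hab) with h | h | h | h <;> rw [h] at hab <;>
      simp only [hab, true_or, or_true]
  -- What remains is a propositional contradiction in the fifteen edge memberships, once `s(a, b)`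
  -- and `s(b, a)` are identified.
  grind [Sym2.eq_swap]
end

section
/- Let G be the simple graph on vertex set {0,1,...,15} with the 24 edges {0,1},{1,2},{2,3},{3,4},{4,0},{0,9},{1,5},{2,12},{3,6},{4,7},{12,13},{12,11},{10,7},{7,6},{6,13},{13,14},{14,15},{14,11},{11,5},{5,8},{8,9},{9,10},{8,15},{10,15} (this is Tutte's fragment closed off by the extra vertex 15 joined to vertices 14, 8 and 10). Then every Hamiltonian cycle of G contains the edge {14,15}. -/
/-!
Rotate a Hamiltonian cycle so that it starts at the extra vertex `15`. If it avoids the edge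
`{14,15}`, then removing its first edge leaves a path of length `15` that starts at `8` or `10`,
ends at `15`, and uses only edges of the graph without `{14,15}`. A depth-first search through the
self-avoiding walks of that smaller graph finds no such path. `search_of_isPath` shows that the
search is exhaustive; its negative outcome is a finite computation.
-/

/-- Tutte's fragment closed off by the extra vertex `15` joined to vertices
`14`, `8` and `10`. -/
def closedTutteFragment : SimpleGraph (Fin 16) :=
  SimpleGraph.fromEdgeSet
    {s(0,1), s(1,2), s(2,3), s(3,4), s(4,0), s(0,9), s(1,5), s(2,12), s(3,6),
     s(4,7), s(12,13), s(12,11), s(10,7), s(7,6), s(6,13), s(13,14), s(14,15),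
     s(14,11), s(11,5), s(5,8), s(8,9), s(9,10), s(8,15), s(10,15)}

/-- The neighbours of a vertex in the closed-off Tutte fragment with the edge `{14,15}` removed. -/
def fragmentNeighbors : Fin 16 → List (Fin 16) :=
  ![[1, 4, 9], [0, 2, 5], [1, 3, 12], [2, 4, 6], [3, 0, 7], [1, 11, 8], [3, 7, 13], [4, 10, 6],
    [5, 9, 15], [0, 8, 10], [7, 9, 15], [12, 14, 5], [2, 13, 11], [12, 6, 14], [13, 11], [8, 10]]

/-- Depth-first search: whether the vertex `u` starts a self-avoiding walk of length `n` that avoids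
the vertices in `L` and the edge `{14,15}` and ends at `15`. -/
def searchPath : ℕ → List (Fin 16) → Fin 16 → Bool
  | 0, _, u => u == 15
  | n + 1, L, u =>
    (fragmentNeighbors u).any fun w => !(u :: L).contains w && searchPath n (u :: L) w

theorem mem_fragmentNeighbors {u w : Fin 16} (h : closedTutteFragment.Adj u w)
    (hne : s((14 : Fin 16), 15) ≠ s(u, w)) : w ∈ fragmentNeighbors u := by
  simp only [closedTutteFragment, SimpleGraph.fromEdgeSet_adj, Set.mem_insert_iff,
    Set.mem_singleton_iff] at h
  revert u w
  decide +kernel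

/-- The search misses no path: `L` holds the vertices visited before `u`. -/
theorem search_of_isPath {u t : Fin 16} (q : closedTutteFragment.Walk u t) (ht : t = 15)
    (hq : q.IsPath) (he : s((14 : Fin 16), 15) ∉ q.edges) (L : List (Fin 16))
    (hL : ∀ x ∈ q.support, x ∉ L) : searchPath q.length L u = true := by
  induction q generalizing L with
  | nil => simp [searchPath, ht]
  | @cons u w t h q ih =>
    rw [SimpleGraph.Walk.cons_isPath_iff] at hq
    rw [SimpleGraph.Walk.edges_cons, List.mem_cons, not_or] at he
    have hvisited : ∀ x ∈ q.support, x ∉ u :: L := by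
      intro x hx hxL
      rcases List.mem_cons.mp hxL with rfl | hxL
      · exact hq.2 hx
      · exact hL x (by simp [hx]) hxL
    rw [SimpleGraph.Walk.length_cons, searchPath, List.any_eq_true]
    refine ⟨w, mem_fragmentNeighbors h he.1, ?_⟩
    have hw := hvisited w q.start_mem_support
    rw [ih ht hq.1 he.2 (u :: L) hvisited, Bool.and_true, Bool.not_eq_true',
      ← Bool.not_eq_true, List.contains_iff_mem]
    exact hw

theorem search_fails : ∀ u ∈ fragmentNeighbors 15, searchPath 15 [] u = false := by
  decide +kernel

/-- Every Hamiltonian cycle of the closed-off Tutte fragment contains the edge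
`{14,15}`. -/
theorem stmt_2 (v : Fin 16) (p : closedTutteFragment.Walk v v)
    (hp : p.IsHamiltonianCycle) :
    s((14 : Fin 16), (15 : Fin 16)) ∈ p.edges := by
  by_contra he
  have hmem : (15 : Fin 16) ∈ p.support := hp.mem_support 15
  have hcycle := hp.isCycle.rotate hmem
  have hlength : (p.rotate 15 hmem).length = 16 := by
    rw [SimpleGraph.Walk.length_rotate, hp.length_eq, Fintype.card_fin]
  have he' : s((14 : Fin 16), 15) ∉ (p.rotate 15 hmem).edges :=
    fun h => he ((p.rotate_edges 15 hmem).mem_iff.mp h)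
  generalize p.rotate 15 hmem = c at hcycle hlength he'
  cases c with
  | nil => simp at hlength
  | @cons _ u _ h q =>
    rw [SimpleGraph.Walk.edges_cons, List.mem_cons, not_or] at he'
    rw [SimpleGraph.Walk.length_cons] at hlength
    have hfound := search_of_isPath q rfl
      ((SimpleGraph.Walk.cons_isCycle_iff q h).mp hcycle).1 he'.2 [] (by simp)
    rw [Nat.succ.inj hlength, search_fails u (mem_fragmentNeighbors h he'.1)] at hfound
    exact Bool.false_ne_true hfound
end

section
/- Tutte's graph has no Hamiltonian cycle. Here Tutte's graph is the simple graph on 46 vertices built as follows: take three pairwise disjoint copies, indexed i = 1,2,3, of the 15-vertex Tutte fragment with vertices A_i,B_i,C_i,D_i,E_i,G_i,I_i,J_i,K_i,L_i,M_i,N_i,O_i,P_i,Q_i and, within each copy, the 21 edges {A,B},{B,C},{C,D},{D,E},{E,A},{A,L},{B,G},{C,O},{D,I},{E,J},{O,P},{O,N},{M,J},{J,I},{I,P},{P,Q},{Q,N},{N,G},{G,K},{K,L},{L,M}; add one central vertex R adjacent to Q_1, Q_2 and Q_3; and add the three edges {K_1,M_2}, {K_2,M_3}, {K_3,M_1}.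 -/
/-!
A Hamiltonian cycle uses exactly two of the three edges at each vertex, and it crosses the boundary
of every nonempty proper set of vertices. It misses one of the three edges at the central vertex,
say `{Q_i, R}`. The copy `i` of the fragment is then left only through `K_i` and `M_i`. The degree
conditions at its 15 vertices admit just eight edge sets in the fragment. Each of these misses the
boundary of one of six vertex sets: `NOPQ`, `BCGNOPQ`, `DEIJ`, `CDEIJNOPQ`, `ABCDEGIJNOPQ` and the
whole fragment. In other words, the fragment has no Hamiltonian path from `K` to `M`.

The counting is done with the indicator `edgeUse p` of the edges of the cycle: the degree conditions
are linear equations (`edgeUse_add_eq_two`), the boundary conditions come from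
`exists_edgeUse_crossing`, and their incompatibility is the linear arithmetic of
`fragment_infeasible`.
-/

/-- The 21 edges of the 15-vertex Tutte fragment, with the vertex labels
`A,B,C,D,E,G,I,J,K,L,M,N,O,P,Q` encoded as `0,...,14` in this order. -/
def tutteFragmentEdges : List (Fin 15 × Fin 15) :=
  [(0,1), (1,2), (2,3), (3,4), (4,0), (0,9), (1,5), (2,12), (3,6), (4,7),
   (12,13), (12,11), (10,7), (7,6), (6,13), (13,14), (14,11), (11,5), (5,8),
   (8,9), (9,10)]

/-- Tutte's graph on 46 vertices: three disjoint copies (indexed by `Fin 3`) of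
the 15-vertex Tutte fragment, a central vertex (the `Sum.inr` vertex) adjacent
to the three vertices `Q_i` (encoded `14`), and the three edges
`{K_1,M_2}, {K_2,M_3}, {K_3,M_1}` (with `K` encoded `8` and `M` encoded `10`). -/
def tutteGraph : SimpleGraph ((Fin 3 × Fin 15) ⊕ Unit) :=
  SimpleGraph.fromEdgeSet
    ({e | ∃ (i : Fin 3) (a b : Fin 15), (a, b) ∈ tutteFragmentEdges ∧
        e = s(Sum.inl (i, a), Sum.inl (i, b))} ∪
     {e | ∃ i : Fin 3, e = s(Sum.inl (i, 14), Sum.inr ())} ∪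
     {s(Sum.inl (0, 8), Sum.inl (1, 10)),
      s(Sum.inl (1, 8), Sum.inl (2, 10)),
      s(Sum.inl (2, 8), Sum.inl (0, 10))})

open SimpleGraph

/-- The vertex set of Tutte's graph. -/
abbrev TutteVertex := (Fin 3 × Fin 15) ⊕ Unit

open Classical in
/-- The indicator of the edges traversed by a walk: `1` if `{a, b}` is one of them, else `0`. -/
noncomputable def edgeUse {V : Type*} {G : SimpleGraph V} {u v : V} (p : G.Walk u v)
    (a b : V) : ℕ :=
  if p.toSubgraph.Adj a b then 1 else 0

lemma edgeUse_comm {V : Type*} {G : SimpleGraph V} {u v : V} (p : G.Walk u v) (a b : V) :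
    edgeUse p a b = edgeUse p b a := by
  unfold edgeUse
  rw [p.toSubgraph.adj_comm]

lemma edgeUse_le_one {V : Type*} {G : SimpleGraph V} {u v : V} (p : G.Walk u v) (a b : V) :
    edgeUse p a b ≤ 1 := by
  unfold edgeUse; split_ifs <;> simp

/-- A Hamiltonian cycle uses two of the three edges at a vertex of degree three. -/
lemma edgeUse_add_eq_two {V : Type*} [DecidableEq V] {G : SimpleGraph V} {v : V} {p : G.Walk v v}
    (hp : p.IsHamiltonianCycle) {u a b c : V} (hab : a ≠ b) (hac : a ≠ c) (hbc : b ≠ c)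
    (hu : ∀ w, G.Adj u w → w = a ∨ w = b ∨ w = c) :
    edgeUse p u a + edgeUse p u b + edgeUse p u c = 2 := by
  classical
  have hcard := hp.isCycle.ncard_neighborSet_toSubgraph_eq_two (hp.mem_support u)
  have hset : p.toSubgraph.neighborSet u =
      (({a, b, c} : Finset V).filter fun w => p.toSubgraph.Adj u w : Finset V) := by
    ext w
    simp only [Subgraph.mem_neighborSet, Finset.coe_filter, Finset.mem_insert,
      Finset.mem_singleton, Set.mem_ofPred_eq]
    exact ⟨fun h => ⟨hu w h.adj_sub, h⟩, fun h => h.2⟩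
  rw [hset, Set.ncard_coe_finset, Finset.card_filter, Finset.sum_insert (by simp [hab, hac]),
    Finset.sum_insert (by simp [hbc]), Finset.sum_singleton] at hcard
  unfold edgeUse
  omega

/-- A Hamiltonian cycle crosses the boundary of every nonempty proper set of vertices. -/
lemma exists_edgeUse_crossing {V : Type*} [DecidableEq V] {G : SimpleGraph V} {v : V}
    {p : G.Walk v v} (hp : p.IsHamiltonianCycle) (S : Set V) {s t : V} (hs : s ∈ S) (ht : t ∉ S) :
    ∃ a b, a ∈ S ∧ b ∉ S ∧ G.Adj a b ∧ edgeUse p a b = 1 := by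
  have hconn := p.toSubgraph_connected.coe
  obtain ⟨q⟩ := hconn.preconnected ⟨s, by simpa using hp.mem_support s⟩
    ⟨t, by simpa using hp.mem_support t⟩
  obtain ⟨d, -, h1, h2⟩ := q.exists_boundary_dart (Subtype.val ⁻¹' S) hs ht
  have hd : p.toSubgraph.Adj d.fst d.snd := d.adj
  exact ⟨_, _, h1, h2, hd.adj_sub, by simp [edgeUse, hd]⟩

/-- The three neighbours of each fragment vertex of Tutte's graph. -/
def tutteNeighbors (i : Fin 3) : Fin 15 → TutteVertex × TutteVertex × TutteVertex :=
  let f : Fin 15 → TutteVertex := fun a => Sum.inl (i, a)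
  ![(f 1, f 4, f 9), (f 0, f 2, f 5), (f 1, f 3, f 12), (f 2, f 4, f 6), (f 3, f 0, f 7),
    (f 1, f 11, f 8), (f 3, f 7, f 13), (f 4, f 10, f 6), (f 5, f 9, Sum.inl (i + 1, 10)),
    (f 0, f 8, f 10), (f 7, f 9, Sum.inl (i - 1, 8)), (f 12, f 14, f 5), (f 2, f 13, f 11),
    (f 12, f 6, f 14), (f 13, f 11, Sum.inr ())]

lemma eq_of_adj_inl {i : Fin 3} {a : Fin 15} {w : TutteVertex}
    (h : tutteGraph.Adj (Sum.inl (i, a)) w) :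
    w = (tutteNeighbors i a).1 ∨ w = (tutteNeighbors i a).2.1 ∨ w = (tutteNeighbors i a).2.2 := by
  simp only [tutteGraph, fromEdgeSet_adj, Set.mem_union, Set.mem_ofPred_eq, Set.mem_insert_iff,
    Set.mem_singleton_iff, Sym2.eq_iff] at h
  obtain ⟨(⟨j, b, c, hbc, h⟩ | ⟨j, h⟩) | h | h | h, -⟩ := h
  · simp only [tutteFragmentEdges, List.mem_cons, Prod.mk.injEq, List.not_mem_nil, or_false] at hbc
    rcases hbc with h' | h' | h' | h' | h' | h' | h' | h' | h' | h' | h' | h' | h' | h' | h' | h' |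
      h' | h' | h' | h' | h' <;> obtain ⟨rfl, rfl⟩ := h' <;> rcases h with ⟨h, rfl⟩ | ⟨h, rfl⟩ <;>
      simp only [Sum.inl.injEq, Prod.mk.injEq] at h <;> obtain ⟨rfl, rfl⟩ := h <;>
      simp [tutteNeighbors]
  all_goals
    rcases h with ⟨h, rfl⟩ | ⟨h, rfl⟩ <;>
    simp only [Sum.inl.injEq, Prod.mk.injEq, reduceCtorEq] at h <;>
    obtain ⟨rfl, rfl⟩ := h <;> first | simp [tutteNeighbors]; done | decide

/-- The central vertex is adjacent to the three vertices `Q_i` only. -/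
lemma eq_of_adj_inr {w : TutteVertex} (h : tutteGraph.Adj (Sum.inr ()) w) :
    w = Sum.inl (0, 14) ∨ w = Sum.inl (1, 14) ∨ w = Sum.inl (2, 14) := by
  simp only [tutteGraph, fromEdgeSet_adj, Set.mem_union, Set.mem_ofPred_eq, Set.mem_insert_iff,
    Set.mem_singleton_iff, Sym2.eq_iff] at h
  obtain ⟨(⟨j, b, c, hbc, h⟩ | ⟨j, h⟩) | h | h | h, -⟩ := h
  · simp at h
  · simp only [reduceCtorEq, false_and, true_and, false_or] at h
    subst h
    fin_cases j <;> simp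
  all_goals simp at h

set_option linter.unusedVariables false in
/-- A spanning subgraph of the fragment in which every vertex has degree two, the edges leaving at
`K` (`ko`) and `M` (`mo`) being counted and the one leaving at `Q` being absent, misses the boundary
of one of six vertex sets. The variable `uv` is the indicator of the edge `{U, V}`, and the name of
each of the last six hypotheses lists the vertices of the set whose boundary it describes, with
`hAll` for the whole fragment. -/
lemma fragment_infeasible
    {ab bc cd de ea al bg co di ej op on mj ji ip pq qn ng gk kl lm ko mo : ℕ}
    (hab : ab ≤ 1) (hbc : bc ≤ 1) (hcd : cd ≤ 1) (hde : de ≤ 1) (hea : ea ≤ 1) (hal : al ≤ 1)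
    (hbg : bg ≤ 1) (hco : co ≤ 1) (hdi : di ≤ 1) (hej : ej ≤ 1) (hop : op ≤ 1) (hon : on ≤ 1)
    (hmj : mj ≤ 1) (hji : ji ≤ 1) (hip : ip ≤ 1) (hpq : pq ≤ 1) (hqn : qn ≤ 1) (hng : ng ≤ 1)
    (hgk : gk ≤ 1) (hkl : kl ≤ 1) (hlm : lm ≤ 1) (hko : ko ≤ 1) (hmo : mo ≤ 1)
    (hA : ab + ea + al = 2) (hB : ab + bc + bg = 2) (hC : bc + cd + co = 2)
    (hD : cd + de + di = 2) (hE : de + ea + ej = 2) (hG : bg + ng + gk = 2)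
    (hI : di + ji + ip = 2) (hJ : ej + mj + ji = 2) (hK : gk + kl + ko = 2)
    (hL : al + kl + lm = 2) (hM : mj + lm + mo = 2) (hN : on + qn + ng = 2)
    (hO : co + op + on = 2) (hP : op + ip + pq = 2) (hQ : pq + qn = 2)
    (hNOPQ : 1 ≤ ng + co + ip) (hBCGNOPQ : 1 ≤ ab + cd + gk + ip)
    (hDEIJ : 1 ≤ cd + ea + mj + ip) (hCDEIJNOPQ : 1 ≤ bc + ea + mj + ng)
    (hABCDEGIJNOPQ : 1 ≤ al + mj + gk) (hAll : 1 ≤ ko + mo) : False := by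
  rcases Nat.le_one_iff_eq_zero_or_eq_one.1 hip with rfl | rfl <;>
    rcases Nat.le_one_iff_eq_zero_or_eq_one.1 hng with rfl | rfl <;> omega

set_option linter.unusedSimpArgs false in
/-- A Hamiltonian cycle uses the edge from the central vertex to each copy of the fragment. -/
lemma edgeUse_center_ne_zero {v : TutteVertex} {p : tutteGraph.Walk v v}
    (hp : p.IsHamiltonianCycle) (i : Fin 3) :
    edgeUse p (Sum.inl (i, 14)) (Sum.inr ()) ≠ 0 := by
  intro h0
  have hi : i + 1 ≠ i := by simp
  have hi' : i - 1 ≠ i := by simp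
  have hdeg : ∀ a : Fin 15, edgeUse p (Sum.inl (i, a)) (tutteNeighbors i a).1 +
      edgeUse p (Sum.inl (i, a)) (tutteNeighbors i a).2.1 +
      edgeUse p (Sum.inl (i, a)) (tutteNeighbors i a).2.2 = 2 := by
    intro a
    refine edgeUse_add_eq_two hp ?_ ?_ ?_ fun w => eq_of_adj_inl <;>
      fin_cases a <;> simp [tutteNeighbors]
  -- `leave S a w` counts the edge from `a` to `w` if it leaves the set `S` of vertices of copy `i`.
  let leave (S : Finset (Fin 15)) (a : Fin 15) (w : TutteVertex) : ℕ :=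
    if ∃ c ∈ S, Sum.inl (i, c) = w then 0 else edgeUse p (Sum.inl (i, a)) w
  have hcut : ∀ S : Finset (Fin 15), S.Nonempty →
      1 ≤ ∑ a ∈ S, (leave S a (tutteNeighbors i a).1 + leave S a (tutteNeighbors i a).2.1 +
        leave S a (tutteNeighbors i a).2.2) := by
    rintro S ⟨s, hs⟩
    obtain ⟨_, w, ⟨a, ha, rfl⟩, hw, hadj, huse⟩ := exists_edgeUse_crossing hp
      {w | ∃ c ∈ S, Sum.inl (i, c) = w} ⟨s, hs, rfl⟩ (t := Sum.inr ()) (by simp)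
    have hleave : leave S a w = 1 := by rw [← huse]; exact if_neg hw
    refine le_trans ?_ (Finset.single_le_sum (fun _ _ => Nat.zero_le _) ha)
    rcases eq_of_adj_inl hadj with rfl | rfl | rfl <;> omega
  have hcomm : ∀ a b : Fin 15, edgeUse p (Sum.inl (i, a)) (Sum.inl (i, b)) =
      edgeUse p (Sum.inl (i, b)) (Sum.inl (i, a)) := fun a b => edgeUse_comm p _ _
  have hle := edgeUse_le_one p
  let y (a b : Fin 15) := edgeUse p (Sum.inl (i, a)) (Sum.inl (i, b))
  refine fragment_infeasible
    (ko := edgeUse p (Sum.inl (i, 8)) (Sum.inl (i + 1, 10)))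
    (mo := edgeUse p (Sum.inl (i, 10)) (Sum.inl (i - 1, 8)))
    (ab := y 0 1) (bc := y 1 2) (cd := y 2 3) (de := y 3 4) (ea := y 4 0)
    (al := y 0 9) (bg := y 1 5) (co := y 2 12) (di := y 3 6) (ej := y 4 7)
    (op := y 12 13) (on := y 12 11) (mj := y 10 7) (ji := y 7 6) (ip := y 6 13)
    (pq := y 13 14) (qn := y 14 11) (ng := y 11 5) (gk := y 5 8) (kl := y 8 9)
    (lm := y 9 10)
    (hle _ _) (hle _ _) (hle _ _) (hle _ _) (hle _ _) (hle _ _) (hle _ _) (hle _ _) (hle _ _)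
    (hle _ _) (hle _ _) (hle _ _) (hle _ _) (hle _ _) (hle _ _) (hle _ _) (hle _ _) (hle _ _)
    (hle _ _) (hle _ _) (hle _ _) (hle _ _) (hle _ _)
    -- In the order of the hypotheses: the degrees at the 15 vertices, then the six boundaries.
    ?_ ?_ ?_ ?_ ?_ ?_ ?_ ?_ ?_ ?_ ?_ ?_ ?_ ?_ ?_ ?_ ?_ ?_ ?_ ?_ ?_
  · have := hdeg 0
    simp [tutteNeighbors, y, hcomm] at this ⊢
    omega
  · have := hdeg 1
    simp [tutteNeighbors, y, hcomm] at this ⊢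
    omega
  · have := hdeg 2
    simp [tutteNeighbors, y, hcomm] at this ⊢
    omega
  · have := hdeg 3
    simp [tutteNeighbors, y, hcomm] at this ⊢
    omega
  · have := hdeg 4
    simp [tutteNeighbors, y, hcomm] at this ⊢
    omega
  · have := hdeg 5
    simp [tutteNeighbors, y, hcomm] at this ⊢
    omega
  · have := hdeg 6
    simp [tutteNeighbors, y, hcomm] at this ⊢
    omega
  · have := hdeg 7
    simp [tutteNeighbors, y, hcomm] at this ⊢
    omega
  · have := hdeg 8
    simp [tutteNeighbors, y, hcomm] at this ⊢
    omega
  · have := hdeg 9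
    simp [tutteNeighbors, y, hcomm] at this ⊢
    omega
  · have := hdeg 10
    simp [tutteNeighbors, y, hcomm] at this ⊢
    omega
  · have := hdeg 11
    simp [tutteNeighbors, y, hcomm] at this ⊢
    omega
  · have := hdeg 12
    simp [tutteNeighbors, y, hcomm] at this ⊢
    omega
  · have := hdeg 13
    simp [tutteNeighbors, y, hcomm] at this ⊢
    omega
  · have := hdeg 14
    simp [tutteNeighbors, y, hcomm] at this ⊢
    omega
  · have := hcut {11, 12, 13, 14} (by simp)
    simp [tutteNeighbors, leave, y, hcomm] at this ⊢
    omega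
  · have := hcut {1, 2, 5, 11, 12, 13, 14} (by simp)
    simp [tutteNeighbors, leave, y, hcomm] at this ⊢
    omega
  · have := hcut {3, 4, 6, 7} (by simp)
    simp [tutteNeighbors, leave, y, hcomm] at this ⊢
    omega
  · have := hcut {2, 3, 4, 6, 7, 11, 12, 13, 14} (by simp)
    simp [tutteNeighbors, leave, y, hcomm] at this ⊢
    omega
  · have := hcut {0, 1, 2, 3, 4, 5, 6, 7, 11, 12, 13, 14} (by simp)
    simp [tutteNeighbors, leave, y, hcomm] at this ⊢
    omega
  · have := hcut {0, 1, 2, 3, 4, 5, 6, 7, 8, 9, 10, 11, 12, 13, 14} (by simp)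
    simp [tutteNeighbors, leave, y, hcomm, hi.symm, hi'.symm] at this ⊢
    omega

/-- Tutte's graph has no Hamiltonian cycle. -/
theorem stmt_3 :
    ¬ ∃ (v : (Fin 3 × Fin 15) ⊕ Unit) (p : tutteGraph.Walk v v),
        p.IsHamiltonianCycle := by
  rintro ⟨v, p, hp⟩
  have h := edgeUse_add_eq_two hp (u := Sum.inr ()) (a := Sum.inl (0, 14)) (b := Sum.inl (1, 14))
    (c := Sum.inl (2, 14)) (by simp) (by simp) (by simp) fun w => eq_of_adj_inr
  simp only [edgeUse_comm p (Sum.inr ())] at h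
  have h0 := edgeUse_center_ne_zero hp 0
  have h1 := edgeUse_center_ne_zero hp 1
  have h2 := edgeUse_center_ne_zero hp 2
  omega
end

section
/- Let H be the Horton circle: the simple graph on vertex set {0,1,...,15} whose edges are the 16-cycle {0,1},{1,2},...,{14,15},{15,0} together with the eight chords {0,5},{1,12},{2,7},{3,14},{4,9},{6,11},{8,13},{10,15}. Then no Hamiltonian cycle of H contains exactly one of the two edges e1 = {15,0} and e2 = {7,8}; that is, every Hamiltonian cycle of H contains both of e1, e2 or neither of them. -/
/-!
The proof is an exhaustive search. A Hamiltonian cycle based at `0` is an edge `0 - w` followed by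
a path with 15 edges from `w` back to `0`. The function `pathsTo` lists the vertex sequences of all
paths of a given length ending at `0`, growing them one vertex at a time at the front;
`support_mem_pathsTo` shows that the list is complete, and `pathsTo_check` inspects every sequence
of length 15 that closes up to a Hamiltonian cycle. A cycle based elsewhere is rotated to `0`,
which only permutes its edges.
-/

/-- The Horton circle: the 16-cycle `0-1-...-15-0` together with the eight
chords `{0,5},{1,12},{2,7},{3,14},{4,9},{6,11},{8,13},{10,15}`. -/
def hortonCircle : SimpleGraph (Fin 16) :=
  SimpleGraph.fromEdgeSet
    {s(0,1), s(1,2), s(2,3), s(3,4), s(4,5), s(5,6), s(6,7), s(7,8), s(8,9),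
     s(9,10), s(10,11), s(11,12), s(12,13), s(13,14), s(14,15), s(15,0),
     s(0,5), s(1,12), s(2,7), s(3,14), s(4,9), s(6,11), s(8,13), s(10,15)}

/-- The three neighbours of each vertex of the Horton circle. -/
def hortonNbrs : Fin 16 → List (Fin 16) :=
  ![[1, 15, 5], [0, 2, 12], [1, 3, 7], [2, 4, 14], [3, 5, 9], [4, 6, 0], [5, 7, 11], [6, 8, 2],
    [7, 9, 13], [8, 10, 4], [9, 11, 15], [10, 12, 6], [11, 13, 1], [12, 14, 8], [13, 15, 3],
    [14, 0, 10]]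

/-- Completeness of the neighbour lists; the search does not rely on the converse. -/
lemma mem_hortonNbrs {a b : Fin 16} (h : hortonCircle.Adj a b) : b ∈ hortonNbrs a := by
  have key : ∀ a b : Fin 16, s(a, b) ∈ ([s(0,1), s(1,2), s(2,3), s(3,4), s(4,5), s(5,6), s(6,7),
      s(7,8), s(8,9), s(9,10), s(10,11), s(11,12), s(12,13), s(13,14), s(14,15), s(15,0),
      s(0,5), s(1,12), s(2,7), s(3,14), s(4,9), s(6,11), s(8,13), s(10,15)] :
      List (Sym2 (Fin 16))) → b ∈ hortonNbrs a := by
    decide +kernel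
  refine key a b ?_
  have hmem := ((SimpleGraph.fromEdgeSet_adj _).1 h).1
  simpa only [Set.mem_insert_iff, Set.mem_singleton_iff, List.mem_cons, List.not_mem_nil,
    or_false] using hmem

/-- The vertex sequences of all paths with `n` edges that end at `0`. -/
def pathsTo : ℕ → List (List (Fin 16))
  | 0 => [[0]]
  | n + 1 => (pathsTo n).flatMap fun l =>
      ((hortonNbrs (l.headD 0)).filter fun a => a ∉ l).map fun a => a :: l

/-- The unordered pairs of consecutive entries of a list. -/
def consecPairs (l : List (Fin 16)) : List (Sym2 (Fin 16)) :=
  List.zipWith (fun a b => s(a, b)) l l.tail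

lemma headD_support {u v : Fin 16} (q : hortonCircle.Walk u v) : q.support.headD 0 = u := by
  cases q <;> simp

lemma edges_eq_consecPairs {u v : Fin 16} (q : hortonCircle.Walk u v) :
    q.edges = consecPairs q.support := by
  induction q with
  | nil => simp [consecPairs]
  | cons h q ih =>
    rw [SimpleGraph.Walk.edges_cons, ih]
    cases q <;> simp [consecPairs]

lemma support_mem_pathsTo {u v : Fin 16} (q : hortonCircle.Walk u v) (hv : v = 0)
    (hq : q.IsPath) : q.support ∈ pathsTo q.length := by
  induction q with
  | nil => simp [pathsTo, hv]
  | cons h q ih =>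
    rw [SimpleGraph.Walk.cons_isPath_iff] at hq
    rw [SimpleGraph.Walk.length_cons, SimpleGraph.Walk.support_cons, pathsTo, List.mem_flatMap]
    refine ⟨q.support, ih hv hq.1, ?_⟩
    simpa [hq.2, headD_support, -List.headD_eq_head?_getD] using mem_hortonNbrs h.symm

/-- The outcome of the search: `0 :: l` is the vertex sequence of the closed walk obtained from
`l` by prepending the edge from `0` to the first vertex of `l`. -/
lemma pathsTo_check : ∀ l ∈ pathsTo 15, l.headD 0 ∈ hortonNbrs 0 →
    (s(15, 0) ∈ consecPairs (0 :: l) ↔ s(7, 8) ∈ consecPairs (0 :: l)) := by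
  decide +kernel

lemma edges_iff_of_base_zero (p : hortonCircle.Walk 0 0) (hp : p.IsHamiltonianCycle) :
    s((15 : Fin 16), (0 : Fin 16)) ∈ p.edges ↔ s((7 : Fin 16), (8 : Fin 16)) ∈ p.edges := by
  have hlen := hp.length_eq
  have hc := hp.isCycle
  rw [edges_eq_consecPairs]
  cases p with
  | nil => simp at hlen
  | cons h q =>
    rw [SimpleGraph.Walk.cons_isCycle_iff] at hc
    have hl : q.length = 15 := by simpa using hlen
    have hmem := support_mem_pathsTo q rfl hc.1
    rw [hl] at hmem
    refine pathsTo_check _ hmem ?_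
    rw [headD_support]
    exact mem_hortonNbrs h

/-- No Hamiltonian cycle of the Horton circle contains exactly one of the edges
`e1 = {15,0}` and `e2 = {7,8}`: it contains both or neither. -/
theorem stmt_4 (v : Fin 16) (p : hortonCircle.Walk v v)
    (hp : p.IsHamiltonianCycle) :
    (s((15 : Fin 16), (0 : Fin 16)) ∈ p.edges ↔
      s((7 : Fin 16), (8 : Fin 16)) ∈ p.edges) := by
  have h0 := hp.mem_support 0
  have hr := (p.rotate_edges 0 h0).perm
  rw [← hr.mem_iff, ← hr.mem_iff]
  exact edges_iff_of_base_zero _ (hp.rotate h0)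
end

section
/- Let F be the Ellingham fragment: the simple graph on the 18 vertices {0,1,...,17} (corresponding to the labels A,...,R) with the 27 edges {1,2},{2,3},{3,4},{4,5},{5,0},{13,14},{14,15},{15,16},{16,17},{12,17},{0,6},{6,12},{1,7},{7,13},{2,8},{8,14},{3,9},{9,15},{4,10},{10,16},{5,11},{11,17},{9,10},{0,13},{1,12},{6,7},{8,11}. Then no Hamiltonian cycle of F contains both of the edges {6,7} and {9,10}. -/
/-!
A Hamiltonian cycle may be rotated so that it starts and ends at the vertex `6`. Its list of vertices
is then `6 :: l`, where `l` has length 18, has no repetitions, ends in `6`, and has consecutive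
entries adjacent. The list `l` is thus obtained from `[6]` by prepending, 17 times, a new neighbour
of the first entry. As the graph is cubic there are only about six thousand lists that arise in this
way along the search (`noRedCycle`), and the kernel checks that none of the lists of full length
closes up to a cycle through both red edges (`noRedCycle_six`). Soundness of the search is
`noRedCycle_sound`.
-/

/-- The Ellingham fragment: a cubic graph on 18 vertices `{0, ..., 17}`
(corresponding to the labels `A, ..., R`). -/
def ellinghamFragment : SimpleGraph (Fin 18) :=
  SimpleGraph.fromEdgeSet
    {s(1,2), s(2,3), s(3,4), s(4,5), s(5,0), s(13,14), s(14,15), s(15,16),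
     s(16,17), s(12,17), s(0,6), s(6,12), s(1,7), s(7,13), s(2,8), s(8,14),
     s(3,9), s(9,15), s(4,10), s(10,16), s(5,11), s(11,17), s(9,10), s(0,13),
     s(1,12), s(6,7), s(8,11)}

/-- The three neighbours of each vertex of the Ellingham fragment. -/
def ellinghamNeighbors : Fin 18 → List (Fin 18) :=
  ![[5, 6, 13], [2, 7, 12], [1, 3, 8], [2, 4, 9], [3, 5, 10], [0, 4, 11],
    [0, 7, 12], [1, 6, 13], [2, 11, 14], [3, 10, 15], [4, 9, 16], [5, 8, 17],
    [1, 6, 17], [0, 7, 14], [8, 13, 15], [9, 14, 16], [10, 15, 17], [11, 12, 16]]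

lemma mem_ellinghamNeighbors {a b : Fin 18} (h : ellinghamFragment.Adj a b) :
    a ∈ ellinghamNeighbors b := by
  have key : ∀ a b : Fin 18,
      s(a, b) ∈ [s(1, 2), s(2, 3), s(3, 4), s(4, 5), s(5, 0), s(13, 14), s(14, 15), s(15, 16),
        s(16, 17), s(12, 17), s(0, 6), s(6, 12), s(1, 7), s(7, 13), s(2, 8), s(8, 14),
        s(3, 9), s(9, 15), s(4, 10), s(10, 16), s(5, 11), s(11, 17), s(9, 10), s(0, 13),
        s(1, 12), s(6, 7), s(8, 11)] → a ∈ ellinghamNeighbors b := by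
    decide +kernel
  apply key
  rw [ellinghamFragment, SimpleGraph.fromEdgeSet_adj] at h
  simpa only [List.mem_cons, List.not_mem_nil, or_false, Set.mem_insert_iff,
    Set.mem_singleton_iff] using h.1

/-- The unordered pairs of consecutive entries of the closed vertex sequence `6 :: l` include both
red edges. -/
abbrev HasRedEdges (l : List (Fin 18)) : Prop :=
  s(6, 7) ∈ List.zipWith (fun a b => s(a, b)) (6 :: l) l ∧
    s(9, 10) ∈ List.zipWith (fun a b => s(a, b)) (6 :: l) l

/-- Exhaustive search over the ways of prepending `n` further vertices to the path `c :: t` of the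
Ellingham fragment: the result is `true` when every path so obtained either does not start at a
neighbour of `6` or, when preceded by `6`, misses one of the red edges. -/
def noRedCycle : ℕ → Fin 18 → List (Fin 18) → Bool
  | 0, c, t => !((ellinghamNeighbors c).contains 6 && decide (HasRedEdges (c :: t)))
  | n + 1, c, t =>
    (ellinghamNeighbors c).all fun w => (c :: t).contains w || noRedCycle n w (c :: t)

lemma noRedCycle_sound (n : ℕ) (c : Fin 18) (t pre : List (Fin 18)) (hlen : pre.length = n)
    (hchain : List.IsChain ellinghamFragment.Adj (6 :: (pre ++ c :: t)))
    (hnodup : (pre ++ c :: t).Nodup) (h : noRedCycle n c t = true) :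
    ¬ HasRedEdges (pre ++ c :: t) := by
  induction n generalizing c t pre with
  | zero =>
    obtain rfl := List.eq_nil_of_length_eq_zero hlen
    have h6 : 6 ∈ ellinghamNeighbors c :=
      mem_ellinghamNeighbors (by simpa using (List.isChain_cons_cons.1 hchain).1)
    intro hred
    rw [List.nil_append] at hred
    rw [noRedCycle, List.contains_iff_mem.2 h6, decide_eq_true hred] at h
    exact absurd h (by decide)
  | succ n ih =>
    -- The list is split at the last entry `w` of `pre`, the vertex preceding `c`.
    obtain ⟨pre, w, rfl⟩ : ∃ pre' w, pre = pre' ++ [w] :=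
      (List.eq_nil_or_concat' pre).resolve_left (by rintro rfl; simp at hlen)
    have hadj : ellinghamFragment.Adj w c := by
      have hinf : List.IsChain ellinghamFragment.Adj [w, c] :=
        hchain.infix ⟨6 :: pre, t, by simp⟩
      simpa using hinf
    have hw : w ∉ c :: t := by
      have hsuf : (w :: c :: t).Nodup := hnodup.sublist
        (List.IsSuffix.sublist ⟨pre, by simp⟩)
      exact (List.nodup_cons.1 hsuf).1
    rw [noRedCycle, List.all_eq_true] at h
    have hn := h w (mem_ellinghamNeighbors hadj)
    rw [Bool.or_eq_true, List.contains_iff_mem] at hn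
    have := ih w (c :: t) pre (by simpa using hlen) (by simpa using hchain)
      (by simpa using hnodup) (hn.resolve_left hw)
    simpa using this

lemma noRedCycle_six : noRedCycle 17 6 [] = true := by
  decide +kernel

/-- No Hamiltonian cycle of the Ellingham fragment contains both of the
distinguished edges `{6,7}` and `{9,10}`. -/
theorem stmt_5 (v : Fin 18) (p : ellinghamFragment.Walk v v)
    (hp : p.IsHamiltonianCycle) :
    ¬ (s((6 : Fin 18), (7 : Fin 18)) ∈ p.edges ∧
       s((9 : Fin 18), (10 : Fin 18)) ∈ p.edges) := by
  have h6 := hp.mem_support 6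
  have hq := hp.rotate h6
  rw [← (p.rotate_edges 6 h6).mem_iff, ← (p.rotate_edges 6 h6).mem_iff]
  generalize p.rotate 6 h6 = q at hq
  obtain ⟨pre, hpre⟩ : ∃ pre, q.support.tail = pre ++ [6] := by
    have hne : q.support.tail ≠ [] := by
      rw [← SimpleGraph.Walk.support_tail_of_not_nil _ hq.1.not_nil]
      exact q.tail.support_ne_nil
    refine ⟨q.support.tail.dropLast, ?_⟩
    conv_lhs => rw [← List.dropLast_append_getLast hne]
    rw [List.getLast_tail, SimpleGraph.Walk.getLast_support]
  have hsupp : q.support = 6 :: (pre ++ [6]) := by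
    rw [← hpre, SimpleGraph.Walk.cons_tail_support]
  have hlen : pre.length = 17 := by
    have h1 := q.length_support
    rw [hq.length_eq, hsupp] at h1
    simpa using h1
  have key := noRedCycle_sound 17 6 [] pre hlen (hsupp ▸ q.isChain_adj_support)
    (hpre ▸ hq.isCycle.support_nodup) noRedCycle_six
  rw [SimpleGraph.Walk.edges_eq_zipWith_support, hsupp]
  exact key
end

section
/- There exists a simple graph on 96 vertices that is cubic, bipartite, 3-connected, and has no Hamiltonian cycle. (The Horton-96 graph, built from three Horton fragments, is such a graph; it disproves Tutte's conjecture that every cubic 3-connected bipartite graph is Hamiltonian.) -/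
/-!
The witness is a graph assembled from *gates*. A gate has 16 vertices: two hexagons `A` and `B`,
four connectors, each joined to one vertex of `A` and to the corresponding vertex of `B`, and two
edges pairing opposite connectors. The two antipodal vertices left over on each hexagon carry the
four edges leaving the gate. The two leaving edges at one hexagon are the ends of a *strand*. In a
Hamiltonian cycle each strand is used at both of its ends or at neither, and at least one of the two
strands is used (`gate_logic`, `gate_spec`). So a gate is a logical `or` of two edges.

Take the multigraph on nodes 1, 2, 3, 4 with edges `p, q` (between 1 and 2), `r` (between 2 and 3),
`s, t` (between 3 and 4) and `u` (between 1 and 4), and impose the five disjunctions `p ∨ s`, `p ∨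
t`, `q ∨ s`, `q ∨ t`, `r ∨ u` by running the edges through gates. A Hamiltonian cycle would use
exactly two of the three edges at each node. Comparing nodes 1 and 2 shows that `r` and `u` are both
used or both unused; by `r ∨ u` both are used, hence one of `p, q` and one of `s, t` is unused,
contrary to the gate on that pair (`base_logic`). Replacing the nodes 1, 2, 3 by copies of `K₃,₃`
minus a vertex keeps the degree condition (`inflation_spec`) and makes the graph bipartite with `5 *
16 + 3 * 5 + 1 = 96` vertices.

For 3-connectivity, a list of thirteen connected dominating vertex sets is given such that any two
vertices are avoided by one of them (`backbones_spec`, `backbones_avoid`). Deleting at most two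
vertices leaves some such set intact, and every remaining vertex is in it or adjacent to it.
-/

/-- A simple graph is `k`-connected if it has more than `k` vertices and the
result of deleting any set of fewer than `k` vertices is a connected graph. -/
def IsKConnected (k : ℕ) {V : Type*} [Fintype V] (G : SimpleGraph V) : Prop :=
  k < Fintype.card V ∧ ∀ s : Set V, s.ncard < k → (G.induce sᶜ).Connected

/-! ### The graph -/

/-- The 144 edges, each listed once, with the first endpoint in one colour class and the second in
the other. The gate with offset `o` has the hexagons `o, …, o + 5` and `o + 6, …, o + 11`, the
connectors `o + 12, …, o + 15`, and its outgoing edges at `o`, `o + 3` (first strand) and `o + 6`,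
`o + 9` (second strand). The offsets of the gates for `p ∨ s`, `p ∨ t`, `q ∨ s`, `q ∨ t`, `r ∨ u` are
0, 16, 32, 48, 64. Nodes 1, 2, 3 are the blocks `80, …, 84`, `85, …, 89`, `90, …, 94`, the last two
vertices of each block being the ones without an edge leaving it, and node 4 is the vertex 95. -/
def hEdges : List (ℕ × ℕ) := [
    -- gate `PS`
    (0, 1), (2, 1), (2, 3), (4, 3), (4, 5), (0, 5), (6, 7), (8, 7), (8, 9), (10, 9), (10, 11),
    (6, 11), (12, 1), (12, 7), (2, 13), (8, 13), (4, 14), (10, 14), (15, 5), (15, 11), (12, 14),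
    (15, 13),
    -- gate `PT`
    (16, 17), (18, 17), (18, 19), (20, 19), (20, 21), (16, 21), (22, 23), (24, 23), (24, 25),
    (26, 25), (26, 27), (22, 27), (28, 17), (28, 23), (18, 29), (24, 29), (20, 30), (26, 30),
    (31, 21), (31, 27), (28, 30), (31, 29),
    -- gate `QS`
    (32, 33), (34, 33), (34, 35), (36, 35), (36, 37), (32, 37), (38, 39), (40, 39), (40, 41),
    (42, 41), (42, 43), (38, 43), (44, 33), (44, 39), (34, 45), (40, 45), (36, 46), (42, 46),
    (47, 37), (47, 43), (44, 46), (47, 45),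
    -- gate `QT`
    (48, 49), (50, 49), (50, 51), (52, 51), (52, 53), (48, 53), (54, 55), (56, 55), (56, 57),
    (58, 57), (58, 59), (54, 59), (60, 49), (60, 55), (50, 61), (56, 61), (52, 62), (58, 62),
    (63, 53), (63, 59), (60, 62), (63, 61),
    -- gate `RU`
    (64, 65), (66, 65), (66, 67), (68, 67), (68, 69), (64, 69), (70, 71), (72, 71), (72, 73),
    (74, 73), (74, 75), (70, 75), (76, 65), (76, 71), (66, 77), (72, 77), (68, 78), (74, 78),
    (79, 69), (79, 75), (76, 78), (79, 77),
    -- the strands `p`, `q`, `s`, `t`, `r`, `u`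
    (80, 3), (0, 19), (16, 85),
    (81, 35), (32, 51), (48, 86),
    (90, 9), (6, 41), (38, 95),
    (91, 25), (22, 57), (54, 95),
    (92, 67), (64, 87),
    (82, 73), (70, 95),
    -- the three inflated nodes
    (80, 83), (80, 84), (81, 83), (81, 84), (82, 83), (82, 84),
    (88, 85), (88, 86), (88, 87), (89, 85), (89, 86), (89, 87),
    (90, 93), (90, 94), (91, 93), (91, 94), (92, 93), (92, 94)]

/-- The witness: the graph on `Fin 96` with edge list `hEdges`. -/
def hGraph : SimpleGraph (Fin 96) where
  Adj u v := (u.val, v.val) ∈ hEdges ∨ (v.val, u.val) ∈ hEdges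
  symm := ⟨fun _ _ h => h.symm⟩
  loopless := ⟨fun v h => by
    have key : ∀ e ∈ hEdges, e.1 ≠ e.2 := by decide +kernel
    rcases h with h | h <;> exact key _ h rfl⟩

/-- The neighbours of `v`, in the order in which the edges appear in `hEdges`. -/
def hNbrs (v : ℕ) : List ℕ :=
  hEdges.filterMap fun e =>
    if e.1 = v then some e.2 else if e.2 = v then some e.1 else none

lemma hNbrs_spec : ∀ v < 96,
    (hNbrs v).length = 3 ∧ (hNbrs v).Nodup ∧ ∀ w ∈ hNbrs v, w < 96 := by
  decide +kernel

lemma hGraph_adj_iff (u v : Fin 96) : hGraph.Adj u v ↔ v.val ∈ hNbrs u.val := by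
  have key : ∀ e ∈ hEdges, e.1 ≠ e.2 := by decide +kernel
  simp only [hGraph, hNbrs, List.mem_filterMap, Prod.exists]
  constructor
  · rintro (h | h)
    · exact ⟨_, _, h, by simp⟩
    · exact ⟨_, _, h, by simpa using fun hvu => absurd hvu (key _ h)⟩
  · rintro ⟨a, b, h, hab⟩
    split_ifs at hab with h1 h2
    · left; simp_all
    · right; simp_all

lemma hNbrs_eq (v : Fin 96) : ∃ a b c : Fin 96,
    hNbrs v = [a.val, b.val, c.val] ∧ a ≠ b ∧ a ≠ c ∧ b ≠ c := by
  obtain ⟨h3, hd, hlt⟩ := hNbrs_spec v v.isLt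
  obtain ⟨a, b, c, habc⟩ := List.length_eq_three.1 h3
  rw [habc] at hd hlt
  refine ⟨⟨a, hlt a (by simp)⟩, ⟨b, hlt b (by simp)⟩, ⟨c, hlt c (by simp)⟩, habc, ?_⟩
  simp at hd ⊢
  tauto

lemma hGraph_cubic (v : Fin 96) : (hGraph.neighborSet v).ncard = 3 := by
  obtain ⟨a, b, c, h, hab, hac, hbc⟩ := hNbrs_eq v
  rw [Set.ncard_eq_three]
  refine ⟨a, b, c, hab, hac, hbc, ?_⟩
  ext w
  simp [hGraph_adj_iff, h, Fin.ext_iff]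

lemma hGraph_colorable : hGraph.Colorable 2 := by
  have key : ∀ e ∈ hEdges, e.2 ∉ hEdges.map Prod.fst := by decide +kernel
  refine ⟨SimpleGraph.Coloring.mk
    (fun v => if v.val ∈ hEdges.map Prod.fst then 0 else 1) ?_⟩
  rintro u v (h | h)
  · have h1 : u.val ∈ hEdges.map Prod.fst := List.mem_map_of_mem h
    simp only [if_pos h1, if_neg (key _ h)]
    decide
  · have h1 : v.val ∈ hEdges.map Prod.fst := List.mem_map_of_mem h
    simp only [if_pos h1, if_neg (key _ h)]
    decide

/-! ### 3-connectivity -/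

/-- One step of a graph search inside the vertex set `C`, where sets of vertices are encoded as bit
masks: if `e` touches the reached set `R`, its endpoints in `C` are added to `R`. -/
def absorb (C R : ℕ) (e : ℕ × ℕ) : ℕ :=
  bif R.testBit e.1 || R.testBit e.2 then R ||| (C &&& (2 ^ e.1 ||| 2 ^ e.2)) else R

/-- The part of `C` reached from its largest element after `n` passes through the edge list. -/
def spread (C : ℕ) : ℕ → ℕ
  | 0 => 2 ^ C.log2
  | n + 1 => hEdges.foldl (absorb C) (spread C n)

/-- The vertices that lie in `C` or have a neighbour in `C`. -/
def dominated (C : ℕ) : ℕ :=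
  hEdges.foldl
    (fun R e => bif C.testBit e.1 || C.testBit e.2 then R ||| (2 ^ e.1 ||| 2 ^ e.2) else R) C

/-- Bit masks of connected dominating sets such that any two vertices are avoided by one of them. -/
def backbones : List ℕ :=
  [55034993673054440688298699261,
   24349418975457507943122787928,
   57387878604739700769840395271,
   66329664441183312856679752499,
   51283936409595976083529243598,
   23110951766711611023540442547,
   19284423677961319143991194528,
   63494580145237698865118776911,
   27803249533273851235117714684,
   26591327965108141851356421688,
   63546861758461876833095676883,
   58366376487679726027466717263,
   42866462379360365169865559663]

set_option maxRecDepth 100000 in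
/-- Every backbone is connected (twenty passes of the search exhaust it) and dominating. -/
lemma backbones_spec : ∀ C ∈ backbones,
    C.testBit C.log2 = true ∧ spread C 20 = C ∧ dominated C = 2 ^ 96 - 1 := by
  decide +kernel

set_option maxRecDepth 100000 in
lemma backbones_avoid : ∀ u < 96, ∀ v < 96,
    ∃ C ∈ backbones, C.testBit u = false ∧ C.testBit v = false := by
  decide +kernel

/-- A property that passes from `i` to `j` along the edges of `l` with `j ∈ C` holds on everything
that the search through `l` reaches. -/
lemma foldl_absorb_inv {C : ℕ} {P : ℕ → Prop} (l : List (ℕ × ℕ)) (R : ℕ)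
    (hl : ∀ i j, (i, j) ∈ l ∨ (j, i) ∈ l → P i → C.testBit j = true → P j)
    (hR : ∀ i, R.testBit i = true → P i) :
    ∀ i, (l.foldl (absorb C) R).testBit i = true → P i := by
  induction l generalizing R with
  | nil => simpa using hR
  | cons e l ih =>
    rw [List.foldl_cons]
    refine ih _ (fun i j h => hl i j (by simp only [List.mem_cons]; tauto)) fun i hi => ?_
    unfold absorb at hi
    cases hc : (R.testBit e.1 || R.testBit e.2) with
    | false => exact hR i (by simpa [hc] using hi)
    | true =>
      simp only [hc, cond_true, Nat.testBit_or, Nat.testBit_and, Nat.testBit_two_pow,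
        Bool.or_eq_true, Bool.and_eq_true, decide_eq_true_eq] at hi
      rw [Bool.or_eq_true] at hc
      have h1 : P e.1 → C.testBit e.2 = true → P e.2 := hl _ _ (by simp)
      have h2 : P e.2 → C.testBit e.1 = true → P e.1 := hl _ _ (by simp)
      rcases hi with hi | ⟨hC, rfl | rfl⟩
      · exact hR i hi
      · rcases hc with hc | hc
        · exact hR _ hc
        · exact h2 (hR _ hc) hC
      · rcases hc with hc | hc
        · exact h1 (hR _ hc) hC
        · exact hR _ hc

lemma dominated_inv {C : ℕ} (i : ℕ) (hi : (dominated C).testBit i = true) :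
    C.testBit i = true ∨ ∃ j, C.testBit j = true ∧ ((i, j) ∈ hEdges ∨ (j, i) ∈ hEdges) := by
  suffices H : ∀ (l : List (ℕ × ℕ)) (R : ℕ), l ⊆ hEdges →
      (∀ i, R.testBit i = true →
        C.testBit i = true ∨ ∃ j, C.testBit j = true ∧ ((i, j) ∈ hEdges ∨ (j, i) ∈ hEdges)) →
      ∀ i, (l.foldl (fun R e =>
        bif C.testBit e.1 || C.testBit e.2 then R ||| (2 ^ e.1 ||| 2 ^ e.2) else R) R).testBit i
          = true →
        C.testBit i = true ∨ ∃ j, C.testBit j = true ∧ ((i, j) ∈ hEdges ∨ (j, i) ∈ hEdges) from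
    H hEdges C (List.Subset.refl _) (fun _ h => Or.inl h) i hi
  intro l
  induction l with
  | nil => intro R _ hR; simpa using hR
  | cons e l ih =>
    intro R hl hR
    rw [List.foldl_cons]
    refine ih _ (fun x hx => hl (List.mem_cons_of_mem _ hx)) fun i hi => ?_
    have he : (e.1, e.2) ∈ hEdges := hl List.mem_cons_self
    cases hc : (C.testBit e.1 || C.testBit e.2) with
    | false => exact hR i (by simpa [hc] using hi)
    | true =>
      simp only [hc, cond_true, Nat.testBit_or, Nat.testBit_two_pow,
        Bool.or_eq_true, decide_eq_true_eq] at hi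
      rw [Bool.or_eq_true] at hc
      rcases hi with hi | rfl | rfl
      · exact hR i hi
      · rcases hc with hc | hc
        · exact Or.inl hc
        · exact Or.inr ⟨_, hc, Or.inl he⟩
      · rcases hc with hc | hc
        · exact Or.inr ⟨_, hc, Or.inr he⟩
        · exact Or.inl hc

/-- Deleting vertices outside a backbone leaves a connected graph: the backbone survives, and each
remaining vertex lies in it or is adjacent to it. -/
lemma connected_of_backbone {C : ℕ} (hC : C ∈ backbones) (s : Set (Fin 96))
    (hs : ∀ v ∈ s, C.testBit v.val = false) : (hGraph.induce sᶜ).Connected := by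
  obtain ⟨hroot, hspread, hdom⟩ := backbones_spec C hC
  have hlt : ∀ i, C.testBit i = true → i < 96 := by
    have hlt : ∀ C ∈ backbones, C < 2 ^ 96 := by decide +kernel
    intro i hi
    by_contra h
    have := Nat.testBit_lt_two_pow ((hlt C hC).trans_le (Nat.pow_le_pow_right two_pos (not_lt.1 h)))
    simp [this] at hi
  have hmem : ∀ i (hi : C.testBit i = true), (⟨i, hlt i hi⟩ : Fin 96) ∈ sᶜ := fun i hi hmem => by
    simp [hs _ hmem] at hi
  let root : (sᶜ : Set (Fin 96)) := ⟨⟨C.log2, hlt _ hroot⟩, hmem _ hroot⟩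
  let P : ℕ → Prop := fun i => ∃ (h : i < 96) (h' : (⟨i, h⟩ : Fin 96) ∈ sᶜ),
    (hGraph.induce sᶜ).Reachable root ⟨⟨i, h⟩, h'⟩
  have step : ∀ i j (hj : j < 96) (_ : (⟨j, hj⟩ : Fin 96) ∈ sᶜ),
      (i, j) ∈ hEdges ∨ (j, i) ∈ hEdges → P i → P j := by
    rintro i j hj hj' he ⟨hi, hi', hr⟩
    refine ⟨hj, hj', hr.trans (SimpleGraph.Adj.reachable ?_)⟩
    simpa [hGraph] using he
  have hP : ∀ n i, (spread C n).testBit i = true → P i := by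
    intro n
    induction n with
    | zero =>
      intro i hi
      rw [spread, Nat.testBit_two_pow, decide_eq_true_eq] at hi
      subst hi
      exact ⟨_, _, SimpleGraph.Reachable.refl _⟩
    | succ n ih =>
      exact foldl_absorb_inv _ _ (fun i j he hi hj => step i j _ (hmem j hj) he hi) ih
  have hPC : ∀ i, C.testBit i = true → P i := fun i hi => hP 20 i (by rwa [hspread])
  rw [SimpleGraph.connected_iff_exists_forall_reachable]
  refine ⟨root, ?_⟩
  rintro ⟨⟨i, hi⟩, hi'⟩
  have hPi : P i := by
    rcases dominated_inv (C := C) i (by rw [hdom, Nat.testBit_two_pow_sub_one]; simpa using hi)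
      with h | ⟨j, hj, he⟩
    · exact hPC i h
    · exact step j i hi hi' he.symm (hPC j hj)
  obtain ⟨_, _, h⟩ := hPi
  exact h

lemma hGraph_isKConnected : IsKConnected 3 hGraph := by
  refine ⟨by simp, fun s hs => ?_⟩
  obtain ⟨u, v, huv⟩ : ∃ u v : Fin 96, s ⊆ {u, v} := by
    have h012 : s.ncard = 0 ∨ s.ncard = 1 ∨ s.ncard = 2 := by omega
    rcases h012 with h | h | h
    · exact ⟨0, 0, by simp [(Set.ncard_eq_zero s.toFinite).1 h]⟩
    · obtain ⟨u, rfl⟩ := Set.ncard_eq_one.1 h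
      exact ⟨u, u, by simp⟩
    · obtain ⟨u, v, -, rfl⟩ := Set.ncard_eq_two.1 h
      exact ⟨u, v, subset_rfl⟩
  obtain ⟨C, hC, hu, hv⟩ := backbones_avoid u u.isLt v v.isLt
  refine connected_of_backbone hC s fun w hw => ?_
  rcases huv hw with rfl | rfl
  exacts [hu, hv]

/-! ### Hamiltonian cycles as edge sets -/

/-- Exactly two of the three propositions hold. -/
def Two (P Q R : Prop) : Prop :=
  (P ∧ Q ∧ ¬ R) ∨ (P ∧ ¬ Q ∧ R) ∨ (¬ P ∧ Q ∧ R)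

/-- The properties of the edge relation `X` of a Hamiltonian cycle that the argument uses: symmetry,
exactly two edges of `X` at every vertex, and an edge of `X` leaving every nonempty proper set of
vertices. The set is given as a list `v :: S`; it is proper because it has at most 95 entries. -/
structure IsTour (X : ℕ → ℕ → Prop) : Prop where
  comm : ∀ a b, X a b ↔ X b a
  two : ∀ v < 96, ∀ a b c, hNbrs v = [a, b, c] → Two (X v a) (X v b) (X v c)
  cut : ∀ (v : ℕ) (S : List ℕ), v < 96 → S.length < 95 →
    ∃ x ∈ v :: S, ∃ y ∈ hNbrs x, y ∉ v :: S ∧ X x y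

lemma isTour_of_isHamiltonianCycle {v : Fin 96} {p : hGraph.Walk v v}
    (hp : p.IsHamiltonianCycle) :
    IsTour fun a b => ∃ x y : Fin 96, x.val = a ∧ y.val = b ∧ p.toSubgraph.Adj x y where
  comm a b := by
    constructor <;> rintro ⟨x, y, hx, hy, h⟩ <;> exact ⟨y, x, hy, hx, h.symm⟩
  two u hu a b c habc := by
    obtain ⟨a₁, b₁, c₁, habc₁, hab, hac, hbc⟩ := hNbrs_eq ⟨u, hu⟩
    simp only [habc, List.cons.injEq, and_true] at habc₁
    obtain ⟨rfl, rfl, rfl⟩ := habc₁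
    have hX : ∀ w : Fin 96, (∃ x y : Fin 96, x.val = u ∧ y.val = w.val ∧ p.toSubgraph.Adj x y) ↔
        w ∈ p.toSubgraph.neighborSet ⟨u, hu⟩ := by
      intro w
      constructor
      · rintro ⟨x, y, rfl, hy, h⟩
        rwa [Fin.ext hy] at h
      · exact fun h => ⟨_, w, rfl, rfl, h⟩
    have hsub : ∀ w ∈ p.toSubgraph.neighborSet ⟨u, hu⟩, w = a₁ ∨ w = b₁ ∨ w = c₁ := by
      intro w hw
      have := (hGraph_adj_iff _ _).1 (p.toSubgraph.adj_sub hw)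
      simpa [habc, Fin.ext_iff] using this
    have h2 := hp.isCycle.ncard_neighborSet_toSubgraph_eq_two (hp.mem_support ⟨u, hu⟩)
    obtain ⟨x, y, hxy, hset⟩ := Set.ncard_eq_two.1 h2
    simp only [hX]
    rw [hset] at hsub ⊢
    have hx := hsub x (by simp)
    have hy := hsub y (by simp)
    simp only [Set.mem_insert_iff, Set.mem_singleton_iff, Two]
    grind
  cut u S hu hS := by
    obtain ⟨w, hw, hwS⟩ : ∃ w < 96, w ∉ u :: S := by
      by_contra! hall
      have hsub : Finset.range 96 ⊆ (u :: S).toFinset := fun w hw => by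
        simpa using hall w (Finset.mem_range.1 hw)
      have h1 := (Finset.card_le_card hsub).trans (List.toFinset_card_le _)
      simp at h1
      omega
    suffices H : ∃ d ∈ p.darts, d.fst.val ∈ u :: S ∧ d.snd.val ∉ u :: S by
      obtain ⟨d, hd, h1, h2⟩ := H
      refine ⟨_, h1, _, (hGraph_adj_iff _ _).1 d.adj, h2, _, _, rfl, rfl, ?_⟩
      rw [SimpleGraph.Walk.adj_toSubgraph_iff_mem_edges]
      exact List.mem_map_of_mem hd
    by_cases hv : v.val ∈ u :: S
    · have hws := hp.mem_support ⟨w, hw⟩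
      obtain ⟨d, hd, h⟩ := (p.takeUntil _ hws).exists_boundary_dart {x | x.val ∈ u :: S} hv hwS
      exact ⟨d, p.darts_takeUntil_subset_darts hws hd, h⟩
    · have hus := hp.mem_support ⟨u, hu⟩
      obtain ⟨d, hd, h⟩ := (p.dropUntil _ hus).exists_boundary_dart {x | x.val ∈ u :: S}
        (List.mem_cons_self) hv
      exact ⟨d, p.darts_dropUntil_subset_darts hus hd, h⟩

/-! ### Gates -/

/-- The truth table of a gate. The edges of the hexagons are `a i` and `b i`, from the `i`-th to the
next vertex; `p i` and `q i` join a connector to the `i`-th vertex of the two hexagons; `g` and `k`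
pair the connectors; `t0, t3` and `u0, u3` are the outgoing edges of the two strands. The hypotheses
`s0, …, s11` forbid cycles closing up inside the gate, and `s12` forbids isolating it. -/
lemma gate_logic
    {a0 a1 a2 a3 a4 a5 b0 b1 b2 b3 b4 b5 p1 p2 p4 p5 q1 q2 q4 q5 g k t0 t3 u0 u3 : Prop}
    (v0 : Two a0 a5 t0) (v1 : Two a0 a1 p1) (v2 : Two a1 a2 p2) (v3 : Two a2 a3 t3)
    (v4 : Two a3 a4 p4) (v5 : Two a4 a5 p5) (v6 : Two b0 b5 u0) (v7 : Two b0 b1 q1)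
    (v8 : Two b1 b2 q2) (v9 : Two b2 b3 u3) (v10 : Two b3 b4 q4) (v11 : Two b4 b5 q5)
    (v12 : Two p1 q1 g) (v13 : Two p2 q2 k) (v14 : Two p4 q4 g) (v15 : Two p5 q5 k)
    (s0 : p1 ∨ a2 ∨ a4 ∨ b1 ∨ q4 ∨ b5 ∨ t0 ∨ u3)
    (s1 : b1 ∨ q4 ∨ b5 ∨ p2 ∨ p5 ∨ u3)
    (s2 : a1 ∨ a3 ∨ p5 ∨ q1 ∨ q4 ∨ t0)
    (s3 : b0 ∨ q2 ∨ b4 ∨ p1 ∨ p4 ∨ u3)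
    (s4 : a1 ∨ a3 ∨ p5 ∨ b0 ∨ q2 ∨ b4 ∨ t0 ∨ u3)
    (s5 : p1 ∨ a2 ∨ a4 ∨ q2 ∨ q5 ∨ t0)
    (s6 : b1 ∨ b3 ∨ q5 ∨ p1 ∨ p4 ∨ u0)
    (s7 : a1 ∨ p4 ∨ a5 ∨ q2 ∨ q5 ∨ t3)
    (s8 : a1 ∨ p4 ∨ a5 ∨ q1 ∨ b2 ∨ b4 ∨ t3 ∨ u0)
    (s9 : a0 ∨ p2 ∨ a4 ∨ b1 ∨ b3 ∨ q5 ∨ t3 ∨ u0)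
    (s10 : q1 ∨ b2 ∨ b4 ∨ p2 ∨ p5 ∨ u0)
    (s11 : a0 ∨ p2 ∨ a4 ∨ q1 ∨ q4 ∨ t3)
    (s12 : t0 ∨ t3 ∨ u0 ∨ u3) :
    (t0 ↔ t3) ∧ (u0 ↔ u3) ∧ (t0 ∨ u0) := by
  unfold Two at *
  by_cases g <;> by_cases k <;> by_cases a0 <;> by_cases b0 <;>
    simp only [*, true_and, and_true, false_and, and_false, not_true, not_false_iff, or_false,
      false_or, or_true, true_or] at * <;>
    grind

/-- `gate_logic` for the gate with offset `o`, whose outgoing edges lead to `y0, y3, y6, y9`. The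
hypothesis `hn` says that the adjacency lists are those of a gate. -/
lemma gate_spec {X : ℕ → ℕ → Prop} (h : IsTour X) (o y0 y3 y6 y9 : ℕ) (ho : o + 15 < 96)
    (hn : (List.range 16).map (fun i => hNbrs (o + i)) =
      [[o + 1, o + 5, y0], [o, o + 2, o + 12], [o + 1, o + 3, o + 13], [o + 2, o + 4, y3],
       [o + 3, o + 5, o + 14], [o + 4, o, o + 15], [o + 7, o + 11, y6], [o + 6, o + 8, o + 12],
       [o + 7, o + 9, o + 13], [o + 8, o + 10, y9], [o + 9, o + 11, o + 14], [o + 10, o + 6, o + 15],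
       [o + 1, o + 7, o + 14], [o + 2, o + 8, o + 15], [o + 4, o + 10, o + 12],
       [o + 5, o + 11, o + 13]]) :
    (X o y0 ↔ X (o + 3) y3) ∧ (X (o + 6) y6 ↔ X (o + 9) y9) ∧ (X o y0 ∨ X (o + 6) y6) := by
  simp only [List.range, List.range.loop, List.map, List.cons.injEq, Nat.add_zero, and_true] at hn
  obtain ⟨n0, n1, n2, n3, n4, n5, n6, n7, n8, n9, n10, n11, n12, n13, n14, n15⟩ := hn
  have v0 := h.two o (by omega) _ _ _ n0
  have v1 := h.two (o + 1) (by omega) _ _ _ n1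
  have v2 := h.two (o + 2) (by omega) _ _ _ n2
  have v3 := h.two (o + 3) (by omega) _ _ _ n3
  have v4 := h.two (o + 4) (by omega) _ _ _ n4
  have v5 := h.two (o + 5) (by omega) _ _ _ n5
  have v6 := h.two (o + 6) (by omega) _ _ _ n6
  have v7 := h.two (o + 7) (by omega) _ _ _ n7
  have v8 := h.two (o + 8) (by omega) _ _ _ n8
  have v9 := h.two (o + 9) (by omega) _ _ _ n9
  have v10 := h.two (o + 10) (by omega) _ _ _ n10
  have v11 := h.two (o + 11) (by omega) _ _ _ n11
  have v12 := h.two (o + 12) (by omega) _ _ _ n12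
  have v13 := h.two (o + 13) (by omega) _ _ _ n13
  have v14 := h.two (o + 14) (by omega) _ _ _ n14
  have v15 := h.two (o + 15) (by omega) _ _ _ n15
  have s0 := h.cut o [o + 1, o + 2, o + 5, o + 8, o + 9, o + 10, o + 11, o + 13, o + 15]
    (by omega) (by simp)
  have s1 := h.cut (o + 8) [o + 9, o + 10, o + 11, o + 13, o + 15] (by omega) (by simp)
  have s2 := h.cut o [o + 1, o + 4, o + 5, o + 12, o + 14] (by omega) (by simp)
  have s3 := h.cut (o + 7) [o + 8, o + 9, o + 10, o + 12, o + 14] (by omega) (by simp)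
  have s4 := h.cut o [o + 1, o + 4, o + 5, o + 7, o + 8, o + 9, o + 10, o + 12, o + 14]
    (by omega) (by simp)
  have s5 := h.cut o [o + 1, o + 2, o + 5, o + 13, o + 15] (by omega) (by simp)
  have s6 := h.cut (o + 6) [o + 7, o + 10, o + 11, o + 12, o + 14] (by omega) (by simp)
  have s7 := h.cut (o + 2) [o + 3, o + 4, o + 5, o + 13, o + 15] (by omega) (by simp)
  have s8 := h.cut (o + 2) [o + 3, o + 4, o + 5, o + 6, o + 7, o + 8, o + 11, o + 13, o + 15]
    (by omega) (by simp)
  have s9 := h.cut (o + 1) [o + 2, o + 3, o + 4, o + 6, o + 7, o + 10, o + 11, o + 12, o + 14]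
    (by omega) (by simp)
  have s10 := h.cut (o + 6) [o + 7, o + 8, o + 11, o + 13, o + 15] (by omega) (by simp)
  have s11 := h.cut (o + 1) [o + 2, o + 3, o + 4, o + 12, o + 14] (by omega) (by simp)
  have s12 := h.cut o [o + 1, o + 2, o + 3, o + 4, o + 5, o + 6, o + 7, o + 8, o + 9, o + 10,
    o + 11, o + 12, o + 13, o + 14, o + 15] (by omega) (by simp)
  simp [n0, n1, n2, n3, n4, n5, n6, n7, n8, n9, n10, n11, n12, n13, n14, n15, -not_or]
    at s0 s1 s2 s3 s4 s5 s6 s7 s8 s9 s10 s11 s12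
  -- Write every edge of the gate in the order of its endpoints in `hEdges`.
  simp only [
    h.comm (o + 1) o, h.comm (o + 1) (o + 2), h.comm (o + 3) (o + 2), h.comm (o + 3) (o + 4),
    h.comm (o + 5) (o + 4), h.comm (o + 5) o, h.comm (o + 7) (o + 6), h.comm (o + 7) (o + 8),
    h.comm (o + 9) (o + 8), h.comm (o + 9) (o + 10), h.comm (o + 11) (o + 10),
    h.comm (o + 11) (o + 6), h.comm (o + 1) (o + 12), h.comm (o + 7) (o + 12),
    h.comm (o + 13) (o + 2), h.comm (o + 13) (o + 8), h.comm (o + 14) (o + 4),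
    h.comm (o + 14) (o + 10), h.comm (o + 5) (o + 15), h.comm (o + 11) (o + 15),
    h.comm (o + 14) (o + 12), h.comm (o + 13) (o + 15)]
    at v0 v1 v2 v3 v4 v5 v6 v7 v8 v9 v10 v11 v12 v13 v14 v15
      s0 s1 s2 s3 s4 s5 s6 s7 s8 s9 s10 s11 s12
  -- Each cut clause is, up to order, a hypothesis of `gate_logic` with the additional information
  -- that `y0, y3, y6, y9` lie outside the set in question.
  refine gate_logic v0 v1 v2 v3 v4 v5 v6 v7 v8 v9 v10 v11 v12 v13 v14 v15
    ?_ ?_ ?_ ?_ ?_ ?_ ?_ ?_ ?_ ?_ ?_ ?_ ?_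
  · clear * - s0; grind
  · clear * - s1; grind
  · clear * - s2; grind
  · clear * - s3; grind
  · clear * - s4; grind
  · clear * - s5; grind
  · clear * - s6; grind
  · clear * - s7; grind
  · clear * - s8; grind
  · clear * - s9; grind
  · clear * - s10; grind
  · clear * - s11; grind
  · clear * - s12; grind

/-! ### Inflated nodes and the contradiction -/

/-- A copy of `K₃,₃` minus a vertex behaves like a single node: exactly two of its three outgoing
edges are used. The inner vertices `x`, `y` each skip one of the ports `a, b, c`; they skip different
ports, because a port skipped by both would have degree at most one, and the outgoing edges in use
are those at the two skipped ports. -/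
lemma inflation_spec {X : ℕ → ℕ → Prop} (h : IsTour X) (a b c x y a₁ b₁ c₁ : ℕ)
    (hlt : ∀ v ∈ [a, b, c, x, y], v < 96)
    (hn : [a, b, c, x, y].map hNbrs =
      [[a₁, x, y], [b₁, x, y], [c₁, x, y], [a, b, c], [a, b, c]]) :
    Two (X a a₁) (X b b₁) (X c c₁) := by
  simp only [List.map, List.cons.injEq, and_true] at hn
  obtain ⟨na, nb, nc, nx, ny⟩ := hn
  have ha := h.two a (hlt _ (by simp)) _ _ _ na
  have hb := h.two b (hlt _ (by simp)) _ _ _ nb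
  have hc := h.two c (hlt _ (by simp)) _ _ _ nc
  have hx := h.two x (hlt _ (by simp)) _ _ _ nx
  have hy := h.two y (hlt _ (by simp)) _ _ _ ny
  rw [h.comm x a, h.comm x b, h.comm x c] at hx
  rw [h.comm y a, h.comm y b, h.comm y c] at hy
  unfold Two at *
  clear hlt na nb nc nx ny
  grind

/-- The first two hypotheses give `r ↔ u`, so both hold by `ru`; then `n1` and `n3` make one of
`p, q` and one of `s, t` fail, which contradicts one of the four remaining disjunctions. -/
lemma base_logic {p q r s t u : Prop} (n1 : Two p q u) (n2 : Two p q r) (n3 : Two s t r)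
    (n4 : Two s t u) (ps : p ∨ s) (pt : p ∨ t) (qs : q ∨ s) (qt : q ∨ t) (ru : r ∨ u) : False := by
  unfold Two at *
  grind

lemma not_isTour {X : ℕ → ℕ → Prop} : ¬ IsTour X := by
  intro h
  have ps : (X 0 19 ↔ X 3 80) ∧ (X 6 41 ↔ X 9 90) ∧ (X 0 19 ∨ X 6 41) :=
    gate_spec h 0 19 80 41 90 (by norm_num) (by decide +kernel)
  have pt : (X 16 85 ↔ X 19 0) ∧ (X 22 57 ↔ X 25 91) ∧ (X 16 85 ∨ X 22 57) :=
    gate_spec h 16 85 0 57 91 (by norm_num) (by decide +kernel)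
  have qs : (X 32 51 ↔ X 35 81) ∧ (X 38 95 ↔ X 41 6) ∧ (X 32 51 ∨ X 38 95) :=
    gate_spec h 32 51 81 95 6 (by norm_num) (by decide +kernel)
  have qt : (X 48 86 ↔ X 51 32) ∧ (X 54 95 ↔ X 57 22) ∧ (X 48 86 ∨ X 54 95) :=
    gate_spec h 48 86 32 95 22 (by norm_num) (by decide +kernel)
  have ru : (X 64 87 ↔ X 67 92) ∧ (X 70 95 ↔ X 73 82) ∧ (X 64 87 ∨ X 70 95) :=
    gate_spec h 64 87 92 95 82 (by norm_num) (by decide +kernel)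
  have n1 := inflation_spec h 80 81 82 83 84 3 35 73 (by decide) (by decide +kernel)
  have n2 := inflation_spec h 85 86 87 88 89 16 48 64 (by decide) (by decide +kernel)
  have n3 := inflation_spec h 90 91 92 93 94 9 25 67 (by decide) (by decide +kernel)
  have n4 := h.two 95 (by norm_num) 38 54 70 (by decide +kernel)
  -- Each strand of the base multigraph is represented by one of its edges: `p` by `X 0 19`,
  -- `q` by `X 32 51`, `r` by `X 64 87`, `s` by `X 6 41`, `t` by `X 22 57`, `u` by `X 70 95`.
  rw [h.comm 19 0] at pt
  rw [h.comm 41 6] at qs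
  rw [h.comm 51 32, h.comm 57 22] at qt
  rw [h.comm 80 3, h.comm 81 35, h.comm 82 73, ← ps.1, ← qs.1, ← ru.2.1] at n1
  rw [h.comm 85 16, h.comm 86 48, h.comm 87 64, pt.1, qt.1] at n2
  rw [h.comm 90 9, h.comm 91 25, h.comm 92 67, ← ps.2.1, ← pt.2.1, ← ru.1] at n3
  rw [h.comm 95 38, h.comm 95 54, h.comm 95 70, qs.2.1, qt.2.1] at n4
  have hpt := pt.2.2
  have hqs := qs.2.2
  have hqt := qt.2.2
  rw [pt.1] at hpt
  rw [qs.2.1] at hqs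
  rw [qt.1, qt.2.1] at hqt
  exact base_logic n1 n2 n3 n4 ps.2.2 hpt hqs hqt ru.2.2

/-- There exists a simple graph on 96 vertices that is cubic, bipartite,
3-connected, and has no Hamiltonian cycle. -/
theorem stmt_6 :
    ∃ G : SimpleGraph (Fin 96),
      (∀ v, (G.neighborSet v).ncard = 3) ∧
      G.Colorable 2 ∧
      IsKConnected 3 G ∧
      ¬ ∃ (v : Fin 96) (p : G.Walk v v), p.IsHamiltonianCycle :=
  ⟨hGraph, hGraph_cubic, hGraph_colorable, hGraph_isKConnected,
    fun ⟨_, _, hp⟩ => not_isTour (isTour_of_isHamiltonianCycle hp)⟩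
end

section
/- There exists a simple graph on 92 vertices that is cubic, bipartite, 3-connected, and has no Hamiltonian cycle. (The Horton-92 graph, built from three Horton fragments without any additional vertices, is such a graph.) -/
namespace NonHamiltonian92

/-! ### The graph -/

/-- The 47 edges that do not lie on the Hamiltonian path `0, 1, …, 91`. -/
def chords : List (ℕ × ℕ) :=
  [(0, 5), (0, 9), (1, 78), (2, 7), (3, 14), (4, 11), (6, 91), (8, 13), (10, 15), (12, 17),
   (16, 19), (18, 21), (20, 23), (22, 25), (24, 27), (26, 29), (28, 31), (30, 33), (32, 35),
   (34, 37), (36, 39), (38, 41), (40, 43), (42, 45), (44, 47), (46, 49), (48, 51), (50, 53),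
   (52, 67), (54, 65), (55, 68), (56, 61), (57, 64), (58, 69), (59, 66), (60, 71), (62, 73),
   (63, 70), (72, 83), (74, 85), (75, 82), (76, 87), (77, 90), (79, 86), (80, 91), (81, 88),
   (84, 89)]

/-- The neighbours of the vertex `v < 92`: its predecessor and successor on the path, and the
other ends of its chords. -/
def nbrs (v : ℕ) : List ℕ :=
  (if v = 0 then [] else [v - 1]) ++ (if v = 91 then [] else [v + 1]) ++
    chords.filterMap fun e => if e.1 = v then some e.2 else if e.2 = v then some e.1 else none

theorem nbrs_facts : ∀ v < 92, (nbrs v).length = 3 ∧ (nbrs v).Nodup ∧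
    ∀ w ∈ nbrs v, w < 92 ∧ v ∈ nbrs w ∧ w % 2 ≠ v % 2 := by
  decide +kernel

/-- The 92-vertex graph. -/
def graph : SimpleGraph (Fin 92) where
  Adj u v := v.val ∈ nbrs u.val
  symm := ⟨fun u _ h => ((nbrs_facts u u.2).2.2 _ h).2.1⟩
  loopless := ⟨fun u h => ((nbrs_facts u u.2).2.2 _ h).2.2 rfl⟩

theorem graph_adj {u v : Fin 92} : graph.Adj u v ↔ v.val ∈ nbrs u.val := Iff.rfl

theorem graph_cubic (v : Fin 92) : (graph.neighborSet v).ncard = 3 := by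
  obtain ⟨hl, hn, hw⟩ := nbrs_facts v v.2
  rw [← Set.ncard_image_of_injective _ Fin.val_injective]
  have : Fin.val '' graph.neighborSet v = ((nbrs v).toFinset : Set ℕ) := by
    ext w
    simp only [Set.mem_image, SimpleGraph.mem_neighborSet, graph_adj, List.coe_toFinset,
      Set.mem_ofPred_eq]
    constructor
    · rintro ⟨x, hx, rfl⟩
      exact hx
    · intro h
      exact ⟨⟨w, (hw w h).1⟩, h, rfl⟩
  rw [this, Set.ncard_coe_finset, List.toFinset_card_of_nodup hn, hl]

theorem graph_colorable : graph.Colorable 2 :=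
  ⟨SimpleGraph.Coloring.mk (fun v => (⟨v.val % 2, Nat.mod_lt _ two_pos⟩ : Fin 2))
    fun {u _} h e => ((nbrs_facts u u.2).2.2 _ h).2.2 (Fin.mk.inj_iff.mp e).symm⟩

/-! ### 3-connectedness -/

/-- Whether some chord goes from the segment `X.1 ≤ u < X.2` to the segment `Y.1 ≤ u < Y.2`. -/
def link (X Y : ℕ × ℕ) : Bool :=
  chords.any fun e =>
    (Nat.ble X.1 e.1 && Nat.blt e.1 X.2 && Nat.ble Y.1 e.2 && Nat.blt e.2 Y.2) ||
    (Nat.ble X.1 e.2 && Nat.blt e.2 X.2 && Nat.ble Y.1 e.1 && Nat.blt e.1 Y.2)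

/-- One of the given segments is linked to all the others. -/
def linked (segs : List (ℕ × ℕ)) : Bool :=
  segs.any fun Z => segs.all fun X => X == Z || link X Z

/-- The nonempty segments left of the path after deleting `a ≤ b`. -/
def segments (a b : ℕ) : List (ℕ × ℕ) :=
  [(0, a), (a + 1, b), (b + 1, 92)].filter fun X => Nat.blt X.1 X.2

theorem segments_check : ∀ b < 92, ∀ a < b + 1, linked (segments a b) = true := by
  decide +kernel

theorem chord_adj : ∀ e ∈ chords, e.1 < 92 ∧ e.2 < 92 ∧ e.2 ∈ nbrs e.1 ∧ e.1 ∈ nbrs e.2 := by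
  decide +kernel

theorem link_spec {X Y : ℕ × ℕ} (h : link X Y = true) :
    ∃ u v : Fin 92, graph.Adj u v ∧ (X.1 ≤ u.val ∧ u.val < X.2) ∧ (Y.1 ≤ v.val ∧ v.val < Y.2) := by
  simp only [link, List.any_eq_true, Bool.or_eq_true, Bool.and_eq_true, Nat.ble_eq,
    Nat.blt_eq] at h
  obtain ⟨e, he, h⟩ := h
  obtain ⟨h1, h2, h12, h21⟩ := chord_adj e he
  rcases h with h | h
  · exact ⟨⟨e.1, h1⟩, ⟨e.2, h2⟩, h12, by simp; omega, by simp; omega⟩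
  · exact ⟨⟨e.2, h2⟩, ⟨e.1, h1⟩, h21, by simp; omega, by simp; omega⟩

theorem path_adj {u v : Fin 92} (h : u.val + 1 = v.val) : graph.Adj u v := by
  have := v.2
  rw [graph_adj, nbrs, if_neg (show u.val ≠ 91 by omega), h]
  simp

/-- A stretch of the path that avoids `s` stays connected after deleting `s`. -/
theorem reachable_of_stretch (s : Set (Fin 92)) (u : Fin 92) (n : ℕ) (hn : u.val + n < 92)
    (h : ∀ w : Fin 92, u.val ≤ w.val → w.val ≤ u.val + n → w ∈ sᶜ) :
    (graph.induce sᶜ).Reachable ⟨u, h u le_rfl (by omega)⟩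
      ⟨⟨u.val + n, hn⟩, h _ (by simp) (by simp)⟩ := by
  induction n with
  | zero => exact SimpleGraph.Reachable.refl _
  | succ n ih =>
    refine (ih (by omega) fun w h1 h2 => h w h1 (by omega)).trans (SimpleGraph.Adj.reachable ?_)
    exact path_adj (by simp; omega)

theorem reachable_of_segment (s : Set (Fin 92)) (X : ℕ × ℕ)
    (hX : ∀ u : Fin 92, X.1 ≤ u.val → u.val < X.2 → u ∈ sᶜ)
    (u v : (sᶜ : Set (Fin 92))) (hu : X.1 ≤ u.val.val ∧ u.val.val < X.2)
    (hv : X.1 ≤ v.val.val ∧ v.val.val < X.2) : (graph.induce sᶜ).Reachable u v := by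
  wlog huv : u.val.val ≤ v.val.val generalizing u v
  · exact (this v u hv hu (by omega)).symm
  have hb := v.val.2
  have key := reachable_of_stretch s u.val (v.val.val - u.val.val) (by omega)
    fun w h1 h2 => hX w (by omega) (by omega)
  convert key using 1
  apply Subtype.ext
  apply Fin.ext
  simp
  omega

theorem connected_of_segments (s : Set (Fin 92)) (segs : List (ℕ × ℕ)) (hl : linked segs = true)
    (hne : ∃ u, u ∈ sᶜ)
    (hcov : ∀ u ∈ sᶜ, ∃ X ∈ segs, X.1 ≤ u.val ∧ u.val < X.2)
    (hav : ∀ X ∈ segs, ∀ u : Fin 92, X.1 ≤ u.val → u.val < X.2 → u ∈ sᶜ) :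
    (graph.induce sᶜ).Connected := by
  simp only [linked, List.all_eq_true, Bool.or_eq_true, List.any_eq_true, beq_iff_eq] at hl
  obtain ⟨Z, hZ, hl⟩ := hl
  have hZreach := reachable_of_segment s Z (hav Z hZ)
  -- Every remaining vertex reaches some vertex of the central segment `Z`.
  have key : ∀ u : (sᶜ : Set (Fin 92)), ∃ z : (sᶜ : Set (Fin 92)),
      (Z.1 ≤ z.val.val ∧ z.val.val < Z.2) ∧ (graph.induce sᶜ).Reachable u z := by
    intro u
    obtain ⟨X, hX, hu⟩ := hcov u u.2
    rcases hl X hX with rfl | h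
    · exact ⟨u, hu, SimpleGraph.Reachable.refl _⟩
    · obtain ⟨x, z, hxz, hx, hz⟩ := link_spec h
      have hx' := hav X hX x hx.1 hx.2
      have hz' := hav Z hZ z hz.1 hz.2
      have hadj : (graph.induce sᶜ).Adj ⟨x, hx'⟩ ⟨z, hz'⟩ := hxz
      exact ⟨⟨z, hz'⟩, hz,
        (reachable_of_segment s X (hav X hX) u ⟨x, hx'⟩ hu hx).trans hadj.reachable⟩
  obtain ⟨r, hr⟩ := hne
  have : Nonempty (sᶜ : Set (Fin 92)) := ⟨⟨r, hr⟩⟩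
  refine SimpleGraph.Connected.mk fun u v => ?_
  obtain ⟨x, hx, hux⟩ := key u
  obtain ⟨y, hy, hvy⟩ := key v
  exact (hux.trans (hZreach x y hx hy)).trans hvy.symm

theorem connected_delete_pair (a b : Fin 92) (hab : a.val ≤ b.val) :
    (graph.induce ({a, b} : Set (Fin 92))ᶜ).Connected := by
  have hb := b.2
  refine connected_of_segments _ (segments a b) (segments_check b hb a (by omega)) ?_ ?_ ?_
  · have : ∃ u : Fin 92, u ≠ a ∧ u ≠ b := by
      obtain ⟨u, hu⟩ : ∃ u, u ∉ ({a, b} : Finset (Fin 92)) := by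
        by_contra! h
        have h1 := Finset.card_le_two (a := a) (b := b)
        rw [Finset.eq_univ_of_forall h] at h1
        simp at h1
      exact ⟨u, by simpa using hu⟩
    simpa using this
  · intro u hu
    simp only [Set.mem_compl_iff, Set.mem_insert_iff, Set.mem_singleton_iff, not_or,
      Fin.ext_iff] at hu
    have := u.2
    simp only [segments, List.mem_filter, List.mem_cons, List.not_mem_nil, or_false, Nat.blt_eq]
    rcases lt_trichotomy u.val a.val with h | h | h
    · exact ⟨(0, a), ⟨by simp, by simp; omega⟩, by simp; omega⟩
    · omega
    · rcases lt_trichotomy u.val b.val with h' | h' | h'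
      · exact ⟨(a + 1, b), ⟨by simp, by simp; omega⟩, by simp; omega⟩
      · omega
      · exact ⟨(b + 1, 92), ⟨by simp, by simp; omega⟩, by simp; omega⟩
  · intro X hX u h1 h2
    simp only [segments, List.mem_filter, List.mem_cons, List.not_mem_nil, or_false] at hX
    simp only [Set.mem_compl_iff, Set.mem_insert_iff, Set.mem_singleton_iff, not_or, Fin.ext_iff]
    rcases hX.1 with rfl | rfl | rfl <;> simp at h1 h2 <;> omega

theorem graph_connected3 : IsKConnected 3 graph := by
  refine ⟨by simp, fun s hs => ?_⟩
  have hcases : s.ncard = 0 ∨ s.ncard = 1 ∨ s.ncard = 2 := by omega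
  rcases hcases with h | h | h
  · rw [Set.ncard_eq_zero] at h
    subst h
    refine connected_of_segments _ [(0, 92)] (by decide) ⟨0, by simp⟩ ?_ ?_
    · intro u _
      exact ⟨(0, 92), by simp, by simp⟩
    · simp
  · obtain ⟨a, rfl⟩ := Set.ncard_eq_one.mp h
    rw [← Set.pair_eq_singleton]
    exact connected_delete_pair a a le_rfl
  · obtain ⟨a, b, -, rfl⟩ := Set.ncard_eq_two.mp h
    rcases le_total a.val b.val with hab | hab
    · exact connected_delete_pair a b hab
    · rw [Set.pair_comm]
      exact connected_delete_pair b a hab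

/-! ### Hamiltonian cycles as maps to the omitted neighbour -/

/-- `f` sends every vertex to the neighbour along the unique incident edge that a Hamiltonian
cycle omits: `f` is an involution along edges, and the non-omitted edges leave every nonempty
proper vertex set. -/
structure OmittedMap (f : ℕ → ℕ) : Prop where
  mem : ∀ v < 92, f v ∈ nbrs v
  inv : ∀ v < 92, f (f v) = v
  cut : ∀ S : List ℕ, S ≠ [] → (∀ v ∈ S, v < 92) → (∃ u < 92, u ∉ S) →
    ∃ v ∈ S, ∃ w ∈ nbrs v, w ∉ S ∧ f v ≠ w

/-- A Hamiltonian cycle uses an edge of the boundary of every nonempty proper vertex set. -/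
theorem exists_crossing {a : Fin 92} (p : graph.Walk a a) (hp : ∀ v, v ∈ p.support)
    (S : Set (Fin 92)) (x y : Fin 92) (hx : x ∈ S) (hy : y ∉ S) :
    ∃ v ∈ S, ∃ w ∉ S, p.toSubgraph.Adj v w := by
  by_cases ha : a ∈ S
  · obtain ⟨d, hd, h1, h2⟩ := (p.takeUntil y (hp y)).exists_boundary_dart S ha hy
    refine ⟨d.fst, h1, d.snd, h2, ?_⟩
    rw [← SimpleGraph.Subgraph.mem_edgeSet, SimpleGraph.Walk.mem_edges_toSubgraph]
    exact p.edges_takeUntil_subset_edges (hp y) (List.mem_map_of_mem (f := SimpleGraph.Dart.edge) hd)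
  · obtain ⟨d, hd, h1, h2⟩ :=
      (p.takeUntil x (hp x)).exists_boundary_dart Sᶜ ha (by simpa using hx)
    refine ⟨d.snd, by simpa using h2, d.fst, h1, ?_⟩
    apply SimpleGraph.Subgraph.Adj.symm
    rw [← SimpleGraph.Subgraph.mem_edgeSet, SimpleGraph.Walk.mem_edges_toSubgraph]
    exact p.edges_takeUntil_subset_edges (hp x) (List.mem_map_of_mem (f := SimpleGraph.Dart.edge) hd)

theorem exists_omittedMap {a : Fin 92} (p : graph.Walk a a) (hp : p.IsHamiltonianCycle) :
    ∃ f, OmittedMap f := by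
  have hsupp : ∀ v, v ∈ p.support := hp.mem_support
  -- At every vertex two of the three neighbours are used, so exactly one is omitted.
  have key : ∀ v : Fin 92, ∃ w, graph.Adj v w ∧ ¬ p.toSubgraph.Adj v w ∧
      ∀ x, graph.Adj v x → x ≠ w → p.toSubgraph.Adj v x := by
    intro v
    have h2 : (p.toSubgraph.neighborSet v).ncard = 2 :=
      hp.isCycle.ncard_neighborSet_toSubgraph_eq_two (hsupp v)
    have h3 := graph_cubic v
    have hsub : p.toSubgraph.neighborSet v ⊆ graph.neighborSet v :=
      p.toSubgraph.neighborSet_subset v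
    have hd := Set.ncard_sdiff hsub (Set.toFinite _)
    rw [h2, h3] at hd
    obtain ⟨w, hw⟩ := Set.ncard_eq_one.mp hd
    have hw' : w ∈ graph.neighborSet v \ p.toSubgraph.neighborSet v := by simp [hw]
    refine ⟨w, hw'.1, hw'.2, fun x hx hxw => ?_⟩
    by_contra hcon
    have : x ∈ graph.neighborSet v \ p.toSubgraph.neighborSet v := ⟨hx, hcon⟩
    rw [hw] at this
    exact hxw this
  choose g hg hg' hg'' using key
  have hginv : ∀ v, g (g v) = v := by
    intro v
    by_contra h
    exact hg' v (hg'' (g v) v (hg v).symm (Ne.symm h)).symm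
  refine ⟨fun n => if h : n < 92 then g ⟨n, h⟩ else 0, ?_, ?_, ?_⟩
  · intro v hv
    simpa [hv] using graph_adj.mp (hg ⟨v, hv⟩)
  · intro v hv
    simp [hv, hginv]
  · rintro S hS hlt ⟨u, hu, huS⟩
    obtain ⟨x, hx⟩ := List.exists_mem_of_ne_nil S hS
    obtain ⟨v, hv, w, hw, hvw⟩ := exists_crossing p hsupp {v | v.val ∈ S} ⟨x, hlt x hx⟩ ⟨u, hu⟩
      hx huS
    refine ⟨v.val, hv, w.val, hvw.adj_sub, hw, ?_⟩
    intro h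
    simp only [Fin.is_lt, ↓reduceDIte, Fin.eta] at h
    exact hg' v (by rwa [Fin.ext h])

/-! ### Enumeration over a fragment -/

/-- Whether the partial omitted map with graph `M` stays injective and involutive after mapping `v`
to `w`. -/
def consistent (v w : ℕ) (M : List (ℕ × ℕ)) : Bool :=
  M.all fun e => ((e.1 == v) == (e.2 == w)) && ((e.1 == w) == (e.2 == v))

/-- Whether `leaf` holds for every extension of the partial omitted map `M` to the vertices `vs`
that omits no edge of `ban`. -/
def search (ban : List (ℕ × ℕ)) (leaf : List (ℕ × ℕ) → Bool) :
    List ℕ → List (ℕ × ℕ) → Bool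
  | [], M => leaf M
  | v :: vs, M => (nbrs v).all fun w =>
      ban.contains (v, w) || !consistent v w M || search ban leaf vs ((v, w) :: M)

/-- The vertices met when following non-omitted edges inside `F` from the last vertex `cur`
of `S`, without turning back; the first argument bounds the number of steps. -/
def walk (F : List ℕ) (M : List (ℕ × ℕ)) : ℕ → ℕ → List ℕ → List ℕ
  | 0, _, S => S
  | n + 1, cur, S =>
    match (nbrs cur).find? fun w => F.contains w && !S.contains w && !M.contains (cur, w) with
    | none => S
    | some w => walk F M n w (w :: S)

/-- Every edge leaving `S` is omitted by `M` or ends in `X`. -/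
def closedUpTo (M : List (ℕ × ℕ)) (X S : List ℕ) : Bool :=
  S.all fun v => (nbrs v).all fun w => S.contains w || M.contains (v, w) || X.contains w

/-- `S` is a nonempty subset of `F` that is left by no non-omitted edge, or contains `Q` and is
left by non-omitted edges towards `X` only. -/
def goodSet (F Q X : List ℕ) (M : List (ℕ × ℕ)) (S : List ℕ) : Bool :=
  !S.isEmpty && S.all F.contains &&
    (closedUpTo M [] S || (Q.all S.contains && closedUpTo M X S))

/-- Whether one of the walks from the vertices `starts` traces out a good set. -/
def leafTest (F starts Q X : List ℕ) (M : List (ℕ × ℕ)) : Bool :=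
  starts.any fun s => goodSet F Q X M (walk F M 18 s [s])

variable {f : ℕ → ℕ}

theorem search_sound (hf : OmittedMap f) {ban : List (ℕ × ℕ)} {leaf : List (ℕ × ℕ) → Bool}
    (hban : ∀ e ∈ ban, f e.1 ≠ e.2) (vs : List ℕ) (hvs : ∀ v ∈ vs, v < 92) (M : List (ℕ × ℕ))
    (hM : ∀ e ∈ M, e.1 < 92 ∧ f e.1 = e.2) (h : search ban leaf vs M = true) :
    ∃ M' : List (ℕ × ℕ), (∀ e ∈ M', f e.1 = e.2) ∧ leaf M' = true := by
  induction vs generalizing M with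
  | nil => exact ⟨M, fun e he => (hM e he).2, h⟩
  | cons v vs ih =>
    have hv : v < 92 := hvs v (by simp)
    rw [search, List.all_eq_true] at h
    have h1 := h (f v) (hf.mem v hv)
    simp only [Bool.or_eq_true, List.contains_iff_mem, Bool.not_eq_true'] at h1
    rcases h1 with (h1 | h1) | h1
    · exact absurd rfl (hban _ h1)
    · have : consistent v (f v) M = true := by
        rw [consistent, List.all_eq_true]
        intro e he
        obtain ⟨h2, h3⟩ := hM e he
        have i1 : e.1 = v ↔ e.2 = f v := by
          rw [← h3]
          refine ⟨fun h => by rw [h], fun h => ?_⟩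
          rw [← hf.inv e.1 h2, h, hf.inv v hv]
        have i2 : e.1 = f v ↔ e.2 = v := by
          rw [← h3]
          refine ⟨fun h => by rw [h, hf.inv v hv], fun h => ?_⟩
          rw [← h, hf.inv e.1 h2]
        have j1 : (e.1 == v) = (e.2 == f v) := by rw [Bool.eq_iff_iff, beq_iff_eq, beq_iff_eq]; exact i1
        have j2 : (e.1 == f v) = (e.2 == v) := by rw [Bool.eq_iff_iff, beq_iff_eq, beq_iff_eq]; exact i2
        rw [j1, j2]
        simp
      rw [this] at h1
      exact absurd h1 (by simp)
    · refine ih (fun x hx => hvs x (by simp [hx])) _ ?_ h1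
      intro e he
      rcases List.mem_cons.mp he with rfl | he
      · exact ⟨hv, rfl⟩
      · exact hM e he

/-- If the enumeration over a fragment `F` succeeds, then some nonempty `S ⊆ F` contains `Q` and is
left by the Hamiltonian cycle only towards `X`: sets not left at all contradict `hf`. -/
theorem exists_of_search (hf : OmittedMap f) {F starts Q X : List ℕ} {ban M : List (ℕ × ℕ)}
    (hF : ∀ v ∈ F, v < 92 ∧ v ≠ 16)
    (h : search ban (leafTest F starts Q X) F M = true)
    (hban : ∀ e ∈ ban, f e.1 ≠ e.2) (hM : ∀ e ∈ M, e.1 < 92 ∧ f e.1 = e.2) :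
    ∃ S : List ℕ, S ≠ [] ∧ (∀ v ∈ S, v < 92 ∧ v ≠ 16) ∧ (∀ v ∈ Q, v ∈ S) ∧
      ∀ v ∈ S, ∀ w ∈ nbrs v, w ∈ S ∨ f v = w ∨ w ∈ X := by
  obtain ⟨M', hM', hl⟩ := search_sound hf hban F (fun v hv => (hF v hv).1) M hM h
  simp only [leafTest, List.any_eq_true] at hl
  obtain ⟨s, -, hl⟩ := hl
  generalize walk F M' 18 s [s] = S at hl
  simp only [goodSet, closedUpTo, Bool.and_eq_true, Bool.or_eq_true, Bool.not_eq_true',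
    List.all_eq_true, List.contains_iff_mem, List.isEmpty_eq_false_iff, List.not_mem_nil,
    or_false] at hl
  obtain ⟨⟨hne, hSF⟩, hl⟩ := hl
  have hS : ∀ v ∈ S, v < 92 ∧ v ≠ 16 := fun v hv => hF v (hSF v hv)
  rcases hl with hl | ⟨hQ, hl⟩
  · obtain ⟨v, hv, w, hw, hwS, hvw⟩ := hf.cut S hne (fun v hv => (hS v hv).1)
      ⟨16, by norm_num, fun h => (hS 16 h).2 rfl⟩
    rcases hl v hv w hw with h | h
    · exact absurd h hwS
    · exact absurd (hM' _ h) hvw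
  · refine ⟨S, hne, hS, hQ, fun v hv w hw => ?_⟩
    rcases hl v hv w hw with (h | h) | h
    · exact .inl h
    · exact .inr (.inl (hM' _ h))
    · exact .inr (.inr h)

/-- A nonempty set avoiding the vertex `16` is left by the Hamiltonian cycle. -/
theorem not_closed (hf : OmittedMap f) (S : List ℕ) (hne : S ≠ [])
    (hS : ∀ v ∈ S, v < 92 ∧ v ≠ 16) (h : ∀ v ∈ S, ∀ w ∈ nbrs v, w ∈ S ∨ f v = w) : False := by
  obtain ⟨v, hv, w, hw, hwS, hvw⟩ := hf.cut S hne (fun v hv => (hS v hv).1)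
    ⟨16, by norm_num, fun h => (hS 16 h).2 rfl⟩
  rcases h v hv w hw with h | h
  · exact hwS h
  · exact hvw h

theorem false_of_search (hf : OmittedMap f) {F starts : List ℕ} {ban M : List (ℕ × ℕ)}
    (hF : ∀ v ∈ F, v < 92 ∧ v ≠ 16)
    (h : search ban (leafTest F starts [] []) F M = true)
    (hban : ∀ e ∈ ban, f e.1 ≠ e.2) (hM : ∀ e ∈ M, e.1 < 92 ∧ f e.1 = e.2) : False := by
  obtain ⟨S, hne, hS, -, hcl⟩ := exists_of_search hf hF h hban hM
  refine not_closed hf S hne hS fun v hv w hw => ?_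
  simpa using hcl v hv w hw

theorem eq_comm_of_omitted (hf : OmittedMap f) {v w : ℕ} (hv : v < 92) (hw : w < 92) :
    f v = w ↔ f w = v :=
  ⟨fun h => by rw [← h, hf.inv v hv], fun h => by rw [← h, hf.inv w hw]⟩

/-! ### The fragments -/

/-- The fragment `U`. -/
abbrev fragU : List ℕ := List.range 16

/-- The fragment `L`. -/
abbrev fragL : List ℕ := List.range' 54 18

/-- The fragment `R`. -/
abbrev fragR : List ℕ := List.range' 74 18

-- The starting vertices `0, 11` and `3, 8` hit a short cycle in every case.
theorem search_U₁ : search [(6, 91)] (leafTest fragU [0, 11] [] []) fragU [(1, 78)] = true := by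
  decide +kernel

theorem search_U₂ : search [(1, 78)] (leafTest fragU [3, 8] [] []) fragU [(6, 91)] = true := by
  decide +kernel

theorem search_L : search [(71, 72), (62, 73)]
    (leafTest fragL [57, 62] [62, 71] [72, 73]) fragL [] = true := by
  decide +kernel

theorem search_R : search [(83, 72), (74, 73)]
    (leafTest fragR [74, 87] [74, 83] [72, 73]) fragR [] = true := by
  decide +kernel

-- In the remaining searches the fragment admits no omitted map at all: its two colour
-- classes have nine vertices each, which the prescribed edges leaving it would unbalance.
theorem search_R₁ : search [(74, 73)] (leafTest fragR [] [] []) fragR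
    [(83, 72), (78, 1), (91, 6)] = true := by
  decide +kernel

theorem search_R₂ : search [(74, 73), (78, 1), (91, 6)] (leafTest fragR [] [] []) fragR
    [(83, 72)] = true := by
  decide +kernel

theorem search_R₃ : search [(83, 72)] (leafTest fragR [] [] []) fragR
    [(74, 73), (78, 1), (91, 6)] = true := by
  decide +kernel

theorem search_R₄ : search [(83, 72), (78, 1), (91, 6)] (leafTest fragR [] [] []) fragR
    [(74, 73)] = true := by
  decide +kernel

theorem fragment_U (hf : OmittedMap f) : f 1 = 78 ↔ f 6 = 91 := by
  constructor
  · intro h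
    by_contra h'
    exact false_of_search hf (by decide) search_U₁ (by simpa using h') (by simpa using h)
  · intro h
    by_contra h'
    exact false_of_search hf (by decide) search_U₂ (by simpa using h') (by simpa using h)

/-- If neither `{71, 72}` nor `{62, 73}` is omitted, the cycle joins `62` and `71` inside `L`. -/
theorem fragment_L (hf : OmittedMap f) (h1 : f 71 ≠ 72) (h2 : f 62 ≠ 73) :
    ∃ S : List ℕ, S ≠ [] ∧ (∀ v ∈ S, v < 92 ∧ v ≠ 16) ∧ (∀ v ∈ [62, 71], v ∈ S) ∧
      ∀ v ∈ S, ∀ w ∈ nbrs v, w ∈ S ∨ f v = w ∨ w ∈ [72, 73] :=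
  exists_of_search hf (by decide) search_L (by simp [h1, h2]) (by simp)

/-- If neither `{83, 72}` nor `{74, 73}` is omitted, the cycle joins `74` and `83` inside `R`. -/
theorem fragment_R (hf : OmittedMap f) (h1 : f 83 ≠ 72) (h2 : f 74 ≠ 73) :
    ∃ S : List ℕ, S ≠ [] ∧ (∀ v ∈ S, v < 92 ∧ v ≠ 16) ∧ (∀ v ∈ [74, 83], v ∈ S) ∧
      ∀ v ∈ S, ∀ w ∈ nbrs v, w ∈ S ∨ f v = w ∨ w ∈ [72, 73] :=
  exists_of_search hf (by decide) search_R (by simp [h1, h2]) (by simp)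

theorem fragment_R_odd (hf : OmittedMap f) (h : f 83 = 72 ↔ f 74 ≠ 73) :
    f 78 = 1 ↔ f 91 ≠ 6 := by
  by_cases h1 : f 83 = 72
  · have h2 := h.mp h1
    constructor
    · intro h3 h4
      exact false_of_search hf (by decide) search_R₁ (by simpa using h2) (by simp [h1, h3, h4])
    · intro h3
      by_contra h4
      exact false_of_search hf (by decide) search_R₂ (by simp [h2, h3, h4]) (by simpa using h1)
  · have h2 : f 74 = 73 := by
      by_contra h2
      exact h1 (h.mpr h2)
    constructor
    · intro h3 h4
      exact false_of_search hf (by decide) search_R₃ (by simpa using h1) (by simp [h2, h3, h4])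
    · intro h3
      by_contra h4
      exact false_of_search hf (by decide) search_R₄ (by simp [h1, h3, h4]) (by simpa using h2)

theorem nbrs_72 : nbrs 72 = [71, 73, 83] := by decide

theorem nbrs_73 : nbrs 73 = [72, 74, 62] := by decide

/-- If the sets `S` and `T` (such as those given by `fragment_L` and `fragment_R`) are left only
towards `72, 73`, then `S ∪ T ∪ {72, 73}` cannot contain every non-omitted neighbour of `72`
and `73`. -/
theorem not_closed_union (hf : OmittedMap f) (S T : List ℕ)
    (hS : ∀ v ∈ S, v < 92 ∧ v ≠ 16) (hT : ∀ v ∈ T, v < 92 ∧ v ≠ 16)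
    (hS' : ∀ v ∈ S, ∀ w ∈ nbrs v, w ∈ S ∨ f v = w ∨ w ∈ [72, 73])
    (hT' : ∀ v ∈ T, ∀ w ∈ nbrs v, w ∈ T ∨ f v = w ∨ w ∈ [72, 73])
    (h71 : 71 ∈ S ∨ f 72 = 71) (h62 : 62 ∈ S ∨ f 73 = 62)
    (h83 : 83 ∈ T ∨ f 72 = 83) (h74 : 74 ∈ T ∨ f 73 = 74) : False := by
  refine not_closed hf (72 :: 73 :: (S ++ T)) (by simp) ?_ ?_
  · intro v hv
    simp only [List.mem_cons, List.mem_append] at hv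
    rcases hv with rfl | rfl | hv | hv
    · simp
    · simp
    · exact hS v hv
    · exact hT v hv
  · intro v hv w hw
    simp only [List.mem_cons, List.mem_append] at hv ⊢
    rcases hv with rfl | rfl | hv | hv
    · rw [nbrs_72] at hw
      simp only [List.mem_cons, List.not_mem_nil, or_false] at hw
      rcases hw with rfl | rfl | rfl <;> tauto
    · rw [nbrs_73] at hw
      simp only [List.mem_cons, List.not_mem_nil, or_false] at hw
      rcases hw with rfl | rfl | rfl <;> tauto
    · have := hS' v hv w hw
      simp only [List.mem_cons, List.not_mem_nil, or_false] at this
      tauto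
    · have := hT' v hv w hw
      simp only [List.mem_cons, List.not_mem_nil, or_false] at this
      tauto

theorem not_omittedMap (hf : OmittedMap f) : False := by
  have m72 := hf.mem 72 (by norm_num)
  have m73 := hf.mem 73 (by norm_num)
  rw [nbrs_72] at m72
  rw [nbrs_73] at m73
  simp only [List.mem_cons, List.not_mem_nil, or_false] at m72 m73
  have e1 : f 71 = 72 ↔ f 72 = 71 := eq_comm_of_omitted hf (by norm_num) (by norm_num)
  have e2 : f 62 = 73 ↔ f 73 = 62 := eq_comm_of_omitted hf (by norm_num) (by norm_num)
  have e3 : f 83 = 72 ↔ f 72 = 83 := eq_comm_of_omitted hf (by norm_num) (by norm_num)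
  have e4 : f 74 = 73 ↔ f 73 = 74 := eq_comm_of_omitted hf (by norm_num) (by norm_num)
  have e5 : f 73 = 72 ↔ f 72 = 73 := eq_comm_of_omitted hf (by norm_num) (by norm_num)
  have e6 : f 78 = 1 ↔ f 1 = 78 := eq_comm_of_omitted hf (by norm_num) (by norm_num)
  have e7 : f 91 = 6 ↔ f 6 = 91 := eq_comm_of_omitted hf (by norm_num) (by norm_num)
  have hU := fragment_U hf
  have hR := fragment_R_odd hf
  -- `fragment_U` and `fragment_R_odd` leave only three cases for the edges omitted at `72` and `73`.
  have hodd : ¬ (f 83 = 72 ↔ f 74 ≠ 73) := fun h => by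
    have h' := hR h
    rw [e6, hU, ← e7] at h'
    exact iff_not_self h'
  have hcases : (f 72 = 73 ∧ f 73 = 72) ∨ (f 72 = 71 ∧ f 73 = 62) ∨ (f 72 = 83 ∧ f 73 = 74) := by
    rw [e3, Ne, e4] at hodd
    rcases m72 with h1 | h1 | h1 <;> rcases m73 with h2 | h2 | h2 <;>
      simp [h1, h2] at hodd e5 ⊢
  rcases hcases with ⟨h1, h2⟩ | ⟨h1, h2⟩ | ⟨h1, h2⟩
  · obtain ⟨S, -, hS, hSQ, hS'⟩ := fragment_L hf (by simp [e1, h1]) (by simp [e2, h2])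
    obtain ⟨T, -, hT, hTQ, hT'⟩ := fragment_R hf (by simp [e3, h1]) (by simp [e4, h2])
    exact not_closed_union hf S T hS hT hS' hT' (.inl (hSQ 71 (by simp)))
      (.inl (hSQ 62 (by simp))) (.inl (hTQ 83 (by simp))) (.inl (hTQ 74 (by simp)))
  · obtain ⟨T, -, hT, hTQ, hT'⟩ := fragment_R hf (by simp [e3, h1]) (by simp [e4, h2])
    exact not_closed_union hf [] T (by simp) hT (by simp) hT' (.inr h1) (.inr h2)
      (.inl (hTQ 83 (by simp))) (.inl (hTQ 74 (by simp)))
  · obtain ⟨S, -, hS, hSQ, hS'⟩ := fragment_L hf (by simp [e1, h1]) (by simp [e2, h2])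
    exact not_closed_union hf S [] hS (by simp) hS' (by simp) (.inl (hSQ 71 (by simp)))
      (.inl (hSQ 62 (by simp))) (.inr h1) (.inr h2)

end NonHamiltonian92

/-- There exists a simple graph on 92 vertices that is cubic, bipartite,
3-connected, and has no Hamiltonian cycle. -/
theorem stmt_7 :
    ∃ G : SimpleGraph (Fin 92),
      (∀ v, (G.neighborSet v).ncard = 3) ∧
      G.Colorable 2 ∧
      IsKConnected 3 G ∧
      ¬ ∃ (v : Fin 92) (p : G.Walk v v), p.IsHamiltonianCycle := by
  refine ⟨NonHamiltonian92.graph, NonHamiltonian92.graph_cubic, NonHamiltonian92.graph_colorable,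
    NonHamiltonian92.graph_connected3, ?_⟩
  rintro ⟨v, p, hp⟩
  obtain ⟨f, hf⟩ := NonHamiltonian92.exists_omittedMap p hp
  exact NonHamiltonian92.not_omittedMap hf
end

section
/- There exists a simple graph on 50 vertices that is cubic, bipartite, 3-connected, and has no Hamiltonian cycle. (Georges's graph, built from two Ellingham fragments joined through a 6-vertex tree, is such a graph; it is the smallest known counterexample to Tutte's conjecture.) -/
namespace Georges

/-! ### The graph -/

/-- Neighbour lists of the 22-vertex fragment. Its vertices are `0, …, 21`; the numbers
`22, 23, 24, 25` stand for the outer ends of the four dangling edges, which leave the fragment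
at the vertices `0, 1, 11, 12` respectively. -/
def fragNbr (x : ℕ) : List ℕ :=
  [[12, 19, 22], [11, 18, 23], [13, 16, 20], [14, 17, 18], [11, 17, 20], [14, 16, 19],
    [15, 18, 20], [13, 14, 15], [13, 17, 21], [12, 16, 21], [15, 19, 21], [1, 4, 24],
    [0, 9, 25], [2, 7, 8], [3, 5, 7], [6, 7, 10], [2, 5, 9], [3, 4, 8], [1, 3, 6],
    [0, 5, 10], [2, 4, 6], [8, 9, 10]].getD x []

/-- Placement of the first copy of the fragment: its vertices become `0, …, 21`, and the outer
ends `22, 23, 24, 25` of its dangling edges become the leaves `48, 49, 46, 47` of the tree. -/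
def emb₁ (x : ℕ) : ℕ := if x < 22 then x else [48, 49, 46, 47].getD (x - 22) 0

/-- Placement of the second copy of the fragment: its vertices become `22, …, 43`. The last two
dangling edges are attached crosswise in comparison with `emb₁`. -/
def emb₂ (x : ℕ) : ℕ := if x < 22 then x + 22 else [48, 49, 47, 46].getD (x - 22) 0

/-- Neighbour lists of the whole graph on `0, …, 49`: two copies of the fragment, and the
tree on `44, …, 49` with central edge `44 — 45` and leaves `46, 47` (at `44`) and
`48, 49` (at `45`). -/
def nbr (v : ℕ) : List ℕ :=
  if v < 22 then (fragNbr v).map emb₁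
  else if v < 44 then (fragNbr (v - 22)).map emb₂
  else [[45, 46, 47], [44, 48, 49], [44, 11, 34], [44, 12, 33], [45, 0, 22], [45, 1, 23]].getD
    (v - 44) []

/-- The 50-vertex graph with neighbour lists `nbr`. -/
def graph : SimpleGraph (Fin 50) where
  Adj u v := v.val ∈ nbr u.val
  symm := ⟨by decide +kernel⟩
  loopless := ⟨by decide +kernel⟩

instance : DecidableRel graph.Adj := fun u v => inferInstanceAs (Decidable (v.val ∈ nbr u.val))

theorem graph_adj {u v : Fin 50} : graph.Adj u v ↔ v.val ∈ nbr u.val := Iff.rfl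

theorem cubic (v : Fin 50) : (graph.neighborSet v).ncard = 3 := by
  rw [Set.ncard_eq_toFinset_card']
  revert v
  decide +kernel

theorem bipartite : graph.Colorable 2 :=
  ⟨SimpleGraph.Coloring.mk
    (fun v : Fin 50 => if v.val < 44 then (if v.val % 22 < 11 then (0 : Fin 2) else 1)
      else if v.val = 45 ∨ v.val = 46 ∨ v.val = 47 then 0 else 1)
    (by decide +kernel)⟩

/-! ### 3-connectivity -/

/-- An order of the vertices in which flood fills terminate quickly. -/
def sweep : List ℕ :=
  [12, 9, 48, 19, 22, 10, 5, 41, 21, 27, 47, 8, 16, 45, 32, 49, 23, 37, 29, 13, 34, 1, 17, 2, 7,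
    28, 20, 15, 44, 43, 6, 31, 40, 0, 38, 36, 18, 14, 33, 24, 35, 4, 46, 30, 25, 3, 39, 42, 26, 11]

/-- The pairs `(2 ^ v, N)` for `v` in `sweep`, where `N` is the bitmask of the neighbours of `v`. -/
def masks : List (ℕ × ℕ) :=
  sweep.map fun v => (2 ^ v, (nbr v).foldl (fun N n => N ||| 2 ^ n) 0)

/-- One step of a flood fill: the vertex `v` with `e = (2 ^ v, N)` joins the
bitmask `S` of reached vertices if it has a neighbour in `S` and belongs to the bitmask `live`. -/
def grow (live S : ℕ) (e : ℕ × ℕ) : ℕ :=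
  bif Nat.beq (S &&& e.2) 0 then S else S ||| (e.1 &&& live)

/-- Whether a flood fill within `live` from `S`, made of at most `k` rounds of the steps in `l`
and its reverse alternately, reaches all of `live`. -/
def floods (l : List (ℕ × ℕ)) (live : ℕ) : ℕ → ℕ → Bool
  | 0, S => Nat.beq S live
  | k + 1, S => Nat.beq S live || floods l.reverse live k (l.foldl (grow live) S)

/-- A vertex different from `x` and `y`. -/
def root (x y : ℕ) : ℕ :=
  if x ≠ 0 ∧ y ≠ 0 then 0 else if x ≠ 1 ∧ y ≠ 1 then 1 else 2

/-- The bitmask of all vertices other than `x` and `y`; the value `50` for `x` or `y` deletes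
nothing. -/
def live (x y : ℕ) : ℕ := (2 ^ 50 - 1) ^^^ ((2 ^ x ||| 2 ^ y) % 2 ^ 50)

theorem floods_all : ((List.range 51).all fun x => (List.range (x + 1)).all fun y =>
    floods masks (live x y) 4 (2 ^ root x y)) = true := by
  decide +kernel

theorem testBit_live {x y v : ℕ} : (live x y).testBit v = true ↔ v < 50 ∧ v ≠ x ∧ v ≠ y := by
  simp only [live, Nat.testBit_xor, Nat.testBit_two_pow_sub_one, Nat.testBit_mod_two_pow,
    Nat.testBit_or, Nat.testBit_two_pow]
  by_cases h : v < 50 <;> by_cases hx : x = v <;> by_cases hy : y = v <;>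
    simp [h, hx, hy, eq_comm (a := v)]

theorem testBit_foldl (l : List ℕ) (N i : ℕ)
    (h : (l.foldl (fun N n => N ||| 2 ^ n) N).testBit i = true) : N.testBit i = true ∨ i ∈ l := by
  induction l generalizing N with
  | nil => exact Or.inl h
  | cons a l ih =>
    rcases ih _ h with h | h
    · rw [Nat.testBit_or, Nat.testBit_two_pow] at h
      simp only [Bool.or_eq_true, decide_eq_true_eq] at h
      rcases h with h | h
      · exact Or.inl h
      · exact Or.inr (by simp [h])
    · exact Or.inr (List.mem_cons_of_mem _ h)

/-- A property of vertices that passes from a vertex to its live neighbours passes along a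
step of the flood fill. -/
theorem grow_sound {x y : ℕ} {P : ℕ → Prop}
    (hP : ∀ v < 50, v ≠ x → v ≠ y → ∀ u ∈ nbr v, P u → P v)
    {e : ℕ × ℕ} (he : e ∈ masks) {S : ℕ} (hS : ∀ u, S.testBit u = true → P u) :
    ∀ u, (grow (live x y) S e).testBit u = true → P u := by
  intro u hu
  obtain ⟨v, -, rfl⟩ := List.mem_map.1 he
  unfold grow at hu
  rcases hb : Nat.beq (S &&& (nbr v).foldl (fun N n => N ||| 2 ^ n) 0) 0 with _ | _
  · simp only [hb, cond_false, Nat.testBit_or, Nat.testBit_and, Nat.testBit_two_pow,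
      Bool.or_eq_true, Bool.and_eq_true, decide_eq_true_eq] at hu
    rcases hu with hu | ⟨rfl, hl⟩
    · exact hS u hu
    · obtain ⟨h50, hx, hy⟩ := testBit_live.1 hl
      obtain ⟨i, hi⟩ := Nat.exists_testBit_of_ne_zero (Nat.ne_of_beq_eq_false hb)
      rw [Nat.testBit_and, Bool.and_eq_true] at hi
      have := testBit_foldl _ _ _ hi.2
      simp only [Nat.zero_testBit, Bool.false_eq_true, false_or] at this
      exact hP v h50 hx hy i this (hS i hi.1)
  · simp only [hb, cond_true] at hu
    exact hS u hu

theorem foldl_grow_sound {x y : ℕ} {P : ℕ → Prop}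
    (hP : ∀ v < 50, v ≠ x → v ≠ y → ∀ u ∈ nbr v, P u → P v)
    (l : List (ℕ × ℕ)) (hl : ∀ e ∈ l, e ∈ masks) {S : ℕ} (hS : ∀ u, S.testBit u = true → P u) :
    ∀ u, (l.foldl (grow (live x y)) S).testBit u = true → P u := by
  induction l generalizing S with
  | nil => exact hS
  | cons e l ih =>
    exact ih (fun e he => hl e (List.mem_cons_of_mem _ he))
      (grow_sound hP (hl e List.mem_cons_self) hS)

theorem floods_sound {x y : ℕ} {P : ℕ → Prop}
    (hP : ∀ v < 50, v ≠ x → v ≠ y → ∀ u ∈ nbr v, P u → P v) (k : ℕ)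
    (l : List (ℕ × ℕ)) (hl : ∀ e ∈ l, e ∈ masks) {S : ℕ} (hS : ∀ u, S.testBit u = true → P u)
    (h : floods l (live x y) k S = true) : ∀ v < 50, v ≠ x → v ≠ y → P v := by
  have done : Nat.beq S (live x y) = true → ∀ v < 50, v ≠ x → v ≠ y → P v := by
    intro h v hv hx hy
    rw [Nat.eq_of_beq_eq_true h] at hS
    exact hS v (testBit_live.2 ⟨hv, hx, hy⟩)
  induction k generalizing l S with
  | zero => exact done h
  | succ k ih =>
    rw [floods, Bool.or_eq_true] at h
    rcases h with h | h
    · exact done h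
    · have hS' := foldl_grow_sound hP l hl hS
      refine ih l.reverse (fun e he => hl e (List.mem_reverse.1 he)) hS' h ?_
      intro h v hv hx hy
      rw [Nat.eq_of_beq_eq_true h] at hS'
      exact hS' v (testBit_live.2 ⟨hv, hx, hy⟩)

theorem connected_of_le {x y : ℕ} (hyx : y ≤ x) (hx : x ≤ 50) (s : Set (Fin 50))
    (hs : ∀ v, v ∈ s ↔ v.val = x ∨ v.val = y) : (graph.induce sᶜ).Connected := by
  have hr : root x y < 50 ∧ root x y ≠ x ∧ root x y ≠ y := by
    unfold root; split_ifs <;> omega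
  have hrs : (⟨root x y, hr.1⟩ : Fin 50) ∈ sᶜ := by
    rw [Set.mem_compl_iff, hs]; exact not_or.2 hr.2
  have key := List.all_eq_true.1 (List.all_eq_true.1 floods_all x (List.mem_range.2 (by omega))) y
    (List.mem_range.2 (by omega))
  have reach := floods_sound (x := x) (y := y)
    (P := fun u => ∃ (h : u < 50) (h' : (⟨u, h⟩ : Fin 50) ∈ sᶜ),
      (graph.induce sᶜ).Reachable ⟨_, hrs⟩ ⟨⟨u, h⟩, h'⟩) ?_ 4 masks (fun _ h => h) ?_ key
  · refine (SimpleGraph.connected_iff_exists_forall_reachable _).2 ⟨⟨_, hrs⟩, ?_⟩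
    rintro ⟨w, hw⟩
    have hw' := hw
    rw [Set.mem_compl_iff, hs, not_or] at hw'
    obtain ⟨_, _, h⟩ := reach w.val w.isLt hw'.1 hw'.2
    exact h
  · rintro v hv hvx hvy u hu ⟨hu50, hus, h⟩
    have hvs : (⟨v, hv⟩ : Fin 50) ∈ sᶜ := by
      rw [Set.mem_compl_iff, hs]; exact not_or.2 ⟨hvx, hvy⟩
    refine ⟨hv, hvs, h.trans (SimpleGraph.Adj.reachable ?_)⟩
    exact (graph_adj.2 hu : graph.Adj ⟨v, hv⟩ ⟨u, hu50⟩).symm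
  · intro u hu
    rw [Nat.testBit_two_pow, decide_eq_true_eq] at hu
    subst hu
    exact ⟨hr.1, hrs, SimpleGraph.Reachable.refl _⟩

theorem connected_of {x y : ℕ} (hx : x ≤ 50) (hy : y ≤ 50) (s : Set (Fin 50))
    (hs : ∀ v, v ∈ s ↔ v.val = x ∨ v.val = y) : (graph.induce sᶜ).Connected := by
  rcases le_total y x with h | h
  · exact connected_of_le h hx s hs
  · exact connected_of_le h hy s fun v => (hs v).trans or_comm

theorem three_connected : IsKConnected 3 graph := by
  refine ⟨by simp, fun s hs => ?_⟩
  have h3 : s.ncard = 0 ∨ s.ncard = 1 ∨ s.ncard = 2 := by omega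
  rcases h3 with h | h | h
  · rw [Set.ncard_eq_zero] at h
    subst h
    exact connected_of le_rfl le_rfl _ fun v => by simp; omega
  · obtain ⟨a, rfl⟩ := Set.ncard_eq_one.1 h
    exact connected_of (x := a) (y := a) (by omega) (by omega) _ fun v => by simp [Fin.ext_iff]
  · obtain ⟨a, b, -, rfl⟩ := Set.ncard_eq_two.1 h
    exact connected_of (x := a) (y := b) (by omega) (by omega) _ fun v => by simp [Fin.ext_iff]

/-! ### The edges missed by a Hamiltonian cycle -/

/-- `μ v` is the neighbour of `v` along the one edge at `v` that is missed by some fixed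
Hamiltonian cycle. The field `conn` expresses that the cycle is a single cycle: a nonempty set of
vertices that is closed under going along cycle edges contains every vertex. -/
structure IsMate (μ : ℕ → ℕ) : Prop where
  mem : ∀ v < 50, μ v ∈ nbr v
  invol : ∀ v < 50, μ (μ v) = v
  conn : ∀ S : ℕ → Prop, (∃ v < 50, S v) → (∀ v < 50, S v → ∀ n ∈ nbr v, n ≠ μ v → S n) →
    ∀ v < 50, S v

theorem exists_isMate {v : Fin 50} {p : graph.Walk v v} (hp : p.IsHamiltonianCycle) :
    ∃ μ, IsMate μ := by
  have hmem : ∀ u, u ∈ p.toSubgraph.verts := fun u =>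
    p.mem_verts_toSubgraph.2 (hp.mem_support u)
  have hm : ∀ u : Fin 50, ∃ m : Fin 50, graph.Adj u m ∧
      ∀ n, p.toSubgraph.Adj u n ↔ graph.Adj u n ∧ n ≠ m := by
    intro u
    have h2 := hp.isCycle.ncard_neighborSet_toSubgraph_eq_two (hp.mem_support u)
    have hsub : p.toSubgraph.neighborSet u ⊆ graph.neighborSet u := fun n hn => hn.adj_sub
    have h1 : (graph.neighborSet u \ p.toSubgraph.neighborSet u).ncard = 1 := by
      rw [Set.ncard_sdiff hsub, cubic, h2]
    obtain ⟨m, hm⟩ := Set.ncard_eq_one.1 h1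
    have hm' : ∀ n, (graph.Adj u n ∧ ¬ p.toSubgraph.Adj u n) ↔ n = m := fun n => by
      simpa using Set.ext_iff.1 hm n
    refine ⟨m, ((hm' m).2 rfl).1, fun n => ⟨fun h => ⟨h.adj_sub, ?_⟩, fun h => ?_⟩⟩
    · rintro rfl
      exact ((hm' n).2 rfl).2 h
    · by_contra hn
      exact h.2 ((hm' n).1 ⟨h.1, hn⟩)
  choose m hadj hK using hm
  have hinv : ∀ u, m (m u) = u := fun u => by
    by_contra h
    have := ((hK (m u) u).2 ⟨(hadj u).symm, Ne.symm h⟩).symm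
    exact ((hK u (m u)).1 this).2 rfl
  refine ⟨fun k => if h : k < 50 then (m ⟨k, h⟩).val else 0, ?_, ?_, ?_⟩
  · intro k hk
    simpa [hk] using graph_adj.1 (hadj ⟨k, hk⟩)
  · intro k hk
    simp [hk, hinv]
  · rintro S ⟨a, ha, hSa⟩ hS b hb
    have hc := p.toSubgraph_connected.preconnected ⟨⟨a, ha⟩, hmem _⟩ ⟨⟨b, hb⟩, hmem _⟩
    obtain ⟨w⟩ := hc
    have walk_closed : ∀ {c d : p.toSubgraph.verts} (_ : p.toSubgraph.coe.Walk c d),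
        S c.val.val → S d.val.val := by
      intro c d w
      induction w with
      | nil => exact id
      | @cons c d e h w ih =>
        intro hc
        refine ih (hS c.val.val c.val.isLt hc d.val.val ?_ ?_)
        · exact graph_adj.1 (SimpleGraph.Subgraph.Adj.adj_sub h)
        · have := ((hK c.val d.val).1 h).2
          simpa [Fin.ext_iff] using this
    exact walk_closed w hSa

/-! ### Traces of a Hamiltonian cycle on the fragment -/

/-- The restriction of `IsMate` to a copy of the fragment. By `not_closed`, the cycle, which also has
to visit vertices outside the fragment, does not close up inside the fragment. -/
structure IsFragMate (ν : ℕ → ℕ) : Prop where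
  mem : ∀ x < 22, ν x ∈ fragNbr x
  invol : ∀ x < 22, ν x < 22 → ν (ν x) = x
  not_closed : ∀ S : List ℕ, S ≠ [] → (∀ x ∈ S, x < 22 ∧ ∀ n ∈ fragNbr x, n ≠ ν x → n ∈ S) → False

/-- The three ways in which a Hamiltonian cycle can pass through the fragment: a single path
between the dangling edges at `0` and `11`; a single path between those at `1` and `12`; or
two paths, one of which, with vertex set `S`, joins those at `0` and `12`. -/
def FragState (ν : ℕ → ℕ) : Prop :=
  (ν 1 = 23 ∧ ν 12 = 25 ∧ ν 0 ≠ 22 ∧ ν 11 ≠ 24) ∨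
  (ν 0 = 22 ∧ ν 11 = 24 ∧ ν 1 ≠ 23 ∧ ν 12 ≠ 25) ∨
  ((ν 0 ≠ 22 ∧ ν 1 ≠ 23 ∧ ν 11 ≠ 24 ∧ ν 12 ≠ 25) ∧ ∃ S : List ℕ, 0 ∈ S ∧ 12 ∈ S ∧
    ∀ x ∈ S, x < 22 ∧ ∀ n ∈ fragNbr x, n ≠ ν x → n ∈ S ∨ n = 22 ∨ n = 25)

/-- Whether the missed edge `x — n` has been recorded in the bitmask `R`. -/
def has (R x n : ℕ) : Bool := R.testBit (32 * x + n)

/-- Whether `R` records that the missed edge at `x` is not the one to `n`. -/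
def avoids (R x n : ℕ) : Bool := (fragNbr x).any fun n' => !Nat.beq n' n && has R x n'

/-- Follow the cycle from `x`, coming from `prev`, within the fragment. -/
def trace (R : ℕ) : ℕ → ℕ → ℕ → List ℕ → List ℕ
  | 0, _, _, S => S
  | k + 1, prev, x, S =>
    match (fragNbr x).find? (fun n => n < 22 && !Nat.beq n prev && !has R x n) with
    | none => x :: S
    | some n => bif S.contains n then x :: S else trace R k x n (x :: S)

/-- Whether the cycle edges at vertices of `S` lead to `S` or to an element of `out`. -/
def isClosed (R : ℕ) (S out : List ℕ) : Bool :=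
  S.all fun x => Nat.blt x 22 &&
    (fragNbr x).all fun n => has R x n || S.contains n || out.contains n

/-- Check at a leaf of the search, where all missed edges of the fragment are recorded in `R`:
either the cycle is in one of the states of `FragState`, or it closes up inside the fragment. -/
def leaf (R : ℕ) : Bool :=
  (has R 1 23 && has R 12 25 && avoids R 0 22 && avoids R 11 24) ||
  (has R 0 22 && has R 11 24 && avoids R 1 23 && avoids R 12 25) ||
  ((avoids R 0 22 && avoids R 1 23 && avoids R 11 24 && avoids R 12 25) &&
    let S := trace R 22 22 0 []
    S.contains 0 && S.contains 12 && isClosed R S [22, 25]) ||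
  ((List.range 22).any fun x =>
    let S := trace R 22 22 x []
    !S.isEmpty && isClosed R S [])

/-- Exhaustive search over all ways to choose the missed edges at the vertices in the list,
given those recorded in `R`; the result tells whether all leaves pass the check `leaf`. -/
def search : List ℕ → ℕ → Bool
  | [], R => leaf R
  | x :: l, R =>
    bif (fragNbr x).any (has R x) then search l R
    else (fragNbr x).all fun n =>
      (Nat.blt n 22 && avoids R n x) || search l (R ||| 2 ^ (32 * x + n) ||| 2 ^ (32 * n + x))

theorem search_frag : search [5, 14, 16, 7, 13, 2, 8, 21, 9, 10, 15, 19, 17, 20, 6, 3, 18, 4, 0,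
    12, 1, 11] 0 = true := by
  decide +kernel

theorem fragNbr_lt : ∀ x < 22, ∀ n ∈ fragNbr x, n < 26 := by decide +kernel

/-- All edges recorded in `R` are missed edges. -/
def Sound (ν : ℕ → ℕ) (R : ℕ) : Prop := ∀ x < 22, ∀ n < 32, has R x n = true → ν x = n

theorem avoids_sound {ν : ℕ → ℕ} {R x n : ℕ} (hR : Sound ν R) (hx : x < 22)
    (h : avoids R x n = true) : ν x ≠ n := by
  obtain ⟨n', hn', h⟩ := List.any_eq_true.1 h
  rw [Bool.and_eq_true, Bool.not_eq_true'] at h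
  have := fragNbr_lt x hx n' hn'
  rw [hR x hx n' (by omega) h.2]
  exact Nat.ne_of_beq_eq_false h.1

theorem isClosed_sound {ν : ℕ → ℕ} {R : ℕ} (hR : Sound ν R) {S out : List ℕ}
    (h : isClosed R S out = true) :
    ∀ x ∈ S, x < 22 ∧ ∀ n ∈ fragNbr x, n ≠ ν x → n ∈ S ∨ n ∈ out := by
  intro x hx
  have h := List.all_eq_true.1 h x hx
  rw [Bool.and_eq_true] at h
  have hx22 : x < 22 := Nat.blt_eq.mp h.1
  refine ⟨hx22, fun n hn hne => ?_⟩
  have := List.all_eq_true.1 h.2 n hn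
  simp only [Bool.or_eq_true, List.contains_iff_mem] at this
  rcases this with (h | h) | h
  · have := fragNbr_lt x hx22 n hn
    exact absurd (hR x hx22 n (by omega) h).symm hne
  · exact Or.inl h
  · exact Or.inr h

theorem leaf_sound {ν : ℕ → ℕ} (hν : IsFragMate ν) {R : ℕ} (hR : Sound ν R)
    (h : leaf R = true) : FragState ν := by
  simp only [leaf, Bool.or_eq_true, Bool.and_eq_true] at h
  rcases h with ((h | h) | h) | h
  · exact Or.inl ⟨hR _ (by omega) _ (by omega) h.1.1.1, hR _ (by omega) _ (by omega) h.1.1.2,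
      avoids_sound hR (by omega) h.1.2, avoids_sound hR (by omega) h.2⟩
  · exact Or.inr (Or.inl ⟨hR _ (by omega) _ (by omega) h.1.1.1,
      hR _ (by omega) _ (by omega) h.1.1.2,
      avoids_sound hR (by omega) h.1.2, avoids_sound hR (by omega) h.2⟩)
  · obtain ⟨⟨⟨⟨h0, h1⟩, h11⟩, h12⟩, ⟨hS0, hS12⟩, hS⟩ := h
    refine Or.inr (Or.inr ⟨⟨avoids_sound hR (by omega) h0, avoids_sound hR (by omega) h1,
      avoids_sound hR (by omega) h11, avoids_sound hR (by omega) h12⟩, _,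
      List.contains_iff_mem.1 hS0, List.contains_iff_mem.1 hS12, ?_⟩)
    simpa using isClosed_sound hR hS
  · obtain ⟨x, -, h⟩ := List.any_eq_true.1 h
    rw [Bool.and_eq_true] at h
    refine (hν.not_closed (trace R 22 22 x []) ?_ ?_).elim
    · intro h0
      simp [h0] at h
    · simpa using isClosed_sound hR h.2

theorem search_sound {ν : ℕ → ℕ} (hν : IsFragMate ν) (l : List ℕ) (hl : ∀ x ∈ l, x < 22) {R : ℕ}
    (hR : Sound ν R) (h : search l R = true) : FragState ν := by
  induction l generalizing R with
  | nil => exact leaf_sound hν hR h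
  | cons x l ih =>
    have hx : x < 22 := hl x List.mem_cons_self
    have ih := fun {R} => ih (fun y hy => hl y (List.mem_cons_of_mem _ hy)) (R := R)
    rw [search] at h
    rcases hb : (fragNbr x).any (has R x) with _ | _
    · rw [hb, cond_false] at h
      -- follow the branch of the actual missed edge at `x`
      have h := List.all_eq_true.1 h (ν x) (hν.mem x hx)
      have hlt := fragNbr_lt x hx _ (hν.mem x hx)
      rw [Bool.or_eq_true, Bool.and_eq_true] at h
      rcases h with ⟨h22, h⟩ | h
      · exact absurd (hν.invol x hx (Nat.blt_eq.mp h22)) (avoids_sound hR (Nat.blt_eq.mp h22) h)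
      · refine ih ?_ h
        intro y hy n hn hyn
        simp only [has, Nat.testBit_or, Nat.testBit_two_pow, Bool.or_eq_true,
          decide_eq_true_eq] at hyn
        rcases hyn with (hyn | hyn) | hyn
        · exact hR y hy n hn hyn
        · obtain rfl : x = y := by omega
          omega
        · obtain rfl : ν x = y := by omega
          rw [hν.invol x hx hy]
          omega
    · rw [hb, cond_true] at h
      exact ih hR h

theorem IsFragMate.state {ν : ℕ → ℕ} (hν : IsFragMate ν) : FragState ν :=
  search_sound hν _ (by decide) (fun x _ n _ h => by simp [has] at h) search_frag

/-! ### Putting the pieces together -/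

/-- A mate function on the graph restricts to a copy of the fragment, and so its trace there is
one of the three states. -/
theorem IsMate.exists_frag {μ : ℕ → ℕ} (hμ : IsMate μ) {φ : ℕ → ℕ}
    (hlt : ∀ x < 26, φ x < 50) (hinj : ∀ x < 26, ∀ y < 26, φ x = φ y → x = y)
    (hne : ∀ x < 26, φ x ≠ 44) (hnbr : ∀ x < 22, nbr (φ x) = (fragNbr x).map φ) :
    ∃ ν, (∀ x < 22, ν x < 26 ∧ φ (ν x) = μ (φ x)) ∧ FragState ν := by
  have h : ∀ x, ∃ y, x < 22 → y ∈ fragNbr x ∧ φ y = μ (φ x) := by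
    intro x
    by_cases hx : x < 22
    · have := hμ.mem (φ x) (hlt x (by omega))
      rw [hnbr x hx] at this
      obtain ⟨y, hy⟩ := List.mem_map.1 this
      exact ⟨y, fun _ => hy⟩
    · exact ⟨0, fun h => absurd h hx⟩
  choose ν hν using h
  have hν26 : ∀ x < 22, ν x < 26 := fun x hx => fragNbr_lt x hx _ (hν x hx).1
  refine ⟨ν, fun x hx => ⟨hν26 x hx, (hν x hx).2⟩,
    IsFragMate.state ⟨fun x hx => (hν x hx).1, ?_, ?_⟩⟩
  · intro x hx h22
    refine hinj _ (hν26 _ h22) _ (by omega) ?_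
    rw [(hν _ h22).2, (hν x hx).2, hμ.invol _ (hlt x (by omega))]
  · intro S hS0 hS
    obtain ⟨x, hx⟩ := List.exists_mem_of_ne_nil S hS0
    obtain ⟨y, hy, h44⟩ := hμ.conn (fun v => ∃ y ∈ S, φ y = v)
      ⟨φ x, hlt x (by have := (hS x hx).1; omega), x, hx, rfl⟩ (by
        rintro _ - ⟨y, hy, rfl⟩ n hn hnμ
        obtain ⟨hy22, hcl⟩ := hS y hy
        rw [hnbr y hy22] at hn
        obtain ⟨z, hz, rfl⟩ := List.mem_map.1 hn
        refine ⟨z, hcl z hz ?_, rfl⟩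
        rintro rfl
        exact hnμ (hν y hy22).2) 44 (by omega)
    exact hne y (by have := (hS y hy).1; omega) h44

theorem emb₁_inj : ∀ x < 26, ∀ y < 26, emb₁ x = emb₁ y → x = y := by decide +kernel

theorem emb₂_inj : ∀ x < 26, ∀ y < 26, emb₂ x = emb₂ y → x = y := by decide +kernel

/-- The cycle cannot pass through one copy `ψ` of the fragment in a single path and through the
other copy `φ` in two paths. In the proof, `48`, `49`, `φ 25 = ψ 24` and `φ 24 = ψ 25` are the
leaves of the tree; the path in `φ` that covers `S` leads from `48` to `φ 25`, and it is completed
to a too short cycle either by the path through `ψ` or by the path `φ 25 — 44 — 45 — 48` in the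
tree. -/
theorem IsMate.not_single_double {μ : ℕ → ℕ} (hμ : IsMate μ) {φ ψ : ℕ → ℕ}
    (hφψ : (φ = emb₁ ∧ ψ = emb₂) ∨ (φ = emb₂ ∧ ψ = emb₁)) {ν ν' : ℕ → ℕ}
    (hν : ∀ x < 22, ∀ y < 26, ν x = y ↔ μ (φ x) = φ y)
    (hν' : ∀ x < 22, ∀ y < 26, ν' x = y ↔ μ (ψ x) = ψ y)
    (hd : ν 0 ≠ 22 ∧ ν 1 ≠ 23 ∧ ν 11 ≠ 24 ∧ ν 12 ≠ 25)
    (hs : (ν' 1 = 23 ∧ ν' 12 = 25 ∧ ν' 0 ≠ 22 ∧ ν' 11 ≠ 24) ∨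
      (ν' 0 = 22 ∧ ν' 11 = 24 ∧ ν' 1 ≠ 23 ∧ ν' 12 ≠ 25)) {S : List ℕ} (h0 : 0 ∈ S) (h12 : 12 ∈ S)
    (hS : ∀ x ∈ S, x < 22 ∧ ∀ n ∈ fragNbr x, n ≠ ν x → n ∈ S ∨ n = 22 ∨ n = 25) : False := by
  have hlt : ∀ x < 26, φ x < 50 ∧ ψ x < 50 ∧ φ x ≠ 44 ∧ ψ x ≠ 44 := by
    rcases hφψ with ⟨rfl, rfl⟩ | ⟨rfl, rfl⟩ <;> decide +kernel
  have hleaf : φ 22 = 48 ∧ ψ 22 = 48 ∧ φ 23 = 49 ∧ ψ 23 = 49 ∧ ψ 24 = φ 25 ∧ ψ 25 = φ 24 ∧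
      φ 24 ≠ φ 25 ∧ φ 24 ≠ 48 := by
    rcases hφψ with ⟨rfl, rfl⟩ | ⟨rfl, rfl⟩ <;> decide +kernel
  obtain ⟨l22, l22', l23, l23', l24', l25', hqp, hq48⟩ := hleaf
  have hφ : ∀ x < 22, φ x ≠ φ 24 ∧ nbr (φ x) = (fragNbr x).map φ ∧
      nbr (ψ x) = (fragNbr x).map ψ := by
    rcases hφψ with ⟨rfl, rfl⟩ | ⟨rfl, rfl⟩ <;> decide +kernel
  have n48 : ∀ n ∈ nbr 48, n = 45 ∨ n = φ 0 ∨ n = ψ 0 := by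
    rcases hφψ with ⟨rfl, rfl⟩ | ⟨rfl, rfl⟩ <;> decide +kernel
  have n49 : ∀ n ∈ nbr 49, n = 45 ∨ n = φ 1 ∨ n = ψ 1 := by
    rcases hφψ with ⟨rfl, rfl⟩ | ⟨rfl, rfl⟩ <;> decide +kernel
  have np : ∀ n ∈ nbr (φ 25), n = 44 ∨ n = φ 12 ∨ n = ψ 11 := by
    rcases hφψ with ⟨rfl, rfl⟩ | ⟨rfl, rfl⟩ <;> decide +kernel
  have nq : ∀ n ∈ nbr (φ 24), n = 44 ∨ n = φ 11 ∨ n = ψ 12 := by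
    rcases hφψ with ⟨rfl, rfl⟩ | ⟨rfl, rfl⟩ <;> decide +kernel
  have n44 : ∀ n ∈ nbr 44, n = 45 ∨ n = φ 24 ∨ n = φ 25 := by
    rcases hφψ with ⟨rfl, rfl⟩ | ⟨rfl, rfl⟩ <;> decide +kernel
  have n45 : ∀ n ∈ nbr 45, n = 44 ∨ n = 48 ∨ n = 49 := by decide +kernel
  have q45 : φ 24 ≠ 45 := by
    rcases hφψ with ⟨rfl, rfl⟩ | ⟨rfl, rfl⟩ <;> decide +kernel
  have hp50 := (hlt 25 (by omega)).1
  have hq50 := (hlt 24 (by omega)).1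
  have inv : ∀ v < 50, ∀ w, μ v = w → μ w = v := fun v hv w h => h ▸ hμ.invol v hv
  rw [Ne, Ne, Ne, Ne, hν 0 (by omega) 22 (by omega), hν 1 (by omega) 23 (by omega),
    hν 11 (by omega) 24 (by omega), hν 12 (by omega) 25 (by omega), l22, l23] at hd
  rw [Ne, Ne, Ne, Ne, hν' 0 (by omega) 22 (by omega), hν' 1 (by omega) 23 (by omega),
    hν' 11 (by omega) 24 (by omega), hν' 12 (by omega) 25 (by omega), l22', l23', l24', l25'] at hs
  obtain ⟨d0, d1, d11, d12⟩ := hd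
  have hSφ : ∀ x ∈ S, ∀ n ∈ nbr (φ x), n ≠ μ (φ x) → (∃ z ∈ S, φ z = n) ∨ n = 48 ∨ n = φ 25 := by
    intro x hx n hn hne
    obtain ⟨hx22, hcl⟩ := hS x hx
    rw [(hφ x hx22).2.1] at hn
    obtain ⟨z, hz, rfl⟩ := List.mem_map.1 hn
    rcases hcl z hz (fun h => hne ((hν x hx22 z (fragNbr_lt x hx22 z hz)).1 h.symm).symm) with
      h | rfl | rfl
    · exact Or.inl ⟨z, h, rfl⟩
    · exact Or.inr (Or.inl l22)
    · exact Or.inr (Or.inr rfl)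
  rcases hs with ⟨s1, s12, s0, s11⟩ | ⟨s0, s11, s1, s12⟩
  · have m48 : μ 48 = 45 := by
      rcases n48 _ (hμ.mem 48 (by omega)) with h | h | h
      · exact h
      · exact absurd (inv _ (by omega) _ h) d0
      · exact absurd (inv _ (by omega) _ h) s0
    have mp : μ (φ 25) = 44 := by
      rcases np _ (hμ.mem _ hp50) with h | h | h
      · exact h
      · exact absurd (inv _ hp50 _ h) d12
      · exact absurd (inv _ hp50 _ h) s11
    have := hμ.conn (fun v => (∃ x ∈ S, φ x = v) ∨ (∃ x < 22, ψ x = v) ∨ v = 48 ∨ v = φ 25)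
      ⟨48, by omega, by simp⟩ ?_ 44 (by omega)
    · rcases this with ⟨x, hx, h⟩ | ⟨x, hx, h⟩ | h | h
      · exact (hlt x (by have := (hS x hx).1; omega)).2.2.1 h
      · exact (hlt x (by omega)).2.2.2 h
      · omega
      · exact (hlt 25 (by omega)).2.2.1 h.symm
    · rintro v hv (⟨x, hx, rfl⟩ | ⟨x, hx, rfl⟩ | rfl | rfl) n hn hne
      · rcases hSφ x hx n hn hne with h | h
        · exact Or.inl h
        · exact Or.inr (Or.inr h)
      · rw [(hφ x hx).2.2] at hn
        obtain ⟨z, hz, rfl⟩ := List.mem_map.1 hn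
        by_cases hz22 : z < 22
        · exact Or.inr (Or.inl ⟨z, hz22, rfl⟩)
        have hz26 := fragNbr_lt x hx z hz
        obtain rfl | rfl | rfl | rfl : z = 22 ∨ z = 23 ∨ z = 24 ∨ z = 25 := by omega
        · exact Or.inr (Or.inr (Or.inl l22'))
        · obtain rfl : x = 1 :=
            (by decide +kernel : ∀ x < 22, 23 ∈ fragNbr x → x = 1) x hx hz
          exact absurd (l23'.trans s1.symm) hne
        · exact Or.inr (Or.inr (Or.inr l24'))
        · obtain rfl : x = 12 :=
            (by decide +kernel : ∀ x < 22, 25 ∈ fragNbr x → x = 12) x hx hz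
          exact absurd (l25'.trans s12.symm) hne
      · rcases n48 n hn with h | h | h
        · exact absurd (h.trans m48.symm) hne
        · exact Or.inl ⟨0, h0, h.symm⟩
        · exact Or.inr (Or.inl ⟨0, by omega, h.symm⟩)
      · rcases np n hn with h | h | h
        · exact absurd (h.trans mp.symm) hne
        · exact Or.inl ⟨12, h12, h.symm⟩
        · exact Or.inr (Or.inl ⟨11, by omega, h.symm⟩)
  · have m48 : μ 48 = ψ 0 := inv _ (hlt 0 (by omega)).2.1 _ s0
    have mp : μ (φ 25) = ψ 11 := inv _ (hlt 11 (by omega)).2.1 _ s11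
    have m45 : μ 45 = 49 := by
      refine inv 49 (by omega) _ ?_
      rcases n49 _ (hμ.mem 49 (by omega)) with h | h | h
      · exact h
      · exact absurd (inv _ (by omega) _ h) d1
      · exact absurd (inv _ (by omega) _ h) s1
    have m44 : μ 44 = φ 24 := by
      refine inv _ hq50 _ ?_
      rcases nq _ (hμ.mem _ hq50) with h | h | h
      · exact h
      · exact absurd (inv _ hq50 _ h) d11
      · exact absurd (inv _ hq50 _ h) s12
    have := hμ.conn (fun v => (∃ x ∈ S, φ x = v) ∨ v = 44 ∨ v = 45 ∨ v = 48 ∨ v = φ 25)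
      ⟨48, by omega, by simp⟩ ?_ (φ 24) hq50
    · rcases this with ⟨x, hx, h⟩ | h | h | h | h
      · exact (hφ x (hS x hx).1).1 h
      · exact (hlt 24 (by omega)).2.2.1 h
      · exact q45 h
      · exact hq48 h
      · exact hqp h
    · rintro v hv (⟨x, hx, rfl⟩ | rfl | rfl | rfl | rfl) n hn hne
      · rcases hSφ x hx n hn hne with h | h
        · exact Or.inl h
        · exact Or.inr (Or.inr (Or.inr h))
      · rcases n44 n hn with h | h | h
        · simp [h]
        · exact absurd (h.trans m44.symm) hne
        · simp [h]
      · rcases n45 n hn with h | h | h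
        · simp [h]
        · simp [h]
        · exact absurd (h.trans m45.symm) hne
      · rcases n48 n hn with h | h | h
        · simp [h]
        · exact Or.inl ⟨0, h0, h.symm⟩
        · exact absurd (h.trans m48.symm) hne
      · rcases np n hn with h | h | h
        · simp [h]
        · exact Or.inl ⟨12, h12, h.symm⟩
        · exact absurd (h.trans mp.symm) hne

theorem not_isMate (μ : ℕ → ℕ) : ¬ IsMate μ := by
  intro hμ
  obtain ⟨ν₁, h₁, s₁⟩ := hμ.exists_frag (φ := emb₁) (by decide +kernel) emb₁_inj
    (by decide +kernel) (by decide +kernel)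
  obtain ⟨ν₂, h₂, s₂⟩ := hμ.exists_frag (φ := emb₂) (by decide +kernel) emb₂_inj
    (by decide +kernel) (by decide +kernel)
  have k₁ : ∀ x < 22, ∀ y < 26, ν₁ x = y ↔ μ (emb₁ x) = emb₁ y := fun x hx y hy =>
    ⟨fun h => by rw [← (h₁ x hx).2, h],
      fun h => emb₁_inj _ (h₁ x hx).1 _ hy ((h₁ x hx).2.trans h)⟩
  have k₂ : ∀ x < 22, ∀ y < 26, ν₂ x = y ↔ μ (emb₂ x) = emb₂ y := fun x hx y hy =>
    ⟨fun h => by rw [← (h₂ x hx).2, h],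
      fun h => emb₂_inj _ (h₂ x hx).1 _ hy ((h₂ x hx).2.trans h)⟩
  -- two vertices cannot have the same mate
  have inj : ∀ v < 50, ∀ w < 50, v ≠ w → ∀ n, μ v = n → μ w = n → False :=
    fun v hv w hw hne n h h' => hne (by rw [← hμ.invol v hv, ← hμ.invol w hw, h, h'])
  have a0 : ν₁ 0 = 22 ↔ μ 0 = 48 := k₁ 0 (by omega) 22 (by omega)
  have a1 : ν₁ 1 = 23 ↔ μ 1 = 49 := k₁ 1 (by omega) 23 (by omega)
  have a11 : ν₁ 11 = 24 ↔ μ 11 = 46 := k₁ 11 (by omega) 24 (by omega)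
  have a12 : ν₁ 12 = 25 ↔ μ 12 = 47 := k₁ 12 (by omega) 25 (by omega)
  have b0 : ν₂ 0 = 22 ↔ μ 22 = 48 := k₂ 0 (by omega) 22 (by omega)
  have b1 : ν₂ 1 = 23 ↔ μ 23 = 49 := k₂ 1 (by omega) 23 (by omega)
  have b11 : ν₂ 11 = 24 ↔ μ 33 = 47 := k₂ 11 (by omega) 24 (by omega)
  have b12 : ν₂ 12 = 25 ↔ μ 34 = 46 := k₂ 12 (by omega) 25 (by omega)
  rcases s₁ with s₁ | s₁ | ⟨d₁, S₁, h0₁, h12₁, hS₁⟩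
  · rcases s₂ with s₂ | s₂ | ⟨d₂, S₂, h0₂, h12₂, hS₂⟩
    · exact inj 1 (by omega) 23 (by omega) (by omega) 49 (a1.1 s₁.1) (b1.1 s₂.1)
    · exact inj 12 (by omega) 33 (by omega) (by omega) 47 (a12.1 s₁.2.1) (b11.1 s₂.2.1)
    · exact hμ.not_single_double (Or.inr ⟨rfl, rfl⟩) k₂ k₁ d₂ (Or.inl s₁) h0₂ h12₂ hS₂
  · rcases s₂ with s₂ | s₂ | ⟨d₂, S₂, h0₂, h12₂, hS₂⟩
    · exact inj 11 (by omega) 34 (by omega) (by omega) 46 (a11.1 s₁.2.1) (b12.1 s₂.2.1)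
    · exact inj 0 (by omega) 22 (by omega) (by omega) 48 (a0.1 s₁.1) (b0.1 s₂.1)
    · exact hμ.not_single_double (Or.inr ⟨rfl, rfl⟩) k₂ k₁ d₂ (Or.inr s₁) h0₂ h12₂ hS₂
  · rcases s₂ with s₂ | s₂ | ⟨d₂, -⟩
    · exact hμ.not_single_double (Or.inl ⟨rfl, rfl⟩) k₁ k₂ d₁ (Or.inl s₂) h0₁ h12₁ hS₁
    · exact hμ.not_single_double (Or.inl ⟨rfl, rfl⟩) k₁ k₂ d₁ (Or.inr s₂) h0₁ h12₁ hS₁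
    · -- both missed edges at the leaves `46` and `47` would have to lead to `44`
      obtain ⟨-, -, d11, d12⟩ := d₁
      obtain ⟨-, -, e11, e12⟩ := d₂
      have m46 : μ 46 = 44 := by
        have := hμ.mem 46 (by omega)
        simp only [nbr, Nat.reduceLT, if_false, Nat.reduceSub, List.getD_cons_succ,
          List.getD_cons_zero, List.mem_cons, List.not_mem_nil, or_false] at this
        rcases this with h | h | h
        · exact h
        · exact absurd (a11.2 (h ▸ hμ.invol 46 (by omega))) d11
        · exact absurd (b12.2 (h ▸ hμ.invol 46 (by omega))) e12
      have m47 : μ 47 = 44 := by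
        have := hμ.mem 47 (by omega)
        simp only [nbr, Nat.reduceLT, if_false, Nat.reduceSub, List.getD_cons_succ,
          List.getD_cons_zero, List.mem_cons, List.not_mem_nil, or_false] at this
        rcases this with h | h | h
        · exact h
        · exact absurd (a12.2 (h ▸ hμ.invol 47 (by omega))) d12
        · exact absurd (b11.2 (h ▸ hμ.invol 47 (by omega))) e11
      exact inj 46 (by omega) 47 (by omega) (by omega) 44 m46 m47

end Georges

/-- There exists a simple graph on 50 vertices that is cubic, bipartite,
3-connected, and has no Hamiltonian cycle. -/
theorem stmt_8 :
    ∃ G : SimpleGraph (Fin 50),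
      (∀ v, (G.neighborSet v).ncard = 3) ∧
      G.Colorable 2 ∧
      IsKConnected 3 G ∧
      ¬ ∃ (v : Fin 50) (p : G.Walk v v), p.IsHamiltonianCycle :=
  ⟨Georges.graph, Georges.cubic, Georges.bipartite, Georges.three_connected,
    fun ⟨_, _, hp⟩ => (Georges.exists_isMate hp).elim Georges.not_isMate⟩
end

section
/- There exists a simple graph that is cubic, bipartite, and 3-connected and contains no Hamiltonian path. -/
/-!
The graph is built on three levels.

*Gadget.* Cutting two suitable edges `e`, `f` of the Möbius–Kantor graph (16 vertices) leaves a
bipartite piece with four dangling edges (ports) `16, 17, 18, 19`: the two halves of `e` are `16`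
and `17`, the two halves of `f` are `18` and `19`. If a Hamiltonian path of a larger graph has no
end in the gadget, then it uses `16` iff it uses `19`, uses `17` iff it uses `18`, and uses at
least one of these two pairs (`gadget_ports`). Thus the gadget acts as two lines `16–19` and
`17–18` crossing it, which are not both unused.

*Cluster.* A cluster consists of a vertex `x` and five gadgets, strung on three lines that start
at `x` and leave the cluster at three dangling edges. Gadgets `0`, `1`, `2` each lie twice on one
and the same line, so a Hamiltonian path without ends in the cluster uses all of that line;
gadgets `3` and `4` interlace neighbouring lines and serve only to make the graph 3-connected.
Such a path would use all three edges at `x`, which is impossible (`cluster_false`).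

*Graph.* Replace the three vertices of one colour class of `K₃,₃` by clusters. The three remaining
vertices are the hubs. A path has only two ends, so some cluster contains none of them, and there
is no Hamiltonian path.

The gadget lemma is a finite search over the subsets of the 26 edges of a gadget, pruned by two
kinds of constraints: an inner vertex of a path is on exactly two path edges, and the path must
cross the boundary of every nonempty vertex set without path ends (`Traversal`). 3-connectivity
is certified by fans: the three hubs are pairwise joined by one path through each cluster, and the
vertices of a cluster can be listed so that each has three paths, disjoint apart from their start,
to hubs or to vertices listed earlier.
-/

namespace NonTraceable

/-! ### The graph -/

/-- Neighbours of the vertices `0, …, 15` of a gadget: entries below `16` are gadget vertices,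
`16, …, 19` are the ports. Vertices `0, …, 7` form one colour class. -/
def gRow (k : ℕ) : List ℕ :=
  (
   [[14,15,16], [11,13,18], [8,12,15], [9,10,11], [9,13,15], [10,12,13], [11,12,14], [8,9,14],
    [2,7,19], [3,4,7], [3,5,17], [1,3,6], [2,5,6], [1,4,5], [0,6,7], [0,2,4]]
  : List (List ℕ)).getD k []

/-- Entry `4 * j + p` is the vertex of the cluster at the outer end of port `16 + p` of
gadget `j`. -/
def portEnds : List ℕ :=
   [56, 48, 81, 80, 58, 64, 82, 80, 74, 65, 83, 80, 10, 16, 72, 0, 26, 32, 42, 49]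

/-- Position in the cluster of the vertex or port end `r` of gadget `j`. -/
def ref (j r : ℕ) : ℕ := if r < 16 then 16 * j + r else portEnds.getD (4 * j + (r - 16)) 0

/-- Neighbours of the vertices `0, …, 80` of a cluster. Vertex `16 * j + k` is vertex `k` of
gadget `j`, vertex `80` is the centre `x`, and the values `81, 82, 83` stand for the hubs. -/
def lRow (t : ℕ) : List ℕ :=
  if t < 80 then (gRow (t % 16)).map (ref (t / 16)) else if t = 80 then [8, 24, 40] else []

/-- Position in the graph of the vertex or hub `t` of cluster `i`; the hubs, common to all
clusters, become `243, 244, 245`. -/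
def glob (i t : ℕ) : ℕ := if t < 81 then 81 * i + t else 162 + t

/-- Neighbours of the vertices `0, …, 245` of the graph. -/
def nb (v : ℕ) : List ℕ :=
  if v < 243 then (lRow (v % 81)).map (glob (v / 81))
  else [16 * (v - 243) + 1, 16 * (v - 243) + 82, 16 * (v - 243) + 163]

theorem nb_glob {i t : ℕ} (hi : i < 3) (ht : t < 81) :
    nb (glob i t) = (lRow t).map (glob i) := by
  have h1 : 81 * i + t < 243 := by omega
  have h2 : (81 * i + t) % 81 = t := by omega
  have h3 : (81 * i + t) / 81 = i := by omega
  have h4 : glob i t = 81 * i + t := if_pos ht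
  rw [h4, nb, if_pos h1, h2, h3]

/-- The proper 2-colouring of the graph. -/
def colour (v : ℕ) : Bool := decide (v < 243) && (v % 81 == 80 || decide (v % 81 % 16 < 8))

theorem nb_check : ∀ v < 246, (nb v).length = 3 ∧ (nb v).Nodup ∧
    ∀ w ∈ nb v, w < 246 ∧ v ∈ nb w ∧ colour v ≠ colour w := by
  decide +kernel

/-- The cubic bipartite graph with 246 vertices described by `nb`. -/
def graph : SimpleGraph (Fin 246) where
  Adj v w := w.val ∈ nb v.val
  symm := ⟨fun v w h => ((nb_check v v.2).2.2 w h).2.1⟩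
  loopless := ⟨fun v h => ((nb_check v v.2).2.2 v h).2.2 rfl⟩

theorem graph_adj (v w : Fin 246) : graph.Adj v w ↔ w.val ∈ nb v.val := Iff.rfl

theorem graph_cubic (v : Fin 246) : (graph.neighborSet v).ncard = 3 := by
  obtain ⟨hl, hn, hw⟩ := nb_check v v.2
  have h1 : Fin.val '' graph.neighborSet v = ((nb v).toFinset : Set ℕ) := by
    ext w
    simp only [Set.mem_image, SimpleGraph.mem_neighborSet, graph_adj, List.coe_toFinset,
      Set.mem_ofPred_eq]
    constructor
    · rintro ⟨w, hw, rfl⟩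
      exact hw
    · intro h
      exact ⟨⟨w, (hw w h).1⟩, h, rfl⟩
  rw [← Set.ncard_image_of_injective _ Fin.val_injective, h1, Set.ncard_coe_finset,
    List.toFinset_card_of_nodup hn, hl]

theorem graph_colorable : graph.Colorable 2 := by
  have c : graph.Coloring Bool :=
    SimpleGraph.Coloring.mk (fun v => colour v.val) fun {v w} h => ((nb_check v v.2).2.2 w h).2.2
  simpa using c.colorable

/-! ### Traces of a Hamiltonian path -/

/-- `U` behaves on `D` like the set of edges of a Hamiltonian path with no end in `D`, in a cubic
graph with neighbour lists `row`: every vertex of `D` is on exactly two edges of `U` (some edge is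
unused, and besides any given edge there is a used one), and some edge of `U` leaves each nonempty
subset of `D`. -/
structure Traversal (row : ℕ → List ℕ) (D : Set ℕ) (U : ℕ → ℕ → Prop) : Prop where
  symm : ∀ a b, U a b → U b a
  exists_unused : ∀ t ∈ D, ∃ r ∈ row t, ¬ U t r
  exists_used : ∀ t ∈ D, ∀ r ∈ row t, ∃ r' ∈ row t, r' ≠ r ∧ U t r'
  cut : ∀ S ⊆ D, S.Nonempty → ∃ t ∈ S, ∃ r ∈ row t, r ∉ S ∧ U t r

/-- Restriction of a traversal to a part of the graph, identified by `φ` with a standard copy. -/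
theorem Traversal.comap {row row' : ℕ → List ℕ} {D D' : Set ℕ} {U : ℕ → ℕ → Prop}
    (h : Traversal row D U) (φ : ℕ → ℕ) (hD : ∀ t ∈ D', φ t ∈ D)
    (hrow : ∀ t ∈ D', row (φ t) = (row' t).map φ) :
    Traversal row' D' (fun a b => U (φ a) (φ b)) where
  symm a b := h.symm _ _
  exists_unused t ht := by
    obtain ⟨r, hr, hU⟩ := h.exists_unused _ (hD t ht)
    rw [hrow t ht, List.mem_map] at hr
    obtain ⟨r, hr, rfl⟩ := hr
    exact ⟨r, hr, hU⟩
  exists_used t ht r hr := by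
    have hr' : φ r ∈ row (φ t) := by
      rw [hrow t ht]
      exact List.mem_map_of_mem hr
    obtain ⟨q, hq, hne, hU⟩ := h.exists_used _ (hD t ht) _ hr'
    rw [hrow t ht, List.mem_map] at hq
    obtain ⟨q, hq, rfl⟩ := hq
    exact ⟨q, hq, fun e => hne (e ▸ rfl), hU⟩
  cut S hS hne := by
    obtain ⟨_, ⟨t, ht, rfl⟩, r, hr, hrS, hU⟩ := h.cut (φ '' S)
      (by rintro _ ⟨t, ht, rfl⟩; exact hD t (hS ht)) (hne.image φ)
    rw [hrow t (hS ht), List.mem_map] at hr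
    obtain ⟨r, hr, rfl⟩ := hr
    exact ⟨t, ht, r, hr, fun h' => hrS ⟨r, h', rfl⟩, hU⟩

/-- The edges of a walk, as a relation on natural numbers. -/
def Used {u w : Fin 246} (p : graph.Walk u w) (a b : ℕ) : Prop :=
  ∃ (ha : a < 246) (hb : b < 246), s(⟨a, ha⟩, ⟨b, hb⟩) ∈ p.edges

theorem traversal_of_isHamiltonian {u w : Fin 246} (p : graph.Walk u w) (hp : p.IsHamiltonian) :
    Traversal nb {v | v < 246 ∧ v ≠ u.val ∧ v ≠ w.val} (Used p) := by
  -- an inner vertex has exactly two neighbours along the path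
  have two : ∀ v : Fin 246, v.val ≠ u.val → v.val ≠ w.val →
      (p.toSubgraph.neighborSet v).ncard = 2 := by
    intro v hu hw
    obtain ⟨i, rfl, hi⟩ := SimpleGraph.Walk.mem_support_iff_exists_getVert.1 (hp.mem_support v)
    refine hp.isPath.ncard_neighborSet_toSubgraph_internal_eq_two ?_ ?_
    · rintro rfl
      simp at hu
    · rcases hi.lt_or_eq with h | h
      · exact h
      · subst h
        simp at hw
  have mem : ∀ v r : Fin 246, r ∈ p.toSubgraph.neighborSet v ↔ Used p v r := by
    intro v r
    rw [SimpleGraph.Subgraph.mem_neighborSet, SimpleGraph.Walk.adj_toSubgraph_iff_mem_edges]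
    exact ⟨fun h => ⟨v.2, r.2, h⟩, fun ⟨_, _, h⟩ => h⟩
  refine ⟨?_, ?_, ?_, ?_⟩
  · rintro a b ⟨ha, hb, h⟩
    exact ⟨hb, ha, Sym2.eq_swap ▸ h⟩
  · rintro t ⟨ht, hu, hw⟩
    by_contra! hall
    have h2 := two ⟨t, ht⟩ hu hw
    have h3 := graph_cubic ⟨t, ht⟩
    have hsub : graph.neighborSet ⟨t, ht⟩ ⊆ p.toSubgraph.neighborSet ⟨t, ht⟩ :=
      fun r hr => (mem _ r).2 (hall r hr)
    have := Set.ncard_le_ncard hsub (Set.toFinite _)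
    omega
  · rintro t ⟨ht, hu, hw⟩ r hr
    have h2 := two ⟨t, ht⟩ hu hw
    obtain ⟨q, hq, hne⟩ := Set.exists_ne_of_one_lt_ncard (by rw [h2]; norm_num)
      (⟨r, ((nb_check t ht).2.2 r hr).1⟩ : Fin 246)
    exact ⟨q, p.toSubgraph.adj_sub hq, fun e => hne (Fin.ext e), (mem _ _).1 hq⟩
  · rintro S hS ⟨t, ht⟩
    have hu : u.val ∉ S := fun h => (hS h).2.1 rfl
    -- the path runs from `u ∉ S` to `t ∈ S`, so its reverse initial part leaves `S`
    have hsup := hp.mem_support (⟨t, (hS ht).1⟩ : Fin 246)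
    obtain ⟨d, hd, h1, h2⟩ := (p.takeUntil _ hsup).reverse.exists_boundary_dart
      (Fin.val ⁻¹' S) ht hu
    refine ⟨d.fst, h1, d.snd, d.adj, h2, d.fst.2, d.snd.2, ?_⟩
    have he : d.edge ∈ (p.takeUntil _ hsup).reverse.edges := List.mem_map_of_mem hd
    rw [SimpleGraph.Walk.edges_reverse, List.mem_reverse] at he
    exact p.edges_takeUntil_subset_edges hsup he

/-! ### The gadget -/

/-- Edges of the gadget, in the order in which the search decides them. -/
def edges : List (ℕ × ℕ) :=
   [(4,9), (4,13), (4,15), (3,9), (7,9), (3,11), (3,10), (1,11), (6,11), (1,13), (1,18), (5,13),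
    (5,10), (10,17), (5,12), (6,12), (6,14), (2,12), (7,14), (7,8), (0,14), (2,8), (2,15),
    (0,15), (0,16), (8,19)]

/-- Index of the edge from `k` to `r` in `edges`. -/
def eid (q : ℕ × ℕ) : ℕ := edges.idxOf (min q.1 q.2, max q.1 q.2)

/-- Sets of edges as bit masks. -/
def mask (l : List (ℕ × ℕ)) : ℕ := l.foldr (fun q m => 2 ^ eid q ||| m) 0

/-- The edges leaving a set of gadget vertices, each written from its inner end. -/
def boundary (S : List ℕ) : List (ℕ × ℕ) :=
  S.flatMap fun k => ((gRow k).filter (· ∉ S)).map (k, ·)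

/-- The vertex sets whose boundary must be crossed for the search to succeed. -/
def cuts : List (List ℕ) :=
   [[0,3,4,5,7,9,10,13,14,15], [0,1,4,6,11,13,14,15], [1,2,3,4,7,8,9,11,13,15], [0,4,7,9,14,15],
    [2,4,7,8,9,15], [1,3,5,10,11,13], [1,2,5,6,7,8,11,12,13,14], [1,5,6,11,12,13],
    [0,1,2,3,4,5,6,7,8,9,10,11,12,13,14,15], [2,6,7,8,12,14], [0,2,3,5,6,10,11,12,14,15],
    [3,5,6,10,11,12], [0,2,6,12,14,15], [3,4,5,9,10,13], [1,3,4,9,11,13]]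

/-- Constraints on the set of used edges, as pairs `(c, b)` forbidding that its intersection with
the mask `c` equals `b`: no two edges at a vertex are both unused, the three edges at a vertex are
not all used, and the boundary of each of `cuts` is not entirely unused. -/
def clauses : List (ℕ × ℕ) :=
  ((List.range 16).flatMap fun k =>
      (gRow k).map fun r => (mask (((gRow k).filter (· ≠ r)).map (k, ·)), 0)) ++
    ((List.range 16).map fun k => (mask ((gRow k).map (k, ·)), mask ((gRow k).map (k, ·)))) ++
    cuts.map fun S => (mask (boundary S), 0)

/-- The `clauses`, grouped by the last edge occurring in them. -/
def steps : List (List (ℕ × ℕ)) :=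
   [[], [(3,0)], [(6,0),(5,0),(7,7)], [(9,0)], [(17,0),(24,0),(25,25)], [(40,0)],
    [(96,0),(72,0),(104,104)], [(160,0)], [(288,0),(384,0),(416,416)], [(640,0),(514,0)],
    [(1536,0),(1152,0),(1664,1664)], [(2050,0),(2560,0),(2562,2562),(3412,0)],
    [(6144,0),(4160,0)], [(12288,0),(8256,0),(12352,12352)],
    [(18432,0),(20480,0),(22528,22528),(25866,0),(25140,0)], [(33024,0),(49152,0)],
    [(98304,0),(65792,0),(98560,98560)],
    [(163840,0),(147456,0),(180224,180224),(201762,0),(206984,0)], [(262160,0),(327680,0)],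
    [(786432,0),(524304,0),(786448,786448)], [(1310720,0),(1114112,0),(1376256,1376256)],
    [(2228224,0),(2621440,0)], [(4325376,0),(6291456,0),(4194308,0),(6422528,6422528)],
    [(9437184,0),(8388612,0),(12582912,0),(12582916,12582916)],
    [(25165824,0),(17825792,0),(26214400,26214400),(21586464,0),(21269537,0),(21561354,0),(19146892,0),(19153156,0)],
    [(34078720,0),(35651584,0),(36175872,36175872),(42339648,0),(42336266,0),(38802482,0),(50340864,0),(38813968,0)]]

theorem steps_check :
    ∀ k < 26, ∀ c ∈ steps.getD k [], c ∈ clauses ∧ c.1 < 2 ^ (k + 1) := by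
  decide +kernel

/-- The claim about the ports, for the set of used edges with bit mask `V`; bits `24, 13, 10, 25`
are the ports `16, 17, 18, 19`. -/
def portsOK (V : ℕ) : Bool :=
  V.testBit 24 == V.testBit 25 && V.testBit 13 == V.testBit 10 && (V.testBit 24 || V.testBit 13)

/-- Depth-first search: with the edges below `k` decided as in `V`, all ways of deciding the
remaining edges violate a clause or satisfy `portsOK`. -/
def search : List (List (ℕ × ℕ)) → ℕ → ℕ → Bool
  | [], _, V => portsOK V
  | cs :: l, k, V =>
    (cs.any (fun c => V &&& c.1 == c.2) || search l (k + 1) V) &&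
    (cs.any (fun c => (V + 2 ^ k) &&& c.1 == c.2) || search l (k + 1) (V + 2 ^ k))

theorem search_steps : search steps 0 0 = true := by
  decide +kernel

theorem search_sound (V : ℕ) : ∀ (l : List (List (ℕ × ℕ))) (k : ℕ),
    (∀ i < l.length, ∀ c ∈ l.getD i [], V &&& c.1 ≠ c.2 ∧ c.1 < 2 ^ (k + i + 1)) →
    search l k (V % 2 ^ k) = true → portsOK (V % 2 ^ (k + l.length)) = true
  | [], k, _, h => by simpa [search] using h
  | cs :: l, k, hc, h => by
    have hno : cs.any (fun c => V % 2 ^ (k + 1) &&& c.1 == c.2) = false := by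
      rw [List.any_eq_false]
      intro c hcs
      obtain ⟨h1, h2⟩ := hc 0 (by simp) c (by simpa using hcs)
      have h3 : V % 2 ^ (k + 1) &&& c.1 = V &&& c.1 := by
        apply Nat.eq_of_testBit_eq
        intro i
        rw [Nat.testBit_and, Nat.testBit_and, Nat.testBit_mod_two_pow]
        by_cases hi : i < k + 1
        · simp [hi]
        · have : c.1.testBit i = false :=
            Nat.testBit_lt_two_pow (h2.trans_le (Nat.pow_le_pow_right (by norm_num) (by omega)))
          simp [this]
      simpa [h3] using h1
    have hstep : search l (k + 1) (V % 2 ^ (k + 1)) = true := by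
      simp only [search, Bool.and_eq_true] at h
      have hmod : V % 2 ^ (k + 1) = V % 2 ^ k + 2 ^ k * (V / 2 ^ k % 2) := by
        rw [pow_succ, Nat.mod_mul]
      rcases Nat.mod_two_eq_zero_or_one (V / 2 ^ k) with h0 | h0
      · rw [h0, mul_zero, add_zero] at hmod
        rw [hmod] at hno ⊢
        simpa [hno] using h.1
      · rw [h0, mul_one] at hmod
        rw [hmod] at hno ⊢
        simpa [hno] using h.2
    have := search_sound V l (k + 1) (fun i hi c hcl => by
      have := hc (i + 1) (by simpa using hi) c (by simpa using hcl)
      rwa [show k + (i + 1) + 1 = k + 1 + i + 1 by ring] at this) hstep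
    rwa [show k + 1 + l.length = k + (cs :: l).length by simp; ring] at this

theorem testBit_mask (l : List (ℕ × ℕ)) (e : ℕ) :
    (mask l).testBit e = true ↔ ∃ q ∈ l, eid q = e := by
  induction l with
  | nil => simp [mask]
  | cons q l ih =>
    have : mask (q :: l) = 2 ^ eid q ||| mask l := rfl
    rw [this, Nat.testBit_or, Bool.or_eq_true, ih, Nat.testBit_two_pow]
    simp

theorem eid_check : ∀ k < 16, ∀ r ∈ gRow k, eid (k, r) < 26 ∧
    (edges.getD (eid (k, r)) (0, 0) = (k, r) ∨ edges.getD (eid (k, r)) (0, 0) = (r, k)) := by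
  decide +kernel

theorem cuts_check : ∀ S ∈ cuts, S ≠ [] ∧ ∀ k ∈ S, k < 16 := by
  decide +kernel

/-- A Hamiltonian path without ends in the gadget uses its ports as if they were the ends of two
lines `16–19` and `17–18`, at least one of which is used. -/
theorem gadget_ports {U : ℕ → ℕ → Prop} (h : Traversal gRow {k | k < 16} U) :
    (U 0 16 ↔ U 8 19) ∧ (U 10 17 ↔ U 1 18) ∧ (U 0 16 ∨ U 10 17) := by
  classical
  let V : ℕ := Nat.ofBits fun e : Fin 26 =>
    decide (U (edges.getD e (0, 0)).1 (edges.getD e (0, 0)).2)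
  have hVlt : V < 2 ^ 26 := Nat.ofBits_lt_two_pow _
  have hV : ∀ k < 16, ∀ r ∈ gRow k, (V.testBit (eid (k, r)) = true ↔ U k r) := by
    intro k hk r hr
    obtain ⟨h1, h2⟩ := eid_check k hk r hr
    simp only [V]
    rw [Nat.testBit_ofBits_lt _ _ h1, decide_eq_true_iff]
    rcases h2 with h2 | h2 <;> simp only [h2]
    exact ⟨h.symm _ _, h.symm _ _⟩
  -- a mask containing a used edge has nonempty intersection with the used edges
  have zero : ∀ (l : List (ℕ × ℕ)) (k r : ℕ), k < 16 → r ∈ gRow k → (k, r) ∈ l → U k r →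
      V &&& mask l ≠ 0 := by
    intro l k r hk hr hl hU h0
    have h1 : (V &&& mask l).testBit (eid (k, r)) = true := by
      rw [Nat.testBit_and, (hV k hk r hr).2 hU, (testBit_mask l _).2 ⟨_, hl, rfl⟩]
      rfl
    rw [h0, Nat.zero_testBit] at h1
    exact Bool.false_ne_true h1
  have one : ∀ (l : List (ℕ × ℕ)) (k r : ℕ), k < 16 → r ∈ gRow k → (k, r) ∈ l → ¬ U k r →
      V &&& mask l ≠ mask l := by
    intro l k r hk hr hl hU h0
    have h1 := (testBit_mask l _).2 ⟨_, hl, rfl⟩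
    rw [← h0, Nat.testBit_and, Bool.and_eq_true] at h1
    exact hU ((hV k hk r hr).1 h1.1)
  have hcl : ∀ c ∈ clauses, V &&& c.1 ≠ c.2 := by
    intro c hc
    simp only [clauses, List.mem_append, List.mem_flatMap, List.mem_map, List.mem_range] at hc
    rcases hc with (⟨k, hk, r, hr, rfl⟩ | ⟨k, hk, rfl⟩) | ⟨S, hS, rfl⟩
    · obtain ⟨q, hq, hne, hU⟩ := h.exists_used k hk r hr
      exact zero _ k q hk hq (List.mem_map_of_mem (List.mem_filter.2 ⟨hq, by simpa using hne⟩)) hU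
    · obtain ⟨q, hq, hU⟩ := h.exists_unused k hk
      exact one _ k q hk hq (List.mem_map_of_mem hq) hU
    · obtain ⟨hne, hlt⟩ := cuts_check S hS
      obtain ⟨k, hk, r, hr, hrS, hU⟩ := h.cut {k | k ∈ S} hlt (List.exists_mem_of_ne_nil S hne)
      refine zero _ k r (hlt k hk) hr ?_ hU
      exact List.mem_flatMap.2
        ⟨k, hk, List.mem_map_of_mem (List.mem_filter.2 ⟨hr, by simpa using hrS⟩)⟩
  have hlen : steps.length = 26 := by decide +kernel
  have key := search_sound V steps 0 (fun i hi c hc => by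
    obtain ⟨h1, h2⟩ := steps_check i (hlen ▸ hi) c hc
    exact ⟨hcl c h1, by simpa using h2⟩) (by simpa [Nat.mod_one] using search_steps)
  rw [hlen, zero_add, Nat.mod_eq_of_lt hVlt] at key
  have e1 : V.testBit 24 = true ↔ U 0 16 := hV 0 (by norm_num) 16 (by decide)
  have e2 : V.testBit 25 = true ↔ U 8 19 := hV 8 (by norm_num) 19 (by decide)
  have e3 : V.testBit 13 = true ↔ U 10 17 := hV 10 (by norm_num) 17 (by decide)
  have e4 : V.testBit 10 = true ↔ U 1 18 := hV 1 (by norm_num) 18 (by decide)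
  simp only [portsOK, Bool.and_eq_true, Bool.or_eq_true, beq_iff_eq] at key
  rw [← e1, ← e2, ← e3, ← e4, key.1.1, key.1.2]
  exact ⟨Iff.rfl, Iff.rfl, key.1.1 ▸ key.1.2 ▸ key.2⟩

/-! ### The cluster -/

theorem gadget_in_cluster : ∀ j < 5, ∀ k < 16,
    ref j k < 81 ∧ lRow (ref j k) = (gRow k).map (ref j) := by
  decide +kernel

/-- All three lines of a cluster would have to be used, hence all edges at its centre. -/
theorem cluster_false {U : ℕ → ℕ → Prop} (h : Traversal lRow {t | t < 81} U) : False := by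
  have key : ∀ j < 5, _ := fun j (hj : j < 5) => gadget_ports
    (h.comap (row' := gRow) (D' := {k | k < 16}) (ref j)
      (fun k hk => (gadget_in_cluster j hj k hk).1)
      fun k hk => (gadget_in_cluster j hj k hk).2)
  have k0 := key 0 (by norm_num)
  have k1 := key 1 (by norm_num)
  have k2 := key 2 (by norm_num)
  have k3 := key 3 (by norm_num)
  have k4 := key 4 (by norm_num)
  simp [ref, portEnds] at k0 k1 k2 k3 k4
  have sy : ∀ a b, U a b ↔ U b a := fun a b => ⟨h.symm a b, h.symm b a⟩
  obtain ⟨r, hr, hU⟩ := h.exists_unused 80 (by norm_num : 80 < 81)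
  have hr' : r = 8 ∨ r = 24 ∨ r = 40 := by simpa [lRow] using hr
  rw [sy] at hU
  rw [sy 48 10, sy 56 0, sy 58 16] at k3
  rw [sy 64 26, sy 72 49, sy 74 32, sy 65 42] at k4
  rcases hr' with rfl | rfl | rfl
  · exact k0.2.2.elim (fun a => hU (k0.1.1 a)) fun a => hU (k0.1.1 (k3.1.1 a))
  · exact k1.2.2.elim (fun a => hU (k1.1.1 a)) fun a => hU (k1.1.1 (k3.2.1.2 (k4.1.1 a)))
  · exact k2.2.2.elim (fun a => hU (k2.1.1 a)) fun a => hU (k2.1.1 (k4.2.1.2 a))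

theorem not_isHamiltonian {u w : Fin 246} (p : graph.Walk u w) : ¬ p.IsHamiltonian := by
  intro hp
  have h := traversal_of_isHamiltonian p hp
  obtain ⟨i, hi, hu, hw⟩ : ∃ i < 3, u.val / 81 ≠ i ∧ w.val / 81 ≠ i := by
    by_contra! hcon
    have h0 := hcon 0
    have h1 := hcon 1
    have h2 := hcon 2
    omega
  refine cluster_false (h.comap (row' := lRow) (D' := {t | t < 81}) (glob i) ?_ ?_)
  · intro t (ht : t < 81)
    simp only [glob, ht, if_true, Set.mem_ofPred_eq]
    omega
  · intro t (ht : t < 81)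
    exact nb_glob hi ht

/-! ### 3-connectivity -/

/-- The list, preceded by `v`, is a walk in the graph ending in the set with bit mask `C`. -/
def walkOK (C : ℕ) : ℕ → List ℕ → Bool
  | v, [] => C.testBit v
  | v, x :: l => (nb v).contains x && walkOK C x l

/-- `P` and `Q` have no common element except possibly `b`. -/
def meetOK (b : ℕ) (P Q : List ℕ) : Bool := P.all fun x => x == b || !Q.contains x

/-- `P`, `Q`, `R` are walks from `v` to `C` which have, apart from their start, no common vertex
except possibly `b`. -/
def fanOK (b C v : ℕ) (P Q R : List ℕ) : Bool :=
  decide (v < 246) && walkOK C v P && walkOK C v Q && walkOK C v R &&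
    meetOK b P Q && meetOK b P R && meetOK b Q R

/-- Each entry `(v, P, Q, R)` consists of a vertex of a cluster and three walks (without their
start `v`) to hubs or to vertices of earlier entries, in cluster coordinates. -/
def fans : List (ℕ × List ℕ × List ℕ × List ℕ) :=
   [(80,[8,2,12,5,13,1,81],[24,18,28,21,29,17,82],[40,34,44,37,45,33,83]),
    (19,[25,23,24,80],[26,64,78,70,75,65,42,35,43,33,83],[27,17,82]),
    (25,[19],[20,29,17,82],[23,24,80]), (17,[27,19],[29,20,25],[82]),
    (27,[17],[19],[22,30,23,25]), (23,[24,80],[25],[30,22,27]), (24,[18,28,22,27],[23],[80]),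
    (20,[25],[29,17],[31,18,24]), (29,[17],[20],[21,26,19]), (18,[24],[28,21,29],[31,20]),
    (21,[26,19],[28,18],[29]), (28,[18],[21],[22,27]), (22,[27],[28],[30,23]),
    (30,[16,31,18],[22],[23]), (31,[16,30],[18],[20]),
    (16,[30],[31],[58,51,57,55,56,0,14,7,8,80]), (26,[19],[21],[64,78,71,72,49,59,51,58,16]),
    (14,[0,56,50,60,53,58,16],[6,11,1,81],[7,8,80]), (6,[11,1,81],[12,2,8,80],[14]),
    (8,[2,12,6],[7,14],[80]), (2,[8],[12,6],[15,0,14]), (7,[8],[9,3,11,6],[14]),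
    (11,[1,81],[3,9,7],[6]), (1,[11],[13,4,9,7],[81]), (12,[2],[5,13,1],[6]),
    (3,[9,7],[10,5,12],[11]), (5,[10,3],[12],[13,1]), (9,[3],[4,13,1],[7]), (13,[1],[4,9],[5]),
    (4,[9],[13],[15,2]), (15,[0,14],[2],[4]), (0,[14],[15],[56,50,60,53,58,16]),
    (10,[3],[5],[48,62,55,56,0]), (50,[56,0],[60,53,58,16],[63,48,10]),
    (56,[50],[55,62,48,10],[0]), (48,[62,55,56],[63,50],[10]), (62,[48],[54,60,50],[55,56]),
    (55,[56],[57,51,58,16],[62]), (63,[48],[50],[52,57,55]), (57,[51,58,16],[52,63],[55]),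
    (51,[57],[58,16],[59,54,62]), (54,[59,51],[60,50],[62]), (58,[51],[53,60,50],[16]),
    (60,[50],[53,58],[54]), (52,[57],[61,53,58],[63]), (53,[58],[60],[61,52]),
    (59,[49,61,52],[51],[54]), (61,[49,59],[52],[53]), (49,[59],[61],[72,66,79,64,26]),
    (66,[72,49],[76,69,74,32,46,39,40,80],[79,64,26]), (72,[66],[71,78,64,26],[49]),
    (64,[78,71,72],[79,66],[26]), (78,[64],[70,76,66],[71,72]), (71,[72],[73,68,79,64],[78]),
    (79,[64],[66],[68,73,71]), (68,[73,71],[77,69,76,66],[79]), (73,[67,75,70,78],[68],[71]),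
    (70,[75,67,73],[76,66],[78]), (76,[66],[69,77,68],[70]), (67,[73],[74,69,76],[75,70]),
    (69,[74,67],[76],[77,68]), (75,[65,77,68],[67],[70]), (77,[65,75],[68],[69]),
    (65,[75],[77],[42,35,43,33,83]), (74,[67],[69],[32,46,39,40,80]),
    (34,[40,80],[44,37,42,65],[47,32,74]), (40,[34],[39,46,32,74],[80]),
    (32,[46,39,40],[47,34],[74]), (46,[32],[38,44,34],[39,40]), (38,[43,33,83],[44,34],[46]),
    (44,[34],[37,42,65],[38]), (33,[43,38],[45,37,44],[83]), (37,[42,65],[44],[45,33]),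
    (42,[35,43,33],[37],[65]), (43,[33],[35,42],[38]), (35,[41,39,40],[42],[43]),
    (39,[40],[41,35],[46]), (41,[35],[36,45,33],[39]), (45,[33],[36,41],[37]),
    (36,[41],[45],[47,32]), (47,[32],[34],[36])]

/-- The fans of all three clusters, in coordinates of the graph. -/
def globalFans : List (ℕ × List ℕ × List ℕ × List ℕ) :=
  (List.range 3).flatMap fun i => fans.map fun f =>
    (glob i f.1, f.2.1.map (glob i), f.2.2.1.map (glob i), f.2.2.2.map (glob i))

/-- The listed fans, each ending in `C` or in the starts of earlier fans, exhaust the graph. -/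
def fansOK : List (ℕ × List ℕ × List ℕ × List ℕ) → ℕ → Bool
  | [], C => C == 2 ^ 246 - 1
  | f :: l, C => fanOK f.1 C f.1 f.2.1 f.2.2.1 f.2.2.2 && fansOK l (C ||| 2 ^ f.1)

theorem fansOK_globalFans : fansOK globalFans (7 <<< 243) = true := by
  decide +kernel

/-- Each entry `(a, b, P)` consists of two hubs and a path `P` (without its start `a`) from `a`
to `b` through a cluster. -/
def hubPaths : List (ℕ × ℕ × List ℕ) :=
   [(81,82,[1,11,3,9,7,8,80,24,18,28,21,29,17,82]),
    (81,83,[1,11,3,9,7,8,80,40,34,44,37,45,33,83]),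
    (82,83,[17,27,19,25,23,24,80,40,34,44,37,45,33,83])]

theorem hubPaths_check : ∀ h ∈ hubPaths,
    fanOK (glob 0 h.2.1) (2 ^ glob 0 h.2.1) (glob 0 h.1)
      (h.2.2.map (glob 0)) (h.2.2.map (glob 1)) (h.2.2.map (glob 2)) = true := by
  decide +kernel

/-- `K` contains each vertex outside `s` that has a neighbour in `K \ s`. -/
def Closed (s K : Set ℕ) : Prop :=
  ∀ a < 246, a ∉ s → ∀ b ∈ nb a, b ∉ s → b ∈ K → a ∈ K

theorem mem_of_walkOK {s K : Set ℕ} (hK : Closed s K) {C : ℕ}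
    (hC : ∀ t, C.testBit t = true → t ∉ s → t ∈ K) :
    ∀ (P : List ℕ) (v : ℕ), v < 246 → v ∉ s → (∀ x ∈ P, x ∉ s) → walkOK C v P = true → v ∈ K
  | [], v, _, hvs, _, h => hC v h hvs
  | x :: l, v, hv, hvs, hP, h => by
    simp only [walkOK, Bool.and_eq_true, List.contains_iff_mem] at h
    have hxs := hP x (by simp)
    exact hK v hv hvs x h.1 hxs (mem_of_walkOK hK hC l x ((nb_check v hv).2.2 x h.1).1 hxs
      (fun y hy => hP y (by simp [hy])) h.2)

theorem not_mem_of_meetOK {s : Set ℕ} {b : ℕ} (hb : b ∉ s) {P Q : List ℕ}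
    (h : meetOK b P Q = true) {x y : ℕ} (hx : x ∈ P) (hxs : x ∈ s) (hy : y ∈ Q) : x ≠ y := by
  rintro rfl
  have := List.all_eq_true.1 h x hx
  simp only [Bool.or_eq_true, beq_iff_eq, Bool.not_eq_true', List.contains_eq_mem,
    decide_eq_false_iff_not] at this
  rcases this with rfl | h'
  · exact hb hxs
  · exact h' hy

/-- At most two vertices are removed, so one of the three walks of a fan survives. -/
theorem mem_of_fanOK {s K : Set ℕ} (hfin : s.Finite) (hs : s.ncard < 3) (hK : Closed s K)
    {b C v : ℕ} {P Q R : List ℕ} (hC : ∀ t, C.testBit t = true → t ∉ s → t ∈ K)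
    (hb : b ∉ s) (hv : v ∉ s) (h : fanOK b C v P Q R = true) : v ∈ K := by
  simp only [fanOK, Bool.and_eq_true, decide_eq_true_eq] at h
  obtain ⟨⟨⟨⟨⟨⟨hlt, hP⟩, hQ⟩, hR⟩, hPQ⟩, hPR⟩, hQR⟩ := h
  by_contra hvK
  have hit : ∀ L : List ℕ, walkOK C v L = true → ∃ x ∈ L, x ∈ s := by
    intro L hL
    by_contra! hno
    exact hvK (mem_of_walkOK hK hC L v hlt hv hno hL)
  obtain ⟨x, hx, hxs⟩ := hit P hP
  obtain ⟨y, hy, hys⟩ := hit Q hQ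
  obtain ⟨z, hz, hzs⟩ := hit R hR
  have := (Set.two_lt_ncard_iff hfin).2 ⟨x, y, z, hxs, hys, hzs,
    not_mem_of_meetOK hb hPQ hx hxs hy, not_mem_of_meetOK hb hPR hx hxs hz,
    not_mem_of_meetOK hb hQR hy hys hz⟩
  omega

theorem mem_of_fansOK {s K : Set ℕ} (hfin : s.Finite) (hs : s.ncard < 3) (hK : Closed s K) :
    ∀ (l : List (ℕ × List ℕ × List ℕ × List ℕ)) (C : ℕ), fansOK l C = true →
      (∀ t, C.testBit t = true → t ∉ s → t ∈ K) → ∀ v < 246, v ∉ s → v ∈ K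
  | [], C, h, hC, v, hv, hvs => by
    refine hC v ?_ hvs
    rw [beq_iff_eq.1 h, Nat.testBit_two_pow_sub_one, decide_eq_true hv]
  | f :: l, C, h, hC, v, hv, hvs => by
    simp only [fansOK, Bool.and_eq_true] at h
    refine mem_of_fansOK hfin hs hK l _ h.2 (fun t ht hts => ?_) v hv hvs
    rw [Nat.testBit_or, Bool.or_eq_true, Nat.testBit_two_pow, decide_eq_true_eq] at ht
    rcases ht with ht | rfl
    · exact hC t ht hts
    · exact mem_of_fanOK hfin hs hK hC hts hts h.1

/-- The graph without `s` is connected, in the form that a closed set containing a suitable hub `r`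
contains all remaining vertices. -/
theorem exists_root {s : Set ℕ} (hfin : s.Finite) (hs : s.ncard < 3) :
    ∃ r < 246, r ∉ s ∧ ∀ K, Closed s K → r ∈ K → ∀ v < 246, v ∉ s → v ∈ K := by
  have hub : ∀ h ∈ hubPaths, ∀ K, Closed s K → glob 0 h.2.1 ∉ s → glob 0 h.2.1 ∈ K →
      glob 0 h.1 ∉ s → glob 0 h.1 ∈ K := by
    intro h hh K hK hb hbK ha
    refine mem_of_fanOK hfin hs hK (fun t ht _ => ?_) hb ha (hubPaths_check h hh)
    rw [Nat.testBit_two_pow, decide_eq_true_eq] at ht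
    exact ht ▸ hbK
  have hub' : ∀ a b, (hubPaths.any fun h => glob 0 h.1 == a && glob 0 h.2.1 == b) = true →
      ∀ K, Closed s K → b ∉ s → b ∈ K → a ∉ s → a ∈ K := by
    intro a b hab
    obtain ⟨h, hh, he⟩ := List.any_eq_true.1 hab
    simp only [Bool.and_eq_true, beq_iff_eq] at he
    obtain ⟨rfl, rfl⟩ := he
    exact hub h hh
  have h01 := hub' 243 244 (by decide +kernel)
  have h02 := hub' 243 245 (by decide +kernel)
  have h12 := hub' 244 245 (by decide +kernel)
  have fin : ∀ K, Closed s K → (243 ∉ s → 243 ∈ K) → (244 ∉ s → 244 ∈ K) →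
      (245 ∉ s → 245 ∈ K) → ∀ v < 246, v ∉ s → v ∈ K := by
    intro K hK h0 h1 h2
    refine mem_of_fansOK hfin hs hK globalFans _ fansOK_globalFans fun t ht => ?_
    rw [Nat.testBit_shiftLeft, Bool.and_eq_true, decide_eq_true_eq] at ht
    obtain ⟨ht1, ht2⟩ := ht
    have ht3 : t - 243 < 3 := by
      by_contra! hge
      rw [Nat.testBit_lt_two_pow (lt_of_lt_of_le (by norm_num : 7 < 2 ^ 3)
        (Nat.pow_le_pow_right (by norm_num) hge))] at ht2
      exact Bool.false_ne_true ht2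
    obtain rfl | rfl | rfl : t = 243 ∨ t = 244 ∨ t = 245 := by omega
    exacts [h0, h1, h2]
  -- the last surviving hub serves as root
  by_cases h2 : 245 ∈ s
  · by_cases h1 : 244 ∈ s
    · have h0 : 243 ∉ s := fun h0 => by
        have := (Set.two_lt_ncard_iff hfin).2
          ⟨243, 244, 245, h0, h1, h2, by norm_num, by norm_num, by norm_num⟩
        omega
      exact ⟨243, by norm_num, h0, fun K hK hr => fin K hK (fun _ => hr) (absurd h1) (absurd h2)⟩
    · exact ⟨244, by norm_num, h1, fun K hK hr =>
        fin K hK (h01 K hK h1 hr) (fun _ => hr) (absurd h2)⟩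
  · exact ⟨245, by norm_num, h2, fun K hK hr =>
      fin K hK (h02 K hK h2 hr) (h12 K hK h2 hr) (fun _ => hr)⟩

theorem graph_connected : IsKConnected 3 graph := by
  refine ⟨by simp, fun s hs => ?_⟩
  have hmem : ∀ v : Fin 246, v.val ∈ Fin.val '' s ↔ v ∈ s :=
    fun v => Fin.val_injective.mem_set_image
  obtain ⟨r, hr, hrs, hroot⟩ := exists_root (s := Fin.val '' s) (Set.toFinite _)
    (by rwa [Set.ncard_image_of_injective _ Fin.val_injective])
  have hrs' : (⟨r, hr⟩ : Fin 246) ∈ sᶜ := fun h => hrs ⟨_, h, rfl⟩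
  let K : Set ℕ := {v | ∃ (hv : v < 246) (hvs : (⟨v, hv⟩ : Fin 246) ∈ sᶜ),
    (graph.induce sᶜ).Reachable ⟨⟨v, hv⟩, hvs⟩ ⟨⟨r, hr⟩, hrs'⟩}
  have hK : Closed (Fin.val '' s) K := by
    rintro a ha has b hb _ ⟨hb', hbs, hreach⟩
    have has' : (⟨a, ha⟩ : Fin 246) ∈ sᶜ := fun h => has ⟨_, h, rfl⟩
    have hadj : (graph.induce sᶜ).Adj ⟨⟨a, ha⟩, has'⟩ ⟨⟨b, hb'⟩, hbs⟩ := hb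
    exact ⟨ha, has', hadj.reachable.trans hreach⟩
  rw [SimpleGraph.connected_iff_exists_forall_reachable]
  refine ⟨⟨⟨r, hr⟩, hrs'⟩, fun ⟨v, hv⟩ => ?_⟩
  obtain ⟨_, _, h⟩ := hroot K hK ⟨hr, hrs', SimpleGraph.Reachable.refl _⟩ v.val v.2
    (fun h => hv ((hmem v).1 h))
  exact h.symm

end NonTraceable

open NonTraceable in
/-- There exists a simple graph that is cubic, bipartite and 3-connected and
contains no Hamiltonian path. -/
theorem stmt_9 :
    ∃ (n : ℕ) (G : SimpleGraph (Fin n)),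
      (∀ v, (G.neighborSet v).ncard = 3) ∧
      G.Colorable 2 ∧
      IsKConnected 3 G ∧
      ¬ ∃ (u v : Fin n) (p : G.Walk u v), p.IsHamiltonian := by
  exact ⟨246, graph, graph_cubic, graph_colorable, graph_connected,
    fun ⟨_, _, p, hp⟩ => not_isHamiltonian p hp⟩
end

section
/- The Barnette-Bosák-Lederberg graph has no Hamiltonian cycle. Here the Barnette-Bosák-Lederberg graph is the simple graph on vertex set {1,2,...,38} with the 57 edges {1,2},{1,4},{1,18},{2,3},{2,6},{3,8},{3,20},{4,5},{4,11},{5,6},{5,9},{6,7},{7,8},{7,10},{8,14},{9,10},{9,11},{10,13},{11,12},{12,13},{12,15},{13,14},{14,15},{15,16},{16,17},{16,19},{17,18},{17,22},{18,21},{19,20},{19,23},{20,38},{21,22},{21,36},{22,23},{23,24},{24,25},{24,27},{25,26},{25,28},{26,27},{26,30},{27,32},{28,29},{28,33},{29,30},{29,34},{30,31},{31,32},{31,35},{32,38},{33,34},{33,36},{34,35},{35,37},{36,37},{37,38}. -/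
/-!
The graph is cubic, so the edges that a Hamiltonian cycle does not use form a perfect matching. The
graph has only 422 perfect matchings, and the complement of each of them is a disconnected
2-factor. Disconnectedness is witnessed by sixteen sets of vertices, listed in `bblTable`: every
perfect matching contains all the edges that leave one of these sets, whereas a Hamiltonian cycle
has to cross the boundary of each proper nonempty set of vertices.

`bblSearch` goes through the perfect matchings, vertex by vertex, and abandons a partial matching
once it contains the whole boundary of one of the sets. `bblSearch_of_used` shows that the search
succeeds if a Hamiltonian cycle exists; its hypotheses are supplied by `exists_unused` (the cycle
misses exactly one of the three edges at each vertex) and `exists_crossing` (each boundary contains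
an edge of the cycle). `bblSearch_eq_false` is the evaluation of the search, a tree of about 1200
nodes, by the kernel.
-/

/-- The Barnette–Bosák–Lederberg graph, a cubic 3-connected planar graph on 38
vertices.  The vertex `i : Fin 38` represents the vertex `i + 1` of the
original labelling `{1, ..., 38}`. -/
def bblGraph : SimpleGraph (Fin 38) :=
  SimpleGraph.fromEdgeSet
    {s(0,1), s(0,3), s(0,17), s(1,2), s(1,5), s(2,7),
     s(2,19), s(3,4), s(3,10), s(4,5), s(4,8), s(5,6),
     s(6,7), s(6,9), s(7,13), s(8,9), s(8,10), s(9,12),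
     s(10,11), s(11,12), s(11,14), s(12,13), s(13,14), s(14,15),
     s(15,16), s(15,18), s(16,17), s(16,21), s(17,20), s(18,19),
     s(18,22), s(19,37), s(20,21), s(20,35), s(21,22), s(22,23),
     s(23,24), s(23,26), s(24,25), s(24,27), s(25,26), s(25,29),
     s(26,31), s(27,28), s(27,32), s(28,29), s(28,33), s(29,30),
     s(30,31), s(30,34), s(31,37), s(32,33), s(32,35), s(33,34),
     s(34,36), s(35,36), s(36,37)}

/-! ### The search -/

/-- The end points of the edges of the graph. An edge is referred to by its position in this list,
a number less than 57. -/
def bblEdges : List (Fin 38 × Fin 38) :=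
  [(0, 1), (0, 3), (0, 17), (1, 2), (1, 5), (2, 7), (2, 19), (3, 4), (3, 10), (4, 5), (4, 8),
   (5, 6), (6, 7), (6, 9), (7, 13), (8, 9), (8, 10), (9, 12), (10, 11), (11, 12), (11, 14),
   (12, 13), (13, 14), (14, 15), (15, 16), (15, 18), (16, 17), (16, 21), (17, 20), (18, 19),
   (18, 22), (19, 37), (20, 21), (20, 35), (21, 22), (22, 23), (23, 24), (23, 26), (24, 25),
   (24, 27), (25, 26), (25, 29), (26, 31), (27, 28), (27, 32), (28, 29), (28, 33), (29, 30),
   (30, 31), (30, 34), (31, 37), (32, 33), (32, 35), (33, 34), (34, 36), (35, 36), (36, 37)]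

/-- The ends of the edge at position `i`; positions beyond the list get the junk value `(0, 0)`. -/
def bblEnds (i : ℕ) : Fin 38 × Fin 38 := bblEdges.getD i (0, 0)

/-- The edge at position `i`. -/
def bblEdge (i : ℕ) : Sym2 (Fin 38) := s((bblEnds i).1, (bblEnds i).2)

/-- One row for each vertex: the three edges at the vertex, and a list of cuts to be examined before
the vertex is processed. A cut is given by a set of vertices together with its boundary, the list of
the edges with exactly one end in the set. Each cut is placed in the first row at which the search
has decided all its edges. -/
def bblTable : List (List ℕ × List (List (Fin 38) × List ℕ)) :=
  [([0, 1, 2], []), ([0, 3, 4], []), ([3, 5, 6], []), ([1, 7, 8], []), ([7, 9, 10], []),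
   ([4, 9, 11], []), ([11, 12, 13], []), ([5, 12, 14], []), ([10, 15, 16], []),
   ([13, 15, 17], []), ([8, 16, 18], []),
   ([18, 19, 20],
     [([3, 4, 8, 10], [1, 9, 15, 18])]),
   ([17, 19, 21], []), ([14, 21, 22], []), ([20, 22, 23], []),
   ([23, 24, 25],
     [([6, 7, 9, 11, 12, 13, 14], [5, 11, 15, 18, 23]),
      ([3, 4, 8, 9, 10, 11, 12, 13, 14], [1, 9, 13, 14, 23]),
      ([11, 12, 13, 14], [14, 17, 18, 23]),
      ([3, 4, 5, 6, 7, 8, 9, 10, 11, 12, 13, 14], [1, 4, 5, 23]),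
      ([0, 1, 2, 3, 4, 5, 6, 7, 8, 9, 10, 11, 12, 13, 14], [2, 6, 23])]),
   ([24, 26, 27], []), ([2, 26, 28], []),
   ([25, 29, 30],
     [([0, 1, 2, 3, 4, 5, 6, 7, 8, 9, 10, 11, 12, 13, 14, 15, 16, 17], [6, 25, 27, 28])]),
   ([6, 29, 31], []),
   ([28, 32, 33],
     [([0, 1, 2, 3, 4, 5, 6, 7, 8, 9, 10, 11, 12, 13, 14, 15, 18, 19], [2, 24, 30, 31])]),
   ([27, 32, 34], []),
   ([30, 34, 35],
     [([16, 17, 20, 21], [2, 24, 33, 34]),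
      ([18, 19, 22, 23, 24, 25, 26, 27, 28, 29, 30, 31, 32, 33, 34, 35, 36, 37],
       [6, 25, 33, 34])]),
   ([35, 36, 37],
     [([23, 24, 25, 26, 27, 28, 29, 30, 31, 32, 33, 34, 35, 36, 37], [31, 33, 35])]),
   ([36, 38, 39], []), ([38, 40, 41], []), ([37, 40, 42], []),
   ([39, 43, 44],
     [([23, 24, 25, 26], [35, 39, 41, 42])]),
   ([43, 45, 46], []), ([41, 45, 47], []), ([47, 48, 49], []), ([42, 48, 50], []),
   ([44, 51, 52],
     [([23, 24, 25, 26, 29, 30, 31], [35, 39, 45, 49, 50])]),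
   ([46, 51, 53], []),
   ([49, 53, 54],
     [([23, 24, 25, 26, 27, 28, 29, 32, 33], [35, 42, 47, 52, 53]),
      ([27, 28, 32, 33], [39, 45, 52, 53])]),
   ([33, 52, 55],
     [([23, 24, 25, 26, 27, 28, 29, 30, 31, 32, 33, 34], [35, 50, 52, 54])]),
   ([54, 55, 56], []), ([31, 50, 56], [])]

/-- Adds the members of a list to a finite set of natural numbers, which is encoded by the binary
digits of a number. -/
def setBits : List ℕ → ℕ → ℕ
  | [], m => m
  | x :: l, m => 1 <<< x ||| setBits l m

/-- Enumeration of the perfect matchings. The binary digits of `M` encode the edges put into the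
matching, those of `H` the edges excluded from it; the list holds the rows of the vertices that
remain to be processed. Of the edges at each vertex one goes into `M` and the others into `H`. A
branch is abandoned if `M` contains the boundary of a set, or if `M` and `H` would intersect. -/
def bblSearch : List (List ℕ × List (List (Fin 38) × List ℕ)) → ℕ → ℕ → Bool
  | [], _, _ => true
  | (r, cs) :: t, M, H =>
      (cs.all fun c => c.2.any fun i => !M.testBit i) &&
        r.any fun e => !H.testBit e && ((r.all fun x => x == e || !M.testBit x) &&
          bblSearch t (setBits [e] M) (setBits (r.filter (· != e)) H))

theorem bblSearch_eq_false : bblSearch bblTable 0 0 = false := by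
  decide +kernel

theorem testBit_setBits (l : List ℕ) (m i : ℕ) :
    (setBits l m).testBit i = true ↔ i ∈ l ∨ m.testBit i = true := by
  induction l with
  | nil => simp [setBits]
  | cons x l ih =>
    rw [setBits, Nat.testBit_or, Bool.or_eq_true, ih, Nat.one_shiftLeft, Nat.testBit_two_pow,
      decide_eq_true_iff, List.mem_cons, or_assoc, eq_comm]

/-- If a set of used edges misses exactly one edge at each vertex and meets each boundary, then the
search succeeds from any state `M`, `H` compatible with it. -/
theorem bblSearch_of_used (used : ℕ → Prop) (t : List (List ℕ × List (List (Fin 38) × List ℕ)))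
    (hstar : ∀ q ∈ t, ∃ e ∈ q.1, ¬ used e ∧ ∀ x ∈ q.1, x ≠ e → used x)
    (hcut : ∀ q ∈ t, ∀ c ∈ q.2, ∃ i ∈ c.2, used i) (M H : ℕ)
    (hM : ∀ i, M.testBit i = true → ¬ used i) (hH : ∀ i, H.testBit i = true → used i) :
    bblSearch t M H = true := by
  induction t generalizing M H with
  | nil => rfl
  | cons q t ih =>
    obtain ⟨r, cs⟩ := q
    obtain ⟨e, her, heu, hother⟩ := hstar _ List.mem_cons_self
    simp only [bblSearch, List.any_eq_true, List.all_eq_true, Bool.and_eq_true, Bool.or_eq_true,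
      Bool.not_eq_true', beq_iff_eq, Bool.eq_false_iff, Ne]
    refine ⟨fun c hc => ?_, e, her, fun h => heu (hH e h), fun x hx => ?_,
      ih (fun q hq => hstar q (List.mem_cons_of_mem _ hq))
        (fun q hq => hcut q (List.mem_cons_of_mem _ hq)) _ _ (fun i hi => ?_) (fun i hi => ?_)⟩
    · obtain ⟨i, hi, hiu⟩ := hcut _ List.mem_cons_self c hc
      exact ⟨i, hi, fun h => hM i h hiu⟩
    · exact or_iff_not_imp_left.2 fun hxe h => hM x h (hother x hx hxe)
    · rcases (testBit_setBits _ _ _).1 hi with h | h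
      · rwa [List.mem_singleton.1 h]
      · exact hM i h
    · rcases (testBit_setBits _ _ _).1 hi with h | h
      · rw [List.mem_filter] at h
        exact hother i h.1 (by simpa using h.2)
      · exact hH i h

/-! ### The table describes the graph -/

theorem exists_bblEdge_eq {e : Sym2 (Fin 38)} (he : e ∈ bblGraph.edgeSet) :
    ∃ i < 57, bblEdge i = e := by
  have hmem : e ∈ bblEdges.map fun q => s(q.1, q.2) := by
    rw [bblGraph, SimpleGraph.edgeSet_fromEdgeSet] at he
    simpa only [bblEdges, List.map_cons, List.map_nil, List.mem_cons, List.not_mem_nil, or_false,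
      Set.mem_insert_iff, Set.mem_singleton_iff] using he.1
  obtain ⟨q, hq, rfl⟩ := List.mem_map.1 hmem
  obtain ⟨i, hi, rfl⟩ := List.mem_iff_getElem.1 hq
  exact ⟨i, hi, by rw [bblEdge, bblEnds, List.getD_eq_getElem _ _ hi]⟩

theorem bblTable_stars : bblTable.map Prod.fst = (List.finRange 38).map fun v =>
    (List.range 57).filter fun i => (bblEnds i).1 = v ∨ (bblEnds i).2 = v := by
  decide +kernel

theorem bblTable_nodup : ∀ q ∈ bblTable, q.1.length = 3 ∧ (q.1.map bblEdge).Nodup := by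
  decide +kernel

theorem bblTable_cuts : ∀ q ∈ bblTable, ∀ c ∈ q.2, (∃ u, u ∈ c.1) ∧ (∃ w, w ∉ c.1) ∧
    c.2 = (List.range 57).filter fun i =>
      decide ((bblEnds i).1 ∈ c.1) != decide ((bblEnds i).2 ∈ c.1) := by
  decide +kernel

/-! ### Hamiltonian cycles -/

theorem mem_or_of_ncard_eq_two {α : Type*} {T : Set α} {x y z : α} (hxy : x ≠ y) (hxz : x ≠ z)
    (hyz : y ≠ z) (hT : T.ncard = 2) (hsub : ∀ t ∈ T, t = x ∨ t = y ∨ t = z) :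
    (x ∉ T ∧ y ∈ T ∧ z ∈ T) ∨ (x ∈ T ∧ y ∉ T ∧ z ∈ T) ∨ (x ∈ T ∧ y ∈ T ∧ z ∉ T) := by
  obtain ⟨s, t, hst, rfl⟩ := Set.ncard_eq_two.1 hT
  have hs := hsub s (by simp)
  have ht := hsub t (by simp)
  simp only [Set.mem_insert_iff, Set.mem_singleton_iff]
  grind

theorem exists_unused {v : Fin 38} {p : bblGraph.Walk v v} (hp : p.IsHamiltonianCycle) :
    ∀ q ∈ bblTable,
      ∃ e ∈ q.1, ¬ bblEdge e ∈ p.edges ∧ ∀ x ∈ q.1, x ≠ e → bblEdge x ∈ p.edges := by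
  intro q hq
  obtain ⟨hlen, hnodup⟩ := bblTable_nodup q hq
  have hrow := List.mem_map_of_mem (f := Prod.fst) hq
  rw [bblTable_stars] at hrow
  obtain ⟨u, -, hu⟩ := List.mem_map.1 hrow
  have hself : ∀ i ∈ q.1, u ∈ bblEdge i := by
    intro i hi
    rw [← hu, List.mem_filter, decide_eq_true_iff] at hi
    rw [bblEdge, Sym2.mem_iff]
    exact hi.2.imp Eq.symm Eq.symm
  have hall : ∀ e ∈ p.edges, u ∈ e → ∃ i ∈ q.1, e = bblEdge i := by
    intro e he hue
    obtain ⟨i, hi, rfl⟩ := exists_bblEdge_eq (p.edges_subset_edgeSet he)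
    rw [bblEdge, Sym2.mem_iff] at hue
    refine ⟨i, ?_, rfl⟩
    rw [← hu, List.mem_filter, decide_eq_true_iff]
    exact ⟨List.mem_range.2 hi, hue.imp Eq.symm Eq.symm⟩
  have hN := hp.isCycle.ncard_neighborSet_toSubgraph_eq_two (hp.mem_support u)
  -- The used edges at `u` correspond to the two neighbours of `u` on the cycle.
  have hT : {e | e ∈ p.edges ∧ u ∈ e}.ncard = 2 := by
    rw [← hN, ← Set.ncard_image_of_injective (p.toSubgraph.neighborSet u)
      (f := fun w => s(u, w)) (fun w w' h => Sym2.congr_right.1 h)]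
    congr 1
    ext e
    simp only [Set.mem_ofPred_eq, Set.mem_image, SimpleGraph.Subgraph.mem_neighborSet,
      ← SimpleGraph.Subgraph.mem_edgeSet, SimpleGraph.Walk.mem_edges_toSubgraph]
    constructor
    · rintro ⟨he, w, rfl⟩
      exact ⟨w, he, rfl⟩
    · rintro ⟨w, hw, rfl⟩
      exact ⟨hw, Sym2.mem_mk_left _ _⟩
  obtain ⟨a, b, c, habc⟩ := List.length_eq_three.1 hlen
  rw [habc] at hself hall hnodup ⊢
  obtain ⟨⟨hab, hac⟩, hbc⟩ : (bblEdge a ≠ bblEdge b ∧ bblEdge a ≠ bblEdge c) ∧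
      bblEdge b ≠ bblEdge c := by simpa using hnodup
  have hmem := mem_or_of_ncard_eq_two hab hac hbc hT fun e he => by simpa using hall e he.1 he.2
  simp only [Set.mem_ofPred_eq, hself a (by simp), hself b (by simp), hself c (by simp),
    and_true] at hmem
  grind

theorem exists_crossing {v : Fin 38} {p : bblGraph.Walk v v} (hp : p.IsHamiltonianCycle) :
    ∀ q ∈ bblTable, ∀ c ∈ q.2, ∃ i ∈ c.2, bblEdge i ∈ p.edges := by
  intro q hq c hc
  obtain ⟨⟨u, hu⟩, ⟨w, hw⟩, hcross⟩ := bblTable_cuts q hq c hc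
  suffices h : ∃ x y, s(x, y) ∈ p.edges ∧ x ∈ c.1 ∧ y ∉ c.1 by
    obtain ⟨x, y, he, hx, hy⟩ := h
    obtain ⟨i, hi, hie⟩ := exists_bblEdge_eq (p.edges_subset_edgeSet he)
    refine ⟨i, ?_, hie ▸ he⟩
    rw [hcross, List.mem_filter]
    refine ⟨List.mem_range.2 hi, ?_⟩
    rw [bblEdge, Sym2.eq_iff] at hie
    rcases hie with ⟨h1, h2⟩ | ⟨h1, h2⟩ <;> simp [h1, h2, hx, hy]
  have hdart : ∀ d ∈ p.darts, s(d.fst, d.snd) ∈ p.edges := fun d hd =>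
    List.mem_map_of_mem (f := SimpleGraph.Dart.edge) hd
  -- Follow the cycle from its base point to a vertex on the other side of the cut.
  by_cases hv : v ∈ c.1
  · obtain ⟨d, hd, h1, h2⟩ := (p.takeUntil w (hp.mem_support w)).exists_boundary_dart
      {x | x ∈ c.1} hv hw
    exact ⟨_, _, hdart d (p.darts_takeUntil_subset_darts _ hd), h1, h2⟩
  · obtain ⟨d, hd, h1, h2⟩ := (p.takeUntil u (hp.mem_support u)).exists_boundary_dart
      {x | x ∉ c.1} hv (not_not.2 hu)
    exact ⟨_, _, Sym2.eq_swap ▸ hdart d (p.darts_takeUntil_subset_darts _ hd), not_not.1 h2, h1⟩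

/-- The Barnette–Bosák–Lederberg graph has no Hamiltonian cycle. -/
theorem stmt_12 :
    ¬ ∃ (v : Fin 38) (p : bblGraph.Walk v v), p.IsHamiltonianCycle := by
  rintro ⟨v, p, hp⟩
  have h := bblSearch_of_used (fun i => bblEdge i ∈ p.edges) bblTable (exists_unused hp)
    (exists_crossing hp) 0 0 (by simp) (by simp)
  rw [bblSearch_eq_false] at h
  exact Bool.false_ne_true h
end
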